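/- arXiv:2407.04817 — 5 statements merged into one kernel-verified Lean document; each statement's English description precedes it below -/
import Mathlib

section
/- Let (Q,I) be a gentle bound quiver with Cartan matrix C, and let δ := 1 if (Q,I) satisfies the multi-clock condition and δ := 0 otherwise. Then the rank over ℚ of the symmetric matrix C + C^tr equals 2|Q0| − |Q1| − δ; equivalently, its corank equals |Q1| − |Q0| + δ. -/
set_option autoImplicit false

attribute [local instance] Classical.propDecidable

/-- A bound-quiver datum: a quiver (source and target maps on a set of arrows) together
with a set of length-two relations; `rel a b` means that the length-two path `ab`
(composable, i.e. `src a = tgt b`; paths are written from right to left) lies in the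
generating set of relations of the ideal `I`. -/
structure BQuiv (V A : Type) where
  src : A → V
  tgt : A → V
  rel : A → A → Prop

namespace BQuiv

variable {V A : Type}

/-- `l` is (the list of arrows of) a path of the quiver, written from right to left:
`l = [a₁, a₂, …, a_ℓ]` represents `a₁a₂⋯a_ℓ` and we ask `src aₜ = tgt aₜ₊₁`. -/
def PathChain (Q : BQuiv V A) (l : List A) : Prop :=
  l.Chain' (fun a b => Q.src a = Q.tgt b)

/-- The degree of a vertex: the number of outgoing plus the number of incoming arrows. -/
noncomputable def deg (Q : BQuiv V A) (v : V) : ℕ :=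
  Nat.card {a : A // Q.src a = v} + Nat.card {a : A // Q.tgt a = v}

/-- `(Q, I)` is a gentle bound quiver. -/
structure IsGentle (Q : BQuiv V A) : Prop where
  /-- relations are composable length-two paths -/
  rel_comp : ∀ a b, Q.rel a b → Q.src a = Q.tgt b
  /-- at most two outgoing arrows at every vertex -/
  out_le : ∀ v, Nat.card {a : A // Q.src a = v} ≤ 2
  /-- at most two incoming arrows at every vertex -/
  in_le : ∀ v, Nat.card {a : A // Q.tgt a = v} ≤ 2
  /-- for every arrow `b` there is at most one arrow `a` with `ab ∉ I` -/
  unique_nonrel_post : ∀ b a a', Q.src a = Q.tgt b → Q.src a' = Q.tgt b →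
    ¬ Q.rel a b → ¬ Q.rel a' b → a = a'
  /-- for every arrow `b` there is at most one arrow `c` with `bc ∉ I` -/
  unique_nonrel_pre : ∀ b c c', Q.src b = Q.tgt c → Q.src b = Q.tgt c' →
    ¬ Q.rel b c → ¬ Q.rel b c' → c = c'
  /-- for every arrow `b` there is at most one arrow `a` with `ab ∈ I` -/
  unique_rel_post : ∀ b a a', Q.rel a b → Q.rel a' b → a = a'
  /-- for every arrow `b` there is at most one arrow `c` with `bc ∈ I` -/
  unique_rel_pre : ∀ b c c', Q.rel b c → Q.rel b c' → c = c'
  /-- admissibility: there is `m ≥ 2` such that every path of length `m` contains a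
  length-two subpath lying in the relation set -/
  admissible : ∃ m, 2 ≤ m ∧ ∀ l : List A, l.length = m → Q.PathChain l →
    ¬ l.Chain' (fun a b => ¬ Q.rel a b)
  /-- the quiver is connected -/
  connected : ∀ u v : V, Relation.ReflTransGen
    (fun x y => ∃ a, (Q.src a = x ∧ Q.tgt a = y) ∨ (Q.src a = y ∧ Q.tgt a = x)) u v
  /-- the quiver has at least one arrow -/
  has_arrow : Nonempty A

/-- A path of the quiver `Q`, with a base (source) vertex so that trivial paths make
sense.  The arrows are written from right to left. -/
structure Path (Q : BQuiv V A) where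
  base : V
  arrows : List A
  chain : arrows.Chain' (fun a b => Q.src a = Q.tgt b)
  base_eq : ∀ a, arrows.getLast? = some a → Q.src a = base

variable {Q : BQuiv V A}

/-- The source vertex of a path. -/
def Path.srcV (p : Path Q) : V := p.base

/-- The target vertex of a path. -/
def Path.tgtV (p : Path Q) : V := p.arrows.head?.elim p.base Q.tgt

/-- The vertex of a path sitting between its first `n` arrows and the rest:
the center of the corresponding split of the path. -/
def Path.vertexAt (p : Path Q) (n : ℕ) : V :=
  (p.arrows.drop n).head?.elim p.base Q.tgt

/-- A path is permitted if none of its length-two subpaths is a relation. -/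
def Path.Permitted (p : Path Q) : Prop :=
  p.arrows.Chain' (fun a b => ¬ Q.rel a b)

/-- A path is forbidden if each of its length-two subpaths is a relation. -/
def Path.Forbidden (p : Path Q) : Prop :=
  p.arrows.Chain' (fun a b => Q.rel a b)

/-- Permitted threads: maximal non-trivial permitted paths, together with the trivial
paths `e_i` at vertices `i` with `deg i = 1`, or `deg i = 2` with the two arrows
`α, β` at `i` satisfying `src α = tgt β = i` and `αβ ∉ I`. -/
def IsPermThread (Q : BQuiv V A) (p : Path Q) : Prop :=
  (p.arrows ≠ [] ∧ p.Permitted ∧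
    (∀ a b, p.arrows.head? = some b → Q.src a = Q.tgt b → Q.rel a b) ∧
    (∀ a c, p.arrows.getLast? = some a → Q.src a = Q.tgt c → Q.rel a c)) ∨
  (p.arrows = [] ∧ (Q.deg p.base = 1 ∨ (Q.deg p.base = 2 ∧
    ∃ α β, Q.src α = p.base ∧ Q.tgt β = p.base ∧ ¬ Q.rel α β)))

/-- Forbidden threads: maximal non-trivial forbidden paths, together with the trivial
paths `e_i` at vertices `i` with `deg i = 1`, or `deg i = 2` with the two arrows
`α, β` at `i` satisfying `src α = tgt β = i` and `αβ ∈ I`. -/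
def IsForbThread (Q : BQuiv V A) (p : Path Q) : Prop :=
  (p.arrows ≠ [] ∧ p.Forbidden ∧
    (∀ a b, p.arrows.head? = some b → Q.src a = Q.tgt b → ¬ Q.rel a b) ∧
    (∀ a c, p.arrows.getLast? = some a → Q.src a = Q.tgt c → ¬ Q.rel a c)) ∨
  (p.arrows = [] ∧ (Q.deg p.base = 1 ∨ (Q.deg p.base = 2 ∧
    ∃ α β, Q.src α = p.base ∧ Q.tgt β = p.base ∧ Q.rel α β)))

end BQuiv

namespace BQuiv

variable {V A : Type}

/-- The type of permitted threads of `(Q, I)`: the vertices of the associated marked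
ribbon graph `△(Q, I)`. -/
def PThread (Q : BQuiv V A) : Type := {p : Path Q // IsPermThread Q p}

/-- The type of split permitted threads of `(Q, I)`: a permitted thread together with a
cut position.  These are the half-edges of the associated marked ribbon graph
`△(Q, I)`. -/
def PSplit (Q : BQuiv V A) : Type := {x : PThread Q × ℕ // x.2 ≤ x.1.1.arrows.length}

/-- The thread (vertex of `△(Q, I)`) over which a split permitted thread lies. -/
def PSplit.thread {Q : BQuiv V A} (x : PSplit Q) : PThread Q := x.1.1

/-- The cut position of a split permitted thread. -/
def PSplit.idx {Q : BQuiv V A} (x : PSplit Q) : ℕ := x.1.2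

/-- The center of a split permitted thread `(η″, η′)`: the vertex `s(η″) = t(η′)`.
The centers realize the bijection between the edges of `△(Q, I)` and the vertices
of `Q`. -/
def PSplit.center {Q : BQuiv V A} (x : PSplit Q) : V :=
  x.1.1.1.vertexAt x.1.2

end BQuiv

namespace BQuiv

variable {V A : Type}

/-- The Cartan matrix of the gentle algebra `kQ/I`: its `(i, j)` entry is the number of
permitted paths with source `j` and target `i` (which equals `dim_k Hom(P_i, P_j)`). -/
noncomputable def cartan (Q : BQuiv V A) : Matrix V V ℤ :=
  fun i j => (Nat.card {p : Path Q // p.Permitted ∧ p.base = j ∧ p.tgtV = i} : ℤ)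

/-- The (edge-vertex) incidence matrix of the marked ribbon graph `△(Q, I)`, with edges
identified with `Q₀` (via centers) and vertices with the permitted threads (transported
along a bijection `e` with a finite index type `W`): the entry at `(i, w)` is the number
of half-edges of the edge `i` incident to the vertex `e w`, i.e. the number of split
permitted threads with center `i` lying over the thread `e w`. -/
noncomputable def dInc (Q : BQuiv V A) {W : Type} (e : W ≃ PThread Q) : Matrix V W ℤ :=
  fun i w => (Nat.card {x : PSplit Q // x.center = i ∧ x.thread = e w} : ℤ)

end BQuiv

namespace BQuiv

variable {V A : Type}

/-- A letter of a walk of the quiver: an arrow `(a, true)` or a formal inverse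
`(a, false)`. -/
abbrev Letter (A : Type) : Type := A × Bool

/-- The source vertex of a letter. -/
def lsrc (Q : BQuiv V A) (c : Letter A) : V := if c.2 then Q.src c.1 else Q.tgt c.1

/-- The target vertex of a letter. -/
def ltgt (Q : BQuiv V A) (c : Letter A) : V := if c.2 then Q.tgt c.1 else Q.src c.1

/-- The inverse of a letter. -/
def linv (c : Letter A) : Letter A := (c.1, !c.2)

/-- `l` is (the list of letters of) a walk of the quiver, written from right to left. -/
def WalkChain (Q : BQuiv V A) (l : List (Letter A)) : Prop :=
  l.Chain' (fun c d => Q.lsrc c = Q.ltgt d)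

/-- A walk is closed when its source equals its target. -/
def WalkClosed (Q : BQuiv V A) (l : List (Letter A)) : Prop :=
  ∀ c, l.head? = some c → ∀ d, l.getLast? = some d → Q.lsrc d = Q.ltgt c

/-- A walk has no repeated edges when no arrow occurs twice (in either direction). -/
def NoRepeatedEdges (l : List (Letter A)) : Prop := (l.map Prod.fst).Nodup

/-- The number of relations of `R` contained in the closed walk `w = c₁⋯c_ℓ`: the
number of length-two subpaths of `w` or of `w⁻¹` lying in `R`, including the
wrap-around pairs `c_ℓc₁` and `c₁⁻¹c_ℓ⁻¹` when they consist of arrows and lie in `R`.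
(Computed over the cyclically consecutive pairs of letters of `w`.) -/
noncomputable def relCount (Q : BQuiv V A) (l : List (Letter A)) : ℕ :=
  ((l.zip (l.rotate 1)).map (fun cd =>
    if (cd.1.2 = true ∧ cd.2.2 = true ∧ Q.rel cd.1.1 cd.2.1) ∨
       (cd.1.2 = false ∧ cd.2.2 = false ∧ Q.rel cd.2.1 cd.1.1)
    then (1 : ℕ) else 0)).sum

/-- `(Q, I)` satisfies the multi-clock condition: every non-trivial closed walk of `Q`
without repeated edges contains an even number of relations. -/
def MultiClock (Q : BQuiv V A) : Prop :=
  ∀ l : List (Letter A), l ≠ [] → Q.WalkChain l → Q.WalkClosed l →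
    NoRepeatedEdges l → Even (Q.relCount l)

end BQuiv

open BQuiv
open scoped Matrix

namespace BQuiv

/-- A choice of strands at every vertex. -/
structure Strands {V A : Type} (Q : BQuiv V A) (s t : A → Bool) : Prop where
  s_inj : ∀ a a', Q.src a = Q.src a' → s a = s a' → a = a'
  t_inj : ∀ a a', Q.tgt a = Q.tgt a' → t a = t a' → a = a'
  st : ∀ a b, Q.src a = Q.tgt b → (s a = t b ↔ ¬ Q.rel a b)

theorem exists_bool_inj {A V : Type} [Finite A] (f : A → V)
    (h : ∀ v, Nat.card {a : A // f a = v} ≤ 2) :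
    ∃ s : A → Bool, ∀ a a', f a = f a' → s a = s a' → a = a' := by
  have key : ∀ v, ∃ g : {a : A // f a = v} → Bool, Function.Injective g := by
    intro v
    have := Fintype.ofFinite {a : A // f a = v}
    have h1 : Fintype.card {a : A // f a = v} ≤ Fintype.card Bool := by
      rw [← Nat.card_eq_fintype_card]; simpa using h v
    obtain ⟨e⟩ := Function.Embedding.nonempty_of_card_le h1
    exact ⟨e, e.injective⟩
  choose g hg using key
  refine ⟨fun a => g (f a) ⟨a, rfl⟩, fun a a' h1 h2 => ?_⟩
  have h3 : ∀ v (hv : f a' = v), g (f a') ⟨a', rfl⟩ = g v ⟨a', hv⟩ := by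
    intro v hv; subst hv; rfl
  simp only at h2
  rw [h3 (f a) h1.symm] at h2
  have := hg _ h2
  simpa using this

theorem exists_strands {V A : Type} [Finite A] (Q : BQuiv V A) (hQ : Q.IsGentle) :
    ∃ s t, Strands Q s t := by
  obtain ⟨s, hs⟩ := exists_bool_inj Q.src hQ.out_le
  obtain ⟨t0, ht0⟩ := exists_bool_inj Q.tgt hQ.in_le
  have key : ∀ v, ∃ t : A → Bool, (∀ b b', Q.tgt b = v → Q.tgt b' = v → t b = t b' → b = b') ∧
      ∀ a b, Q.src a = v → Q.tgt b = v → (s a = t b ↔ ¬ Q.rel a b) := by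
    intro v
    by_cases h : ∃ a0, Q.src a0 = v
    · obtain ⟨a0, h0⟩ := h
      refine ⟨fun b => if Q.rel a0 b then !(s a0) else s a0, ?_, ?_⟩
      · intro b b' hb hb' h
        by_cases h1 : Q.rel a0 b <;> by_cases h2 : Q.rel a0 b'
        · exact hQ.unique_rel_pre _ _ _ h1 h2
        · simp [h1, h2] at h
        · simp [h1, h2] at h
        · exact hQ.unique_nonrel_pre a0 _ _ (by rw [h0, hb]) (by rw [h0, hb']) h1 h2
      · intro a b ha hb
        by_cases haa : a = a0
        · subst haa
          by_cases h1 : Q.rel a b <;> simp [h1]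
        · have hne : s a ≠ s a0 := fun h => haa (hs a a0 (by rw [ha, h0]) h)
          have h3 : Q.rel a b ↔ ¬ Q.rel a0 b := by
            constructor
            · intro h1 h2
              exact haa (hQ.unique_rel_post b _ _ h1 h2)
            · intro h1
              by_contra h2
              exact haa (hQ.unique_nonrel_post b _ _ (by rw [ha, hb]) (by rw [h0, hb]) h2 h1)
          rw [h3]
          by_cases h1 : Q.rel a0 b
          · simp only [h1, if_true, not_true, not_false_iff, iff_true]
            revert hne; cases s a <;> cases s a0 <;> simp
          · simp [h1, hne]
    · refine ⟨t0, fun b b' hb hb' h => ht0 b b' (by rw [hb, hb']) h, ?_⟩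
      intro a b ha
      exact absurd ⟨a, ha⟩ h
  choose t ht1 ht2 using key
  refine ⟨s, fun b => t (Q.tgt b) b, hs, ?_, ?_⟩
  · intro a a' h h'
    simp only [h] at h'
    exact ht1 (Q.tgt a') a a' h rfl h'
  · intro a b h
    exact ht2 (Q.tgt b) a b h rfl

/-! ### Signs of walks -/

def eps (b : Bool) : ℚ := if b then 1 else -1

theorem eps_sq (b : Bool) : eps b * eps b = 1 := by cases b <;> simp [eps]

def sgn {A : Type} (s t : A → Bool) (c : Letter A) : ℚ := eps (s c.1) * eps (t c.1)

theorem sgn_sq {A : Type} (s t : A → Bool) (c : Letter A) : sgn s t c * sgn s t c = 1 := by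
  unfold sgn; cases s c.1 <;> cases t c.1 <;> simp [eps]

def wsgn {A : Type} (s t : A → Bool) (l : List (Letter A)) : ℚ := (l.map (sgn s t)).prod

theorem wsgn_append {A : Type} (s t : A → Bool) (l l' : List (Letter A)) :
    wsgn s t (l ++ l') = wsgn s t l * wsgn s t l' := by simp [wsgn]

theorem wsgn_cons {A : Type} (s t : A → Bool) (c) (l' : List (Letter A)) :
    wsgn s t (c :: l') = sgn s t c * wsgn s t l' := by simp [wsgn]

/-- `l` is a walk from `u` to `v`. -/
def IsWalk {V A : Type} (Q : BQuiv V A) : V → V → List (Letter A) → Prop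
  | v, u, [] => v = u
  | v, u, c :: l => Q.ltgt c = v ∧ IsWalk Q (Q.lsrc c) u l

theorem isWalk_append {V A : Type} (Q : BQuiv V A) (v u : V) (l l' : List (Letter A)) :
    IsWalk Q v u (l ++ l') ↔ ∃ w, IsWalk Q v w l ∧ IsWalk Q w u l' := by
  induction l generalizing v with
  | nil => simp [IsWalk]
  | cons c l ih => simp [IsWalk, ih, and_assoc]

theorem lsrc_linv {V A : Type} (Q : BQuiv V A) (c : Letter A) : Q.lsrc (linv c) = Q.ltgt c := by
  rcases c with ⟨a, b⟩; cases b <;> simp [lsrc, ltgt, linv]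

theorem ltgt_linv {V A : Type} (Q : BQuiv V A) (c : Letter A) : Q.ltgt (linv c) = Q.lsrc c := by
  rcases c with ⟨a, b⟩; cases b <;> simp [lsrc, ltgt, linv]

theorem exists_walk_rev {V A : Type} (Q : BQuiv V A) (s t : A → Bool) (v u : V)
    (l : List (Letter A)) (h : IsWalk Q v u l) :
    ∃ l', IsWalk Q u v l' ∧ wsgn s t l' = wsgn s t l := by
  induction l generalizing v with
  | nil => exact ⟨[], h.symm, rfl⟩
  | cons c l ih =>
    obtain ⟨l', h1, h2⟩ := ih _ h.2
    refine ⟨l' ++ [linv c], ?_, ?_⟩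
    · rw [isWalk_append]
      exact ⟨_, h1, ltgt_linv Q c, by rw [IsWalk, lsrc_linv]; exact h.1⟩
    · rw [wsgn_append, h2, wsgn_cons, mul_comm]
      simp [wsgn, sgn, linv]

theorem exists_walk {V A : Type} (Q : BQuiv V A) (hQ : Q.IsGentle) (u v : V) :
    ∃ l, IsWalk Q v u l := by
  induction hQ.connected u v with
  | refl => exact ⟨[], rfl⟩
  | tail _ h ih =>
    obtain ⟨l, hl⟩ := ih
    obtain ⟨a, ⟨h1, h2⟩ | ⟨h1, h2⟩⟩ := h
    · exact ⟨(a, true) :: l, by simp [ltgt, h2], by simpa [lsrc, h1] using hl⟩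
    · exact ⟨(a, false) :: l, by simp [ltgt, h1], by simpa [lsrc, h2] using hl⟩

theorem IsWalk.walkChain {V A : Type} {Q : BQuiv V A} {v u : V} {l : List (Letter A)}
    (h : IsWalk Q v u l) : Q.WalkChain l := by
  unfold WalkChain List.Chain'
  induction l generalizing v with
  | nil => exact List.isChain_nil
  | cons c l ih =>
    cases l with
    | nil => exact List.isChain_singleton _
    | cons d l =>
      rw [List.isChain_cons_cons]
      exact ⟨h.2.1.symm, ih h.2⟩

theorem IsWalk.head {V A : Type} {Q : BQuiv V A} {v u : V} {l : List (Letter A)}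
    (h : IsWalk Q v u l) (c) (hc : l.head? = some c) : Q.ltgt c = v := by
  cases l with
  | nil => simp at hc
  | cons d l => simp at hc; subst hc; exact h.1

theorem IsWalk.last {V A : Type} {Q : BQuiv V A} {v u : V} {l : List (Letter A)}
    (h : IsWalk Q v u l) (c) (hc : l.getLast? = some c) : Q.lsrc c = u := by
  induction l generalizing v with
  | nil => simp at hc
  | cons d l ih =>
    cases l with
    | nil => simp at hc; subst hc; exact h.2
    | cons e l => exact ih h.2 (by simpa using hc)

theorem isWalk_of_chain {V A : Type} (Q : BQuiv V A) (c : Letter A) (l : List (Letter A))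
    (h : Q.WalkChain (c :: l)) (d) (hd : (c :: l).getLast? = some d) :
    IsWalk Q (Q.ltgt c) (Q.lsrc d) (c :: l) := by
  unfold WalkChain List.Chain' at h
  induction l generalizing c with
  | nil => simp at hd; subst hd; exact ⟨rfl, rfl⟩
  | cons e l ih =>
    rw [List.isChain_cons_cons] at h
    refine ⟨rfl, ?_⟩
    rw [h.1]
    exact ih e h.2 (by simpa using hd)

theorem zip_pairs {X : Type} (R : X → X → Prop) (x : X) (l : List X) (c : X)
    (h : (c :: l).IsChain R) (hl : ∀ d, (c :: l).getLast? = some d → R d x) :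
    ∀ p ∈ (c :: l).zip (l ++ [x]), R p.1 p.2 := by
  induction l generalizing c with
  | nil => simpa using hl c rfl
  | cons e l ih =>
    rw [List.isChain_cons_cons] at h
    intro p hp
    simp only [List.cons_append, List.zip_cons_cons, List.mem_cons] at hp
    rcases hp with rfl | hp
    · exact h.1
    · exact ih e h.2 (fun d hd => hl d (by simpa using hd)) p (by simpa using hp)

theorem prod_zip {X : Type} (f g : X → ℚ) (l l' : List X) (h : l.length = l'.length) :
    ((l.zip l').map (fun p => f p.1 * g p.2)).prod = (l.map f).prod * (l'.map g).prod := by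
  induction l generalizing l' with
  | nil => cases l' <;> simp_all
  | cons c l ih =>
    cases l' with
    | nil => simp at h
    | cons d l' =>
      simp only [List.zip_cons_cons, List.map_cons, List.prod_cons]
      rw [ih l' (by simpa using h)]; ring

theorem neg_one_pow_list_sum {X : Type} (f : X → ℕ) (l : List X) :
    (-1 : ℚ) ^ (l.map f).sum = (l.map (fun x => (-1 : ℚ) ^ f x)).prod := by
  induction l with
  | nil => simp
  | cons c l ih => simp [pow_add, ih]

theorem relCount_sgn {V A : Type} (Q : BQuiv V A) {s t : A → Bool} (hst : Strands Q s t)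
    (l : List (Letter A)) (h1 : Q.WalkChain l) (h2 : Q.WalkClosed l) (h3 : NoRepeatedEdges l) :
    (-1 : ℚ) ^ (Q.relCount l) = wsgn s t l := by
  cases l with
  | nil => simp [relCount, wsgn]
  | cons c0 l =>
  have hadj := zip_pairs (fun c d => Q.lsrc c = Q.ltgt d) c0 l c0 h1
    (fun d hd => h2 c0 rfl d hd)
  have hrot : (c0 :: l).rotate 1 = l ++ [c0] := by simp
  unfold relCount
  rw [neg_one_pow_list_sum, hrot]
  let f : Letter A → ℚ := fun c => eps (if c.2 then s c.1 else t c.1) * eps c.2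
  let g : Letter A → ℚ := fun c => eps (if c.2 then t c.1 else s c.1) * eps c.2
  have hmap : ∀ p ∈ (c0 :: l).zip (l ++ [c0]), ((-1 : ℚ) ^ (if
       (p.1.2 = true ∧ p.2.2 = true ∧ Q.rel p.1.1 p.2.1) ∨
       (p.1.2 = false ∧ p.2.2 = false ∧ Q.rel p.2.1 p.1.1) then (1 : ℕ) else 0)) =
       f p.1 * g p.2 := by
    intro p hp
    have ha := hadj p hp
    have hm1 : p.1 ∈ c0 :: l := (List.of_mem_zip (a := p.1) (b := p.2) hp).1
    have hm2 : p.2 ∈ c0 :: l := by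
      have := (List.of_mem_zip (a := p.1) (b := p.2) hp).2
      simp only [List.mem_append, List.mem_cons, List.not_mem_nil, or_false] at this ⊢
      tauto
    have hinj := List.inj_on_of_nodup_map h3 hm1 hm2
    obtain ⟨⟨a, i⟩, ⟨b, j⟩⟩ := p
    simp only at ha hinj ⊢
    cases i <;> cases j
    · simp only [lsrc, ltgt] at ha
      have := hst.st b a (by simpa using ha.symm)
      simp only [f, g, eps]
      by_cases hr : Q.rel b a
      · simp only [hr, not_true, iff_false] at this
        revert this; cases t a <;> cases s b <;> simp [hr]
      · simp only [hr, not_false_iff, iff_true] at this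
        rw [this]; cases t a <;> simp [hr]
    · have hab : a ≠ b := fun h => by simpa using hinj h
      have : t a ≠ t b := fun h => hab (hst.t_inj _ _ (by simpa [lsrc, ltgt] using ha) h)
      simp only [f, g, eps]
      revert this; cases t a <;> cases t b <;> simp
    · have hab : a ≠ b := fun h => by simpa using hinj h
      have : s a ≠ s b := fun h => hab (hst.s_inj _ _ (by simpa [lsrc, ltgt] using ha) h)
      simp only [f, g, eps]
      revert this; cases s a <;> cases s b <;> simp
    · simp only [lsrc, ltgt] at ha
      have := hst.st a b (by simpa using ha)
      simp only [f, g, eps]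
      by_cases hr : Q.rel a b
      · simp only [hr, not_true, iff_false] at this
        revert this; cases s a <;> cases t b <;> simp [hr]
      · simp only [hr, not_false_iff, iff_true] at this
        rw [this]; cases t b <;> simp [hr]
  rw [List.map_congr_left hmap, prod_zip f g _ _ (by simp)]
  have hperm : ((l ++ [c0]).map g).prod = ((c0 :: l).map g).prod := by
    simp [mul_comm]
  rw [hperm, ← List.prod_map_mul]
  unfold wsgn
  congr 1
  apply List.map_congr_left
  rintro ⟨a, i⟩ _
  simp only [f, g, sgn]
  cases i <;> cases s a <;> cases t a <;> simp [eps]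

theorem exists_split {X Y : Type} (f : X → Y) (l : List X) (h : ¬ (l.map f).Nodup) :
    ∃ x c y d z, l = x ++ c :: (y ++ d :: z) ∧ f c = f d := by
  induction l with
  | nil => simp at h
  | cons e l ih =>
    by_cases h1 : (l.map f).Nodup
    · have : f e ∈ l.map f := by
        by_contra h2
        exact h (by rw [List.map_cons, List.nodup_cons]; exact ⟨h2, h1⟩)
      obtain ⟨d, hd, hde⟩ := List.mem_map.1 this
      obtain ⟨y, z, rfl⟩ := List.append_of_mem hd
      exact ⟨[], e, y, d, z, rfl, hde.symm⟩
    · obtain ⟨x, c, y, d, z, h2, h3⟩ := ih h1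
      exact ⟨e :: x, c, y, d, z, by simp [h2], h3⟩

theorem closed_sgn {V A : Type} (Q : BQuiv V A) {s t : A → Bool} (hst : Strands Q s t)
    (hM : MultiClock Q) : ∀ (n : ℕ) (v : V) (l : List (Letter A)), l.length = n →
    IsWalk Q v v l → wsgn s t l = 1 := by
  intro n
  induction n using Nat.strong_induction_on with
  | _ n ih =>
  intro v l hn hl
  by_cases hnd : NoRepeatedEdges l
  · by_cases hl0 : l = []
    · subst hl0; simp [wsgn]
    have hcl : Q.WalkClosed l := fun c hc d hd => by rw [hl.last d hd, hl.head c hc]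
    rw [← relCount_sgn Q hst l hl.walkChain hcl hnd]
    exact (hM l hl0 hl.walkChain hcl hnd).neg_one_pow
  · obtain ⟨x, c, y, d, z, rfl, hcd⟩ := exists_split Prod.fst l hnd
    rw [isWalk_append] at hl
    obtain ⟨w, hx, hc, hl⟩ := hl
    rw [isWalk_append] at hl
    obtain ⟨w', hy, hd, hz⟩ := hl
    simp only [List.length_append, List.length_cons] at hn
    by_cases hd2 : c = d
    · subst hd2
      have e1 := ih (x ++ c :: z).length (by simp; omega) v _ rfl
        ((isWalk_append _ _ _ _ _).2 ⟨w, hx, hc, hz⟩)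
      have e2 := ih (c :: y).length (by simp; omega) w (c :: y) rfl
        ⟨hc, by rw [← hc, hd]; exact hy⟩
      simp only [wsgn_append, wsgn_cons] at e1 e2 ⊢
      linear_combination (wsgn s t y * sgn s t c) * e1 + e2
    · have hd3 : d = linv c := by
        obtain ⟨a, i⟩ := c
        obtain ⟨b, j⟩ := d
        simp only at hcd; subst hcd
        simp only [linv]
        cases i <;> cases j <;> simp_all
      subst hd3
      rw [ltgt_linv] at hd
      rw [lsrc_linv, hc] at hz
      have e1 := ih (x ++ z).length (by simp; omega) v _ rfl
        ((isWalk_append _ _ _ _ _).2 ⟨w, hx, hz⟩)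
      have e2 := ih y.length (by omega) _ y rfl (by rw [← hd] at hy; exact hy)
      have e3 : sgn s t (linv c) = sgn s t c := rfl
      have e4 := sgn_sq s t c
      simp only [wsgn_append, wsgn_cons] at e1 e2 ⊢
      rw [e3, e2]
      linear_combination e1 + (wsgn s t x * wsgn s t z) * e4

/-- Existence of a non-zero potential is equivalent to the multi-clock condition. -/
theorem multiClock_of_pot {V A : Type} (Q : BQuiv V A) {s t : A → Bool} (hst : Strands Q s t)
    (u : V → ℚ) (hu : ∀ a, u (Q.tgt a) = eps (s a) * eps (t a) * u (Q.src a))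
    (h0 : ∀ v, u v ≠ 0) : MultiClock Q := by
  intro l hl0 h1 h2 h3
  have hw : ∀ v w l, IsWalk Q v w l → u v = wsgn s t l * u w := by
    intro v w l
    induction l generalizing v with
    | nil => intro h; simp [wsgn, show v = w from h]
    | cons c l ih =>
      intro h
      have := ih _ h.2
      rw [wsgn_cons, mul_assoc, ← this, ← h.1]
      obtain ⟨a, i⟩ := c
      cases i
      · simp only [ltgt, lsrc, sgn]
        simp [hu a]
        rw [← mul_assoc, ← mul_assoc]
        have e1 := eps_sq (s a)
        have e2 := eps_sq (t a)
        linear_combination (-u (Q.src a)) * e1 - u (Q.src a) * (eps (s a))^2 * e2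
      · simpa [ltgt, lsrc, sgn] using hu a
  rw [← neg_one_pow_eq_one_iff_even (R := ℚ) (by norm_num), relCount_sgn Q hst l h1 h2 h3]
  cases l with
  | nil => exact absurd rfl hl0
  | cons c l =>
    obtain ⟨d, hd⟩ : ∃ d, (c :: l).getLast? = some d := ⟨_, List.getLast?_eq_some_getLast (by simp)⟩
    have hwk := isWalk_of_chain Q c l h1 d hd
    rw [h2 c rfl d hd] at hwk
    have := hw _ _ _ hwk
    exact mul_right_cancel₀ (h0 _) (by rw [one_mul]; exact this.symm)

theorem pot_of_multiClock {V A : Type} (Q : BQuiv V A) (hQ : Q.IsGentle)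
    {s t : A → Bool} (hst : Strands Q s t) (hM : MultiClock Q) (v0 : V) :
    ∃ u : V → ℚ, u v0 = 1 ∧ ∀ a, u (Q.tgt a) = eps (s a) * eps (t a) * u (Q.src a) := by
  choose p hp using fun v => exists_walk Q hQ v0 v
  have hc : ∀ v l, IsWalk Q v v l → wsgn s t l = 1 :=
    fun v l h => closed_sgn Q hst hM _ v l rfl h
  refine ⟨fun v => wsgn s t (p v), hc _ _ (hp v0), fun a => ?_⟩
  obtain ⟨l', h1, h2⟩ := exists_walk_rev Q s t _ _ _ (hp (Q.src a))
  have h3 : IsWalk Q (Q.src a) (Q.src a) (p (Q.src a) ++ l') :=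
    (isWalk_append _ _ _ _ _).2 ⟨_, hp _, h1⟩
  have h3 := hc _ _ h3
  have h4 : IsWalk Q (Q.tgt a) (Q.tgt a) (p (Q.tgt a) ++ (l' ++ [(a, false)])) := by
    rw [isWalk_append]
    refine ⟨_, hp _, ?_⟩
    rw [isWalk_append]
    exact ⟨_, h1, by simp [ltgt], by simp [IsWalk, lsrc]⟩
  have h4 := hc _ _ h4
  have h5 : sgn s t (a, false) = eps (s a) * eps (t a) := rfl
  have h6 := sgn_sq s t (a, false)
  simp only [wsgn_append, wsgn_cons, h2] at h3 h4
  simp only [wsgn, List.map_nil, List.prod_nil, mul_one] at h3 h4 ⊢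
  rw [← h5]
  set X := (List.map (sgn s t) (p (Q.tgt a))).prod
  set Y := (List.map (sgn s t) (p (Q.src a))).prod
  set σ := sgn s t (a, false)
  linear_combination (-X) * h6 + (Y * σ) * h4 - σ^2 * X * h3

/-- Potentials vanishing somewhere vanish. -/
theorem pot_zero {V A : Type} (Q : BQuiv V A) (hQ : Q.IsGentle) {s t : A → Bool}
    (u : V → ℚ) (hu : ∀ a, u (Q.tgt a) = eps (s a) * eps (t a) * u (Q.src a))
    (v0 : V) (h0 : u v0 = 0) (v : V) : u v = 0 := by
  have hne : ∀ b, eps b ≠ 0 := by intro b; cases b <;> simp [eps]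
  induction hQ.connected v0 v with
  | refl => exact h0
  | tail _ h ih =>
    obtain ⟨a, ⟨h1, h2⟩ | ⟨h1, h2⟩⟩ := h
    · have := hu a; rw [h1, h2, ih, mul_zero] at this; exact this
    · have := hu a; rw [h1, h2, ih] at this
      have := this.symm
      simpa [hne] using this

end BQuiv

namespace BQuiv

/-- `a :: l` is a permitted path starting at the strand `h`. -/
def PT {V A : Type} (Q : BQuiv V A) (s : A → Bool) : A → V × Bool → List A → Prop
  | a, h, [] => (Q.src a, s a) = h
  | a, h, b :: l => (Q.src a = Q.tgt b ∧ ¬ Q.rel a b) ∧ PT Q s b h l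

theorem PT.chain {V A : Type} {Q : BQuiv V A} {s : A → Bool} {a : A} {h : V × Bool}
    {l : List A} (hl : PT Q s a h l) :
    (a :: l).IsChain (fun a b => Q.src a = Q.tgt b) ∧ (a :: l).IsChain (fun a b => ¬ Q.rel a b) := by
  induction l generalizing a with
  | nil => simp
  | cons b l ih =>
    have := ih hl.2
    exact ⟨List.isChain_cons_cons.2 ⟨hl.1.1, this.1⟩, List.isChain_cons_cons.2 ⟨hl.1.2, this.2⟩⟩

theorem PT.last {V A : Type} {Q : BQuiv V A} {s : A → Bool} {a : A} {h : V × Bool}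
    {l : List A} (hl : PT Q s a h l) (c : A) (hc : (a :: l).getLast? = some c) :
    (Q.src c, s c) = h := by
  induction l generalizing a with
  | nil => simp at hc; subst hc; exact hl
  | cons b l ih => exact ih hl.2 (by simpa using hc)

theorem PT_of_chain {V A : Type} {Q : BQuiv V A} {s : A → Bool} {a : A}
    {l : List A} (h1 : (a :: l).IsChain (fun a b => Q.src a = Q.tgt b))
    (h2 : (a :: l).IsChain (fun a b => ¬ Q.rel a b)) (c : A) (hc : (a :: l).getLast? = some c) :
    PT Q s a (Q.src c, s c) l := by
  induction l generalizing a with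
  | nil => simp at hc; subst hc; rfl
  | cons b l ih =>
    rw [List.isChain_cons_cons] at h1 h2
    exact ⟨⟨h1.1, h2.1⟩, ih h1.2 h2.2 (by simpa using hc)⟩

theorem PT_finite {V A : Type} [Finite A] {Q : BQuiv V A} (hQ : Q.IsGentle) (s : A → Bool)
    (a : A) (h : V × Bool) : Finite {l // PT Q s a h l} := by
  obtain ⟨m, _, hm⟩ := hQ.admissible
  refine Set.Finite.subset (List.finite_length_lt A m) ?_
  intro l hl
  by_contra hlen
  simp only [Set.mem_setOf_eq, not_lt] at hlen
  have := PT.chain hl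
  exact hm ((a :: l).take m) (by simp; omega) (this.1.take m) (this.2.take m)

noncomputable def Gm {V A : Type} (Q : BQuiv V A) (s : A → Bool) : Matrix A (V × Bool) ℚ :=
  fun a h => (Nat.card {l // PT Q s a h l} : ℚ)

noncomputable def Em {V A : Type} (f : A → V) (s : A → Bool) : Matrix (V × Bool) A ℚ :=
  fun h a => if (f a, s a) = h then 1 else 0

noncomputable def Pm (V : Type) : Matrix V (V × Bool) ℚ :=
  fun v h => if h.1 = v then 1 else 0

noncomputable def PTequiv {V A : Type} (Q : BQuiv V A) (s : A → Bool) (a : A) (h : V × Bool) :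
    {l // PT Q s a h l} ≃ {_u : Unit // (Q.src a, s a) = h} ⊕
      (Σ b : {b // Q.src a = Q.tgt b ∧ ¬ Q.rel a b}, {l // PT Q s b.1 h l}) where
  toFun := fun
    | ⟨[], hl⟩ => Sum.inl ⟨(), hl⟩
    | ⟨b :: l, hl⟩ => Sum.inr ⟨⟨b, hl.1⟩, ⟨l, hl.2⟩⟩
  invFun := fun
    | Sum.inl x => ⟨[], x.2⟩
    | Sum.inr x => ⟨x.1.1 :: x.2.1, x.1.2, x.2.2⟩
  left_inv := by rintro ⟨_ | ⟨b, l⟩, hl⟩ <;> rfl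
  right_inv := by rintro (x | x) <;> rfl

theorem card_unit (p : Prop) : Nat.card {_u : Unit // p} = if p then 1 else 0 := by
  by_cases h : p <;> simp [h]

theorem sum_subtype_ite {A : Type} [Fintype A] (p : A → Prop) [DecidablePred p]
    [Fintype {b // p b}] (f : A → ℚ) :
    ∑ b : {b // p b}, f b.1 = ∑ b, (if p b then 1 else 0) * f b := by
  simp only [ite_mul, one_mul, zero_mul]
  rw [← Finset.sum_filter]
  refine (Finset.sum_subtype _ (p := p) (by simp) f).symm

theorem Gm_rec {V A : Type} [Fintype V] [Fintype A] {Q : BQuiv V A} (hQ : Q.IsGentle)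
    {s t : A → Bool} (hst : Strands Q s t) :
    Gm Q s = (Em Q.src s)ᵀ + ((Em Q.src s)ᵀ * Em Q.tgt t) * Gm Q s := by
  have := PT_finite hQ s
  ext a h
  have hB : ∀ b, ((Em Q.src s)ᵀ * Em Q.tgt t) a b =
      if Q.src a = Q.tgt b ∧ ¬ Q.rel a b then 1 else 0 := by
    intro b
    simp only [Matrix.mul_apply, Matrix.transpose_apply, Em, ite_mul, one_mul, zero_mul,
      Finset.sum_ite_eq, Finset.mem_univ, if_true, Prod.mk.injEq]
    apply if_congr _ rfl rfl
    constructor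
    · rintro ⟨h1, h2⟩
      exact ⟨h1.symm, (hst.st a b h1.symm).1 h2.symm⟩
    · rintro ⟨h1, h2⟩
      exact ⟨h1.symm, ((hst.st a b h1).2 h2).symm⟩
  rw [Matrix.add_apply, Matrix.mul_apply]
  simp only [hB]
  rw [← sum_subtype_ite (fun b => Q.src a = Q.tgt b ∧ ¬ Q.rel a b) (fun b => Gm Q s b h)]
  simp only [Gm]
  rw [Nat.card_congr (PTequiv Q s a h), Nat.card_sum, Nat.card_sigma, card_unit]
  push_cast
  simp [Em, Matrix.transpose_apply]

noncomputable def pathOf {V A : Type} (Q : BQuiv V A) (s : A → Bool) (i j : V) :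
    ({_u : Unit // i = j} ⊕ (Σ x : {a // Q.tgt a = i} × Bool, {l // PT Q s x.1.1 (j, x.2) l})) →
    {p : Path Q // p.Permitted ∧ p.base = j ∧ p.tgtV = i}
  | Sum.inl x => ⟨⟨j, [], List.isChain_nil, by simp⟩, List.isChain_nil, rfl, x.2.symm⟩
  | Sum.inr x => ⟨⟨j, x.1.1.1 :: x.2.1, (PT.chain x.2.2).1,
      fun c hc => congrArg Prod.fst (PT.last x.2.2 c hc)⟩, (PT.chain x.2.2).2, rfl, x.1.1.2⟩

theorem pathOf_bij {V A : Type} (Q : BQuiv V A) (s : A → Bool) (i j : V) :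
    Function.Bijective (pathOf Q s i j) := by
  constructor
  · rintro (x | ⟨⟨⟨a, ha⟩, b⟩, ⟨l, hl⟩⟩) (y | ⟨⟨⟨a', ha'⟩, b'⟩, ⟨l', hl'⟩⟩) h
    · exact congrArg Sum.inl (Subsingleton.elim x y)
    · have h' := congrArg (fun p => p.1.arrows) h
      simp [pathOf] at h'
    · have h' := congrArg (fun p => p.1.arrows) h
      simp [pathOf] at h'
    · have h' := congrArg (fun p => p.1.arrows) h
      simp only [pathOf, List.cons.injEq] at h'
      obtain ⟨rfl, rfl⟩ := h'
      obtain ⟨c, hc⟩ : ∃ c, (a :: l).getLast? = some c :=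
        ⟨_, List.getLast?_eq_some_getLast (by simp)⟩
      have h1 := PT.last hl c hc
      have h2 := PT.last hl' c hc
      have h3 := h1.symm.trans h2
      simp only [Prod.mk.injEq, true_and] at h3
      subst h3
      rfl
  · rintro ⟨⟨v, l, hch, hb⟩, hp, hj, hi⟩
    simp only at hj
    subst hj
    cases l with
    | nil =>
      exact ⟨Sum.inl ⟨(), hi.symm⟩, rfl⟩
    | cons a l =>
      obtain ⟨c, hc⟩ : ∃ c, (a :: l).getLast? = some c :=
        ⟨_, List.getLast?_eq_some_getLast (by simp)⟩
      have h1 := PT_of_chain (s := s) hch hp c hc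
      rw [hb c hc] at h1
      exact ⟨Sum.inr ⟨⟨⟨a, hi⟩, s c⟩, ⟨l, h1⟩⟩, rfl⟩

theorem cartan_eq {V A : Type} [Fintype V] [Fintype A] {Q : BQuiv V A} (hQ : Q.IsGentle)
    (s t : A → Bool) :
    (cartan Q).map ((↑) : ℤ → ℚ) = 1 + Pm V * Em Q.tgt t * (Gm Q s * (Pm V)ᵀ) := by
  have := PT_finite hQ s
  ext i j
  have h1 : ∀ a, (Pm V * Em Q.tgt t) i a = if Q.tgt a = i then 1 else 0 := by
    intro a
    simp [Matrix.mul_apply, Pm, Em]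
  have h2 : ∀ a, (Gm Q s * (Pm V)ᵀ) a j = Gm Q s a (j, true) + Gm Q s a (j, false) := by
    intro a
    simp [Matrix.mul_apply, Pm, Fintype.sum_prod_type, Finset.sum_add_distrib]
  rw [Matrix.add_apply, Matrix.mul_apply]
  simp only [h1, h2]
  rw [← sum_subtype_ite _ (fun a => Gm Q s a (j, true) + Gm Q s a (j, false))]
  simp only [Matrix.map_apply, cartan, Gm]
  rw [← Nat.card_congr (Equiv.ofBijective _ (pathOf_bij Q s i j)), Nat.card_sum, Nat.card_sigma,
    card_unit, Fintype.sum_prod_type]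
  simp [Matrix.one_apply]

/-- Strands without incoming arrows. -/
abbrev Starts {V A : Type} (Q : BQuiv V A) (t : A → Bool) : Type :=
  {h : V × Bool // ¬ ∃ a, (Q.tgt a, t a) = h}

noncomputable def Jm {V A : Type} (Q : BQuiv V A) (t : A → Bool) :
    Matrix (V × Bool) (Starts Q t) ℚ := fun h x => if x.1 = h then 1 else 0

theorem card_starts {V A : Type} [Fintype V] [Fintype A] {Q : BQuiv V A}
    {s t : A → Bool} (hst : Strands Q s t) :
    Fintype.card (Starts Q t) + Fintype.card A = 2 * Fintype.card V := by
  have h1 : Fintype.card {h : V × Bool // ∃ a, (Q.tgt a, t a) = h} = Fintype.card A := by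
    refine (Fintype.card_congr (Equiv.ofBijective
      (fun a => ⟨(Q.tgt a, t a), a, rfl⟩) ⟨?_, ?_⟩)).symm
    · intro a b hab
      simp only [Subtype.mk.injEq, Prod.mk.injEq] at hab
      exact hst.t_inj _ _ hab.1 hab.2
    · rintro ⟨_, a, rfl⟩; exact ⟨a, rfl⟩
  have h2 := Fintype.card_subtype_compl (fun h : V × Bool => ∃ a, (Q.tgt a, t a) = h)
  have h3 := Fintype.card_subtype_le (fun h : V × Bool => ∃ a, (Q.tgt a, t a) = h)
  have h4 : Fintype.card (Starts Q t) =
    Fintype.card {h : V × Bool // ¬ ∃ a, (Q.tgt a, t a) = h} := Fintype.card_congr (Equiv.refl _)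
  rw [h1] at h2 h3
  have h5 : Fintype.card (V × Bool) = 2 * Fintype.card V := by simp [mul_comm]
  omega

theorem SmT_Sm {V A : Type} [Fintype V] [Fintype A] {Q : BQuiv V A}
    {s t : A → Bool} (hst : Strands Q s t) : (Em Q.src s)ᵀ * Em Q.src s = 1 := by
  ext a b
  simp only [Matrix.mul_apply, Matrix.transpose_apply, Em, ite_mul, one_mul, zero_mul,
    Finset.sum_ite_eq, Finset.mem_univ, if_true, Prod.mk.injEq, Matrix.one_apply]
  apply if_congr _ rfl rfl
  constructor
  · rintro ⟨h1, h2⟩; exact (hst.s_inj _ _ h1 h2).symm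
  · rintro rfl; simp

theorem J_JT {V A : Type} [Fintype V] [Fintype A] {Q : BQuiv V A}
    {s t : A → Bool} (hst : Strands Q s t) :
    Jm Q t * (Jm Q t)ᵀ = 1 - Em Q.tgt t * (Em Q.tgt t)ᵀ := by
  ext h h'
  simp only [Matrix.mul_apply, Matrix.transpose_apply, Em, Jm, ite_mul, one_mul, zero_mul,
    Matrix.one_apply, Matrix.sub_apply]
  by_cases hx : ∃ a, (Q.tgt a, t a) = h
  · obtain ⟨a, rfl⟩ := hx
    rw [Finset.sum_eq_zero, Finset.sum_eq_single a]
    · simp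
    · intro b _ hb
      rw [if_neg]
      intro h1
      simp only [Prod.mk.injEq] at h1
      exact hb (hst.t_inj _ _ h1.1 h1.2)
    · simp
    · intro x _
      rw [if_neg]
      intro h1
      exact x.2 ⟨a, h1.symm⟩
  · rw [Finset.sum_eq_single (⟨h, hx⟩ : Starts Q t), Finset.sum_eq_zero]
    · simp
    · intro a _
      rw [if_neg]
      intro h1; exact hx ⟨a, h1⟩
    · intro b _ hb
      rw [if_neg]
      intro h1; exact hb (Subtype.ext h1)
    · simp

theorem P_PT {V : Type} [Fintype V] : Pm V * (Pm V)ᵀ = 2 := by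
  have h2 : (2 : Matrix V V ℚ) = 1 + 1 := by norm_num
  rw [h2]
  ext i j
  simp [Matrix.mul_apply, Pm, Fintype.sum_prod_type, Matrix.one_apply]
  by_cases hij : i = j
  · subst hij; norm_num
  · simp [hij, Ne.symm hij, show ¬ j = i from fun h => hij h.symm]

theorem main_rank {V A : Type} [Fintype V] [Fintype A] (Q : BQuiv V A) (hQ : Q.IsGentle) :
    ((cartan Q + (cartan Q)ᵀ).map ((↑) : ℤ → ℚ)).rank + (if MultiClock Q then 1 else 0)
      + Fintype.card A = 2 * Fintype.card V := by
  obtain ⟨s, t, hst⟩ := exists_strands Q hQ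
  obtain ⟨a0⟩ := hQ.has_arrow
  set v0 := Q.src a0
  set P := Pm V with hP
  set S := Em Q.src s with hS
  set T := Em Q.tgt t with hT
  set G := Gm Q s with hG
  set J := Jm Q t with hJ
  have hGrec : G = Sᵀ + (Sᵀ * T) * G := Gm_rec hQ hst
  have hSS : Sᵀ * S = 1 := SmT_Sm hst
  have hJJ : J * Jᵀ = 1 - T * Tᵀ := J_JT hst
  have hPP : P * Pᵀ = 2 := P_PT
  have hC : (cartan Q).map ((↑) : ℤ → ℚ) = 1 + P * T * (G * Pᵀ) := cartan_eq hQ s t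
  set N := T * Sᵀ with hN
  set E := 1 + T * G with hE
  have hNE : (1 - N) * E = 1 := by
    have : T * G = T * Sᵀ + T * Sᵀ * (T * G) := by
      conv_lhs => rw [hGrec]
      simp only [Matrix.mul_add, Matrix.mul_assoc]
    have h2 : (1 - N) * E = 1 + T * G - T * Sᵀ - T * Sᵀ * (T * G) := by
      rw [hN, hE]; noncomm_ring
    rw [h2]; nth_rewrite 1 [this]; abel
  have hEN : E * (1 - N) = 1 := mul_eq_one_comm.1 hNE
  have hNN : N * Nᵀ = T * Tᵀ := by
    rw [hN, Matrix.transpose_mul, Matrix.transpose_transpose, Matrix.mul_assoc,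
      ← Matrix.mul_assoc Sᵀ, hSS, Matrix.one_mul]
  have hJN : J * Jᵀ = (1 - N) + (1 - N)ᵀ - (1 - N) * (1 - N)ᵀ := by
    rw [hJJ, ← hNN, Matrix.transpose_sub, Matrix.transpose_one]; noncomm_ring
  have hENt : (1 - N)ᵀ * Eᵀ = 1 := by rw [← Matrix.transpose_mul, hEN, Matrix.transpose_one]
  have hEE : E * (J * Jᵀ) * Eᵀ = E + Eᵀ - 1 := by
    rw [hJN]
    have : E * ((1 - N) + (1 - N)ᵀ - (1 - N) * (1 - N)ᵀ) * Eᵀ =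
      (E * (1 - N)) * Eᵀ + E * ((1 - N)ᵀ * Eᵀ) - (E * (1 - N)) * ((1 - N)ᵀ * Eᵀ) := by
      noncomm_ring
    rw [this, hEN, hENt]; noncomm_ring
  have hPEP : (cartan Q).map ((↑) : ℤ → ℚ) = P * E * Pᵀ - 1 := by
    rw [hC, hE, Matrix.mul_add, Matrix.add_mul, Matrix.mul_one, hPP]
    simp only [Matrix.mul_assoc]
    have h2 : (2 : Matrix V V ℚ) = 1 + 1 := by norm_num
    rw [h2]; abel
  clear_value N E
  have hM : (cartan Q + (cartan Q)ᵀ).map ((↑) : ℤ → ℚ) = (P * E * J) * (P * E * J)ᵀ := by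
    have e1 : (cartan Q + (cartan Q)ᵀ).map ((↑) : ℤ → ℚ) =
      (cartan Q).map ((↑) : ℤ → ℚ) + ((cartan Q).map ((↑) : ℤ → ℚ))ᵀ := by
      ext i j; simp
    have e2 : (P * E * J) * (P * E * J)ᵀ = P * (E * (J * Jᵀ) * Eᵀ) * Pᵀ := by
      simp only [Matrix.transpose_mul, Matrix.mul_assoc]
    have h2 : (2 : Matrix V V ℚ) = 1 + 1 := by norm_num
    rw [e1, e2, hEE, hPEP, Matrix.transpose_sub, Matrix.transpose_mul, Matrix.transpose_mul,
      Matrix.transpose_transpose, Matrix.transpose_one, Matrix.mul_sub, Matrix.sub_mul,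
      Matrix.mul_add, Matrix.add_mul, Matrix.mul_one, hPP, h2, Matrix.mul_assoc P Eᵀ]
    abel
  have hrank := LinearMap.finrank_range_add_finrank_ker (P * E * J).mulVecLin
  rw [hM, Matrix.rank_self_mul_transpose]
  have hcard := card_starts hst
  have hker : Module.finrank ℚ (LinearMap.ker (P * E * J).mulVecLin) =
      if MultiClock Q then 1 else 0 := by
    -- the potential attached to a kernel vector
    have hNz : ∀ (z : V × Bool → ℚ) a, ((1 - N) *ᵥ z) (Q.tgt a, t a) =
        z (Q.tgt a, t a) - z (Q.src a, s a) := by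
      intro z a
      rw [Matrix.sub_mulVec, Matrix.one_mulVec, Pi.sub_apply, hN, ← Matrix.mulVec_mulVec]
      congr 1
      simp only [Matrix.mulVec, dotProduct]
      rw [Finset.sum_eq_single a]
      · simp [hS, hT, Em]
      · intro b _ hb
        have : T (Q.tgt a, t a) b = 0 := by
          simp only [hT, Em]
          rw [if_neg]
          intro h1
          simp only [Prod.mk.injEq] at h1
          exact hb (hst.t_inj _ _ h1.1 h1.2)
        rw [this, zero_mul]
      · simp
    have hJs : ∀ (y : Starts Q t → ℚ) x, (J *ᵥ y) x.1 = y x := by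
      intro y x
      simp only [Matrix.mulVec, dotProduct]
      rw [Finset.sum_eq_single x]
      · simp [hJ, Jm]
      · intro b _ hb
        have : J x.1 b = 0 := by
          simp only [hJ, Jm]
          rw [if_neg]
          intro h1; exact hb (Subtype.ext h1)
        rw [this, zero_mul]
      · simp
    have hJa : ∀ (y : Starts Q t → ℚ) a, (J *ᵥ y) (Q.tgt a, t a) = 0 := by
      intro y a
      simp only [Matrix.mulVec, dotProduct]
      apply Finset.sum_eq_zero
      intro b _
      have : J (Q.tgt a, t a) b = 0 := by
        simp only [hJ, Jm]
        rw [if_neg]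
        intro h1; exact b.2 ⟨a, h1.symm⟩
      rw [this, zero_mul]
    have hPz : ∀ (z : V × Bool → ℚ) v, (P *ᵥ z) v = z (v, true) + z (v, false) := by
      intro z v
      simp [Matrix.mulVec, dotProduct, hP, Pm, Fintype.sum_prod_type, Finset.sum_add_distrib]
    have hsplit : ∀ y, (P * E * J) *ᵥ y = P *ᵥ (E *ᵥ (J *ᵥ y)) := by
      intro y; simp only [Matrix.mulVec_mulVec, Matrix.mul_assoc]
    have hpot : ∀ y, (P * E * J) *ᵥ y = 0 → ∀ a, (E *ᵥ (J *ᵥ y)) (Q.tgt a, true) =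
        eps (s a) * eps (t a) * (E *ᵥ (J *ᵥ y)) (Q.src a, true) := by
      intro y hy a
      rw [hsplit] at hy
      set z := E *ᵥ (J *ᵥ y) with hz
      have h1 : (1 - N) *ᵥ z = J *ᵥ y := by
        rw [hz, Matrix.mulVec_mulVec, hNE, Matrix.one_mulVec]
      have h2 := hNz z a
      rw [h1, hJa] at h2
      have h3 := congrFun hy (Q.tgt a)
      have h4 := congrFun hy (Q.src a)
      rw [hPz] at h3 h4
      simp only [Pi.zero_apply] at h3 h4
      revert h2
      cases s a <;> cases t a <;> simp [eps] <;> intro h2 <;> linarith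
    have hinj : ∀ y, (P * E * J) *ᵥ y = 0 → (E *ᵥ (J *ᵥ y)) (v0, true) = 0 → y = 0 := by
      intro y hy h0
      have h1 := pot_zero Q hQ (fun v => (E *ᵥ (J *ᵥ y)) (v, true)) (hpot y hy) v0 h0
      rw [hsplit] at hy
      set z := E *ᵥ (J *ᵥ y) with hz
      have hz0 : z = 0 := by
        ext ⟨v, b⟩
        have h3 := congrFun hy v
        rw [hPz] at h3
        have h4 := h1 v
        cases b
        · rw [h4, zero_add] at h3; exact h3
        · exact h4
      have h1 : (1 - N) *ᵥ z = J *ᵥ y := by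
        rw [hz, Matrix.mulVec_mulVec, hNE, Matrix.one_mulVec]
      ext x
      rw [← hJs y x, ← h1, hz0, Matrix.mulVec_zero]; rfl
    by_cases hMC : MultiClock Q
    · rw [if_pos hMC]
      let f : LinearMap.ker (P * E * J).mulVecLin →ₗ[ℚ] ℚ :=
        (LinearMap.proj (v0, true)).comp ((E.mulVecLin.comp J.mulVecLin).comp
          (LinearMap.ker (P * E * J).mulVecLin).subtype)
      have hf : ∀ y, f y = (E *ᵥ (J *ᵥ y.1)) (v0, true) := fun y => rfl
      have hfi : Function.Injective f := by
        rw [injective_iff_map_eq_zero]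
        rintro ⟨y, hy⟩ h
        rw [hf] at h
        exact Subtype.ext (hinj y (by rwa [LinearMap.mem_ker, Matrix.mulVecLin_apply] at hy) h)
      have hfs : Function.Surjective f := by
        obtain ⟨u, hu0, hu⟩ := pot_of_multiClock Q hQ hst hMC v0
        let z : V × Bool → ℚ := fun h => eps h.2 * u h.1
        have hz1 : ∀ a, z (Q.tgt a, t a) = z (Q.src a, s a) := by
          intro a
          simp only [z, hu a]
          have := eps_sq (t a)
          linear_combination (eps (s a) * u (Q.src a)) * this
        let y : Starts Q t → ℚ := fun x => ((1 - N) *ᵥ z) x.1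
        have hy : J *ᵥ y = (1 - N) *ᵥ z := by
          ext h
          by_cases hx : ∃ a, (Q.tgt a, t a) = h
          · obtain ⟨a, rfl⟩ := hx
            rw [hJa, hNz, hz1, sub_self]
          · exact hJs y ⟨h, hx⟩
        have hEz : E *ᵥ (J *ᵥ y) = z := by
          rw [hy, Matrix.mulVec_mulVec, hEN, Matrix.one_mulVec]
        have hyk : (P * E * J) *ᵥ y = 0 := by
          rw [hsplit, hEz]
          ext v
          rw [hPz]; simp [z, eps]
        intro q
        refine ⟨q • ⟨y, by rw [LinearMap.mem_ker, Matrix.mulVecLin_apply]; exact hyk⟩, ?_⟩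
        rw [map_smul, hf, hEz]
        simp [z, eps, hu0]
      rw [(LinearEquiv.ofBijective f ⟨hfi, hfs⟩).finrank_eq, Module.finrank_self]
    · rw [if_neg hMC]
      have : LinearMap.ker (P * E * J).mulVecLin = ⊥ := by
        rw [Submodule.eq_bot_iff]
        intro y hy
        have hy : (P * E * J) *ᵥ y = 0 := by
          rwa [LinearMap.mem_ker, Matrix.mulVecLin_apply] at hy
        apply hinj y hy
        by_contra h0
        refine hMC (multiClock_of_pot Q hst (fun v => (E *ᵥ (J *ᵥ y)) (v, true)) (hpot y hy) (fun v hv => h0 ?_))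
        exact pot_zero Q hQ (fun v => (E *ᵥ (J *ᵥ y)) (v, true)) (hpot y hy) v hv v0
      rw [this, finrank_bot]
  rw [hker] at hrank
  rw [Module.finrank_fintype_fun_eq_card] at hrank
  have : (P * E * J).rank = Module.finrank ℚ (LinearMap.range (P * E * J).mulVecLin) := rfl
  omega

end BQuiv


/-- Let `(Q, I)` be a gentle bound quiver with Cartan matrix `C` and
let `δ = 1` if `(Q, I)` satisfies the multi-clock condition and `δ = 0` otherwise.
Then the rank over `ℚ` of the symmetric matrix `C + Cᵀ` equals `2|Q₀| - |Q₁| - δ`;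
equivalently, its corank equals `|Q₁| - |Q₀| + δ`. -/
theorem stmt11 {V A : Type} [Fintype V] [Fintype A] [DecidableEq V]
    (Q : BQuiv V A) (hQ : Q.IsGentle) :
    ((((cartan Q + (cartan Q)ᵀ).map ((↑) : ℤ → ℚ)).rank : ℤ) =
        2 * Fintype.card V - Fintype.card A -
          (if MultiClock Q then 1 else 0)) ∧
    ((Fintype.card V : ℤ) - (((cartan Q + (cartan Q)ᵀ).map ((↑) : ℤ → ℚ)).rank : ℤ) =
        (Fintype.card A : ℤ) - Fintype.card V +
          (if MultiClock Q then 1 else 0)) := by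
  have h := BQuiv.main_rank Q hQ
  have h2 : ((((cartan Q + (cartan Q)ᵀ).map ((↑) : ℤ → ℚ)).rank : ℤ) + (if MultiClock Q then 1 else 0)
      + Fintype.card A = 2 * Fintype.card V) := by
    exact_mod_cast h
  constructor <;> linarith
end

section
/- Let (Q,I) be a gentle bound quiver with Cartan matrix C. Then for every vertex i of Q: C_{ii} = 2 if some permitted path of (Q,I) self-crosses at i (i.e., passes through the vertex i twice), and C_{ii} = 1 otherwise. Moreover, if C_{ii} = 2 then C_{ij} + C_{ji} is even for every vertex j (so the Euler form x ↦ x^tr C x is Cox-regular in the basis of indecomposable projectives). -/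
set_option autoImplicit false

attribute [local instance] Classical.propDecidable

open BQuiv

namespace GentleAux

theorem prefix_of_head {A : Type} {R : A → A → Prop}
    (hR : ∀ a b c, R a b → R a c → b = c) :
    ∀ (l l' : List A), l.IsChain R → l'.IsChain R → l.head? = l'.head? →
      l <+: l' ∨ l' <+: l := by
  intro l
  induction l with
  | nil => intro l' _ _ _; left; exact List.nil_prefix
  | cons a t ih =>
    intro l' h1 h2 h3
    cases l' with
    | nil => right; exact List.nil_prefix
    | cons b t' =>
      simp only [List.head?_cons, Option.some.injEq] at h3
      subst h3
      rw [List.isChain_cons] at h1 h2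
      cases t with
      | nil => left; simp
      | cons c s =>
        cases t' with
        | nil => right; simp
        | cons d s' =>
          have : c = d := hR a c d (h1.1 c (by simp)) (h2.1 d (by simp))
          rcases ih (d :: s') h1.2 h2.2 (by simp [this]) with h | h
          · left; exact (List.prefix_cons_inj a).2 h
          · right; exact (List.prefix_cons_inj a).2 h

theorem suffix_of_last {A : Type} {R : A → A → Prop}
    (hR : ∀ a b c, R b a → R c a → b = c)
    (l l' : List A) (h1 : l.IsChain R) (h2 : l'.IsChain R) (h3 : l.getLast? = l'.getLast?) :
      l <:+ l' ∨ l' <:+ l := by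
  have := prefix_of_head (R := flip R) (fun a b c h h' => hR a b c h h') l.reverse l'.reverse
    (by rw [List.isChain_reverse]; exact h1) (by rw [List.isChain_reverse]; exact h2)
    (by simpa using h3)
  simpa [List.reverse_prefix] using this

variable {V A : Type}

def R (Q : BQuiv V A) (a b : A) : Prop := Q.src a = Q.tgt b ∧ ¬ Q.rel a b

/-- nonempty permitted paths from `j` to `i` as lists -/
def S (Q : BQuiv V A) (i j : V) : Set (List A) :=
  {l | l ≠ [] ∧ l.IsChain (R Q) ∧ (∀ a ∈ l.head?, Q.tgt a = i) ∧ (∀ a ∈ l.getLast?, Q.src a = j)}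

theorem chain_iff (Q : BQuiv V A) (l : List A) : l.IsChain (R Q) ↔
    l.IsChain (fun a b => Q.src a = Q.tgt b) ∧ l.IsChain (fun a b => ¬ Q.rel a b) := by
  induction l with
  | nil => simp
  | cons a t ih => simp only [List.isChain_cons, ih, R]; grind

theorem exists_bound {Q : BQuiv V A} (hQ : Q.IsGentle) :
    ∃ m, ∀ l : List A, l.IsChain (R Q) → l.length < m := by
  obtain ⟨m, _, hm⟩ := hQ.admissible
  refine ⟨m, fun l hl => ?_⟩
  by_contra! h
  have h2 := (chain_iff Q _).1 (hl.take m)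
  exact hm (l.take m) (by simp [h]) h2.1 h2.2

theorem S_finite [Finite A] {Q : BQuiv V A} (hQ : Q.IsGentle) (i j : V) : (S Q i j).Finite := by
  obtain ⟨m, hm⟩ := exists_bound hQ
  exact (List.finite_length_lt A m).subset fun l hl => hm l hl.2.1

theorem no_cycle {Q : BQuiv V A} (hQ : Q.IsGentle) (w : List A) (hw : w ≠ [])
    (hc : w.IsChain (R Q)) (h : ∀ x ∈ w.getLast?, ∀ y ∈ w.head?, R Q x y) : False := by
  obtain ⟨m, hm⟩ := exists_bound hQ
  have hk : ∀ k, (List.replicate k w).flatten.IsChain (R Q) := by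
    intro k
    rw [List.isChain_flatten (by simp [List.mem_replicate]; tauto)]
    refine ⟨fun l hl => by rw [List.eq_of_mem_replicate hl]; exact hc, ?_⟩
    exact List.isChain_replicate_of_rel _ h
  have := hm _ (hk m)
  have h1 : 1 ≤ w.length := List.length_pos_iff.2 hw
  simp at this
  nlinarith

theorem ends {w : List A} (hw : w ≠ []) : ∃ x y, w.head? = some x ∧ w.getLast? = some y :=
  ⟨_, _, List.head?_eq_some_head hw, List.getLast?_eq_some_getLast hw⟩

theorem closed_rel {Q : BQuiv V A} (hQ : Q.IsGentle) {i : V} {w : List A} (hw : w ∈ S Q i i)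
    {x y : A} (hx : w.head? = some x) (hy : w.getLast? = some y) : Q.rel y x := by
  by_contra h
  obtain ⟨h0, h1, h2, h3⟩ := hw
  apply no_cycle hQ w h0 h1
  simp only [hx, hy, Option.mem_def, Option.some.injEq] at *
  rintro _ rfl _ rfl
  exact ⟨by rw [h2 _ rfl, h3 _ rfl], h⟩

theorem suffix_eq {Q : BQuiv V A} (hQ : Q.IsGentle) {i : V} {v w : List A} (hw : w ∈ S Q i i)
    (hu : v ++ w ∈ S Q i i) : v = [] := by
  by_contra hv
  obtain ⟨x, y, hx, hy⟩ := ends hw.1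
  obtain ⟨a, b, ha, hb⟩ := ends hv
  have hch := List.isChain_append.1 hu.2.1
  have hbx := hch.2.2 b hb x hx
  have hxi := hw.2.2.1 x hx
  have hai := hu.2.2.1 a (by simp [ha])
  have hvS : v ∈ S Q i i := by
    refine ⟨hv, hch.1, ?_, ?_⟩
    · intro c hc; rw [ha] at hc; cases hc; exact hai
    · intro c hc; rw [hb] at hc; cases hc; rw [hbx.1, hxi]
  have r1 := closed_rel hQ hvS ha hb
  have r2 := closed_rel hQ hw hx hy
  have r3 := closed_rel hQ hu (x := a) (y := y) (by simp [ha]) (by simp [hy])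
  have := hQ.unique_rel_pre y a x r3 r2
  subst this
  exact hbx.2 r1

theorem R_pre {Q : BQuiv V A} (hQ : Q.IsGentle) (a b c : A) (h : R Q a b) (h' : R Q a c) : b = c :=
  hQ.unique_nonrel_pre a b c h.1 h'.1 h.2 h'.2

theorem R_post {Q : BQuiv V A} (hQ : Q.IsGentle) (a b c : A) (h : R Q b a) (h' : R Q c a) : b = c :=
  hQ.unique_nonrel_post a b c h.1 h'.1 h.2 h'.2

theorem closed_unique {Q : BQuiv V A} (hQ : Q.IsGentle) {i : V} {u w : List A}
    (hu : u ∈ S Q i i) (hw : w ∈ S Q i i) : u = w := by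
  obtain ⟨x, y, hx, hy⟩ := ends hw.1
  obtain ⟨a, b, ha, hb⟩ := ends hu.1
  have r1 := closed_rel hQ hw hx hy
  have r2 := closed_rel hQ hu ha hb
  by_cases hby : b = y
  · rcases suffix_of_last (R_post hQ) u w hu.2.1 hw.2.1 (by rw [hb, hy, hby]) with ⟨v, h⟩ | ⟨v, h⟩
    · subst h; rw [suffix_eq hQ hu hw]; rfl
    · subst h; rw [suffix_eq hQ hw hu]; rfl
  · exfalso
    have e1 := hw.2.2.1 x hx
    have e2 := hw.2.2.2 y hy
    have e3 := hu.2.2.1 a ha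
    have e4 := hu.2.2.2 b hb
    have k1 : R Q b x := ⟨by rw [e4, e1], fun h => hby (hQ.unique_rel_post x b y h r1)⟩
    have k2 : R Q y a := ⟨by rw [e2, e3], fun h => hby (hQ.unique_rel_post a b y r2 h)⟩
    apply no_cycle hQ (u ++ w) (by simp [hw.1])
    · rw [List.isChain_append]
      refine ⟨hu.2.1, hw.2.1, ?_⟩
      rw [hx, hb]; rintro _ ⟨⟩ _ ⟨⟩; exact k1
    · simp only [List.getLast?_append, List.head?_append, hy, ha]
      rintro _ ⟨⟩ _ ⟨⟩; exact k2

/-- Cartan entry as a count of lists -/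
theorem cartan_eq (Q : BQuiv V A) (i j : V) : cartan Q i j =
    (({l | l.IsChain (R Q) ∧ (l = [] → i = j) ∧ (∀ a ∈ l.head?, Q.tgt a = i) ∧
      (∀ a ∈ l.getLast?, Q.src a = j)} : Set (List A)).ncard : ℤ) := by
  unfold cartan
  rw [← Nat.card_coe_set_eq]
  congr 1
  refine Nat.card_congr ⟨fun p => ⟨p.1.arrows, ?_⟩, fun l => ⟨⟨j, l.1, ?_, ?_⟩, ?_, rfl, ?_⟩, ?_, ?_⟩
  · obtain ⟨⟨b, l, hc, hb⟩, hp, rfl, rfl⟩ := p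
    refine ⟨(chain_iff Q l).2 ⟨hc, hp⟩, ?_, ?_, hb⟩
    · rintro rfl; rfl
    · intro a ha; simp only [Option.mem_def] at ha; simp [Path.tgtV, ha]
  · exact ((chain_iff Q _).1 l.2.1).1
  · exact l.2.2.2.2
  · exact ((chain_iff Q _).1 l.2.1).2
  · obtain ⟨l, h1, h2, h3, h4⟩ := l
    cases l with
    | nil => simpa [Path.tgtV] using (h2 rfl).symm
    | cons a t => simpa [Path.tgtV] using h3
  · rintro ⟨⟨b, l, hc, hb⟩, hp, rfl, rfl⟩; rfl
  · intro l; rfl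

theorem cartan_ne (Q : BQuiv V A) {i j : V} (h : i ≠ j) : cartan Q i j = ((S Q i j).ncard : ℤ) := by
  rw [cartan_eq]
  congr 2
  ext l
  simp only [S, Set.mem_setOf_eq]
  tauto

theorem cartan_self [Finite A] {Q : BQuiv V A} (hQ : Q.IsGentle) (i : V) :
    cartan Q i i = ((S Q i i).ncard : ℤ) + 1 := by
  rw [cartan_eq]
  have : ([] : List A) ∉ S Q i i := fun h => h.1 rfl
  have h2 := Set.ncard_insert_of_notMem this (S_finite hQ i i)
  rw [← Nat.cast_succ, ← Nat.add_one, ← h2]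
  congr 2
  ext l
  by_cases hl : l = []
  · subst hl; simp
  · simp [S, hl]

theorem cross_of_mem {Q : BQuiv V A} {i : V} {w : List A} (hw : w ∈ S Q i i) :
    ∃ p : BQuiv.Path Q, p.Permitted ∧ ∃ n m : ℕ, n ≤ p.arrows.length ∧
          m ≤ p.arrows.length ∧ n ≠ m ∧ p.vertexAt n = i ∧ p.vertexAt m = i := by
  obtain ⟨h0, h1, h2, h3⟩ := hw
  have h1' := (chain_iff Q w).1 h1
  obtain ⟨x, y, hx, hy⟩ := ends h0
  refine ⟨⟨i, w, h1'.1, h3⟩, h1'.2, 0, w.length, by simp, le_rfl, ?_, ?_, ?_⟩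
  · have := List.length_pos_iff.2 h0; omega
  · simpa [Path.vertexAt, hx] using h2 x hx
  · simp [Path.vertexAt]

theorem mem_of_cross {Q : BQuiv V A} {i : V} (p : BQuiv.Path Q) (hp : p.Permitted) (n m : ℕ)
    (hm : m ≤ p.arrows.length) (hnm : n < m) (h1 : p.vertexAt n = i)
    (h2 : p.vertexAt m = i) : (p.arrows.drop n).take (m - n) ∈ S Q i i := by
  obtain ⟨b, l, hc, hb⟩ := p
  simp only [Path.vertexAt, List.head?_drop] at *
  have hch : l.IsChain (R Q) := (chain_iff Q l).2 ⟨hc, hp⟩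
  refine ⟨?_, (hch.drop n).take _, ?_, ?_⟩
  · intro h
    have := congrArg List.length h
    simp at this; omega
  · intro a ha
    rw [List.head?_take, if_neg (by omega), List.head?_drop] at ha
    rw [Option.mem_def] at ha
    simpa [ha] using h1
  · intro a ha
    have hlen : (List.take (m - n) (List.drop n l)).length = m - n := by simp; omega
    rw [Option.mem_def, List.getLast?_eq_getElem?, hlen, List.getElem?_take_of_lt (by omega),
      List.getElem?_drop, show n + (m - n - 1) = m - 1 by omega] at ha
    by_cases hml : m = l.length
    · subst hml
      rw [← List.getLast?_eq_getElem?] at ha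
      have := hb a ha
      simp at h2
      rw [this, h2]
    · have hlt : m < l.length := by omega
      have := List.isChain_iff_getElem.1 hc (m - 1) (by omega)
      rw [List.getElem?_eq_getElem (by omega)] at ha
      cases ha
      rw [this]
      simp only [show m - 1 + 1 = m by omega]
      simpa [List.getElem?_eq_getElem hlt] using h2

def K (Q : BQuiv V A) (j : V) (w : List A) : Set ℕ :=
  {k | 0 < k ∧ k < w.length ∧ ∀ a ∈ w[k]?, Q.tgt a = j}

theorem K_finite (Q : BQuiv V A) (j : V) (w : List A) : (K Q j w).Finite :=
  (Set.finite_lt_nat w.length).subset fun _ h => h.2.1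

/-- count of paths from `i` to `j` -/
theorem count_from [Finite A] {Q : BQuiv V A} (hQ : Q.IsGentle) {i j : V} (hij : i ≠ j)
    {w : List A} (hw : w ∈ S Q i i) : ∃ c, (S Q j i).ncard = 2 * c + (K Q j w).ncard := by
  obtain ⟨x, y, hx, hy⟩ := ends hw.1
  have ryx := closed_rel hQ hw hx hy
  have hwx := hw.2.2.1 x hx
  set S1 : Set (List A) := {l ∈ S Q j i | l.getLast? ≠ some y} with hS1
  have hfin : S1.Finite := (S_finite hQ j i).subset (Set.sep_subset _ _)
  have key : S Q j i = (S1 ∪ (fun l => l ++ w) '' S1) ∪ (fun k => w.drop k) '' (K Q j w) := by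
    ext l
    constructor
    · intro hl
      by_cases hly : l.getLast? = some y
      · rcases suffix_of_last (R_post hQ) l w hl.2.1 hw.2.1 (by rw [hly, hy]) with ⟨v, h⟩ | ⟨v, h⟩
        · right
          refine ⟨v.length, ⟨?_, ?_, ?_⟩, ?_⟩
          · rw [List.length_pos_iff]
            rintro rfl
            simp only [List.nil_append] at h
            subst h
            exact hij ((hw.2.2.1 x hx).symm.trans (hl.2.2.1 x hx))
          · rw [← h]; have := List.length_pos_iff.2 hl.1; simp; omega
          · intro a ha
            rw [← List.head?_drop, ← h] at ha
            simp only [List.drop_left] at ha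
            exact hl.2.2.1 a ha
          · simp [← h]
        · left; right
          subst h
          have hch := List.isChain_append.1 hl.2.1
          have hv : v ≠ [] := by
            rintro rfl
            exact hij ((hw.2.2.1 x hx).symm.trans (hl.2.2.1 x (by simpa using hx)))
          refine ⟨v, ⟨⟨hv, hch.1, ?_, ?_⟩, ?_⟩, rfl⟩
          · intro a ha
            exact hl.2.2.1 a (by rw [Option.mem_def] at ha; simp [ha])
          · intro a ha
            rw [(hch.2.2 a ha x hx).1, hwx]
          · intro ha
            exact (hch.2.2 y ha x hx).2 ryx
      · left; left; exact ⟨hl, hly⟩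
    · rintro ((h | ⟨v, h, rfl⟩) | ⟨k, hk, rfl⟩)
      · exact h.1
      · obtain ⟨⟨h0, h1, h2, h3⟩, h4⟩ := h
        refine ⟨by simp [h0], ?_, ?_, ?_⟩
        · rw [List.isChain_append]
          refine ⟨h1, hw.2.1, ?_⟩
          rw [hx]
          rintro a ha _ ⟨⟩
          refine ⟨by rw [h3 a ha, hwx], fun hr => h4 ?_⟩
          rw [← hQ.unique_rel_post x a y hr ryx]; exact ha
        · obtain ⟨a, b, ha, hb⟩ := ends h0
          simpa [ha] using h2
        · simpa [hy] using hw.2.2.2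
      · obtain ⟨h1, h2, h3⟩ := hk
        refine ⟨by simp; omega, hw.2.1.drop k, ?_, ?_⟩
        · simpa only [List.head?_drop] using h3
        · intro a ha
          simp only [List.getLast?_drop, if_neg (not_le.2 h2)] at ha
          exact hw.2.2.2 a ha
  refine ⟨S1.ncard, ?_⟩
  rw [key, Set.ncard_union_eq ?_ (hfin.union (hfin.image _)) ((K_finite Q j w).image _),
    Set.ncard_union_eq ?_ hfin (hfin.image _), Set.ncard_image_of_injective _
      (List.append_left_injective w), Set.ncard_image_of_injOn]
  · ring
  · intro a ha b hb hab
    have := congrArg List.length hab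
    have h1 := ha.2.1
    have h2 := hb.2.1
    simp at this; omega
  · rw [Set.disjoint_left]
    rintro _ h ⟨v, _, rfl⟩
    exact h.2 (by simp [hy])
  · rw [Set.disjoint_left]
    rintro l h ⟨k, hk, rfl⟩
    rcases h with h | ⟨v, _, h⟩
    · exact h.2 (by simp only [List.getLast?_drop, if_neg (not_le.2 hk.2.1), hy])
    · have := congrArg List.length h
      have h1 := hk.1
      have h2 := hk.2.1
      simp at this; omega

/-- count of paths from `j` to `i` -/
theorem count_to [Finite A] {Q : BQuiv V A} (hQ : Q.IsGentle) {i j : V} (hij : i ≠ j)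
    {w : List A} (hw : w ∈ S Q i i) : ∃ c, (S Q i j).ncard = 2 * c + (K Q j w).ncard := by
  obtain ⟨x, y, hx, hy⟩ := ends hw.1
  have ryx := closed_rel hQ hw hx hy
  have hwy := hw.2.2.2 y hy
  set S1 : Set (List A) := {l ∈ S Q i j | l.head? ≠ some x} with hS1
  have hfin : S1.Finite := (S_finite hQ i j).subset (Set.sep_subset _ _)
  have key : S Q i j = (S1 ∪ (fun l => w ++ l) '' S1) ∪ (fun k => w.take k) '' (K Q j w) := by
    ext l
    constructor
    · intro hl
      by_cases hly : l.head? = some x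
      · rcases prefix_of_head (R_pre hQ) l w hl.2.1 hw.2.1 (by rw [hly, hx]) with ⟨v, h⟩ | ⟨v, h⟩
        · right
          have hv : v ≠ [] := by
            rintro rfl
            simp only [List.append_nil] at h
            subst h
            exact hij ((hw.2.2.2 y hy).symm.trans (hl.2.2.2 y hy))
          refine ⟨l.length, ⟨List.length_pos_iff.2 hl.1, ?_, ?_⟩, ?_⟩
          · rw [← h]; have := List.length_pos_iff.2 hv; simp; omega
          · intro a ha
            rw [← List.head?_drop, ← h] at ha
            simp only [List.drop_left] at ha
            obtain ⟨b, c, hb, hc⟩ := ends hl.1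
            have hch := hw.2.1
            rw [← h] at hch
            rw [← ((List.isChain_append.1 hch).2.2 c hc a ha).1]
            exact hl.2.2.2 c hc
          · simp [← h]
        · left; right
          subst h
          have hch := List.isChain_append.1 hl.2.1
          have hv : v ≠ [] := by
            rintro rfl
            exact hij ((hw.2.2.2 y hy).symm.trans (hl.2.2.2 y (by simpa using hy)))
          refine ⟨v, ⟨⟨hv, hch.2.1, ?_, ?_⟩, ?_⟩, rfl⟩
          · intro a ha
            rw [← (hch.2.2 y hy a ha).1, hwy]
          · intro a ha
            exact hl.2.2.2 a (by rw [Option.mem_def] at ha; simp [ha])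
          · intro ha
            exact (hch.2.2 y hy x ha).2 ryx
      · left; left; exact ⟨hl, hly⟩
    · rintro ((h | ⟨v, h, rfl⟩) | ⟨k, hk, rfl⟩)
      · exact h.1
      · obtain ⟨⟨h0, h1, h2, h3⟩, h4⟩ := h
        refine ⟨by simp [h0], ?_, ?_, ?_⟩
        · rw [List.isChain_append]
          refine ⟨hw.2.1, h1, ?_⟩
          rw [hy]
          rintro _ ⟨⟩ a ha
          refine ⟨by rw [h2 a ha, hwy], fun hr => h4 ?_⟩
          rw [← hQ.unique_rel_pre y a x hr ryx]; exact ha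
        · simpa [hx] using hw.2.2.1
        · obtain ⟨a, b, ha, hb⟩ := ends h0
          simpa [hb] using h3
      · obtain ⟨h1, h2, h3⟩ := hk
        refine ⟨?_, hw.2.1.take k, ?_, ?_⟩
        · intro h
          have := congrArg List.length h
          rw [List.length_take, List.length_nil] at this
          omega
        · rw [List.head?_take, if_neg (by omega)]
          exact hw.2.2.1
        · intro a ha
          have hch := hw.2.1
          rw [← List.take_append_drop k w] at hch
          have := (List.isChain_append.1 hch).2.2 a ha w[k] (by simp [List.head?_drop, h2])
          rw [this.1]
          exact h3 _ (by simp [h2])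
  refine ⟨S1.ncard, ?_⟩
  rw [key, Set.ncard_union_eq ?_ (hfin.union (hfin.image _)) ((K_finite Q j w).image _),
    Set.ncard_union_eq ?_ hfin (hfin.image _), Set.ncard_image_of_injective _
      (List.append_right_injective w), Set.ncard_image_of_injOn]
  · ring
  · intro a ha b hb hab
    have := congrArg List.length hab
    have h1 := ha.2.1
    have h2 := hb.2.1
    simp at this; omega
  · rw [Set.disjoint_left]
    rintro _ h ⟨v, _, rfl⟩
    exact h.2 (by simp [hx])
  · rw [Set.disjoint_left]
    rintro l h ⟨k, hk, rfl⟩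
    rcases h with h | ⟨v, _, h⟩
    · exact h.2 (by rw [List.head?_take, if_neg (by have := hk.1; omega), hx])
    · have := congrArg List.length h
      have h1 := hk.1
      have h2 := hk.2.1
      simp at this; omega

end GentleAux

/-- Let `(Q, I)` be a gentle bound quiver with Cartan matrix `C`.
Then for every vertex `i`: `C_{ii} = 2` if some permitted path of `(Q, I)` self-crosses
at `i` (passes through `i` twice), and `C_{ii} = 1` otherwise.  Moreover, if
`C_{ii} = 2` then `C_{ij} + C_{ji}` is even for every vertex `j` (so the Euler form
`x ↦ xᵀ C x` is Cox-regular in the basis of indecomposable projectives). -/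
theorem stmt12 {V A : Type} [Fintype V] [Fintype A] (Q : BQuiv V A) (hQ : Q.IsGentle) :
    (∀ i : V,
      ((∃ p : BQuiv.Path Q, p.Permitted ∧ ∃ n m : ℕ, n ≤ p.arrows.length ∧
          m ≤ p.arrows.length ∧ n ≠ m ∧ p.vertexAt n = i ∧ p.vertexAt m = i) →
        cartan Q i i = 2) ∧
      ((¬ ∃ p : BQuiv.Path Q, p.Permitted ∧ ∃ n m : ℕ, n ≤ p.arrows.length ∧
          m ≤ p.arrows.length ∧ n ≠ m ∧ p.vertexAt n = i ∧ p.vertexAt m = i) →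
        cartan Q i i = 1)) ∧
    (∀ i j : V, cartan Q i i = 2 → Even (cartan Q i j + cartan Q j i)) := by
  refine ⟨fun i => ⟨?_, ?_⟩, ?_⟩
  · rintro ⟨p, hp, n, m, hn, hm, hnm, h1, h2⟩
    have hne : ∃ w, w ∈ GentleAux.S Q i i := by
      rcases lt_or_gt_of_ne hnm with h | h
      · exact ⟨_, GentleAux.mem_of_cross p hp n m hm h h1 h2⟩
      · exact ⟨_, GentleAux.mem_of_cross p hp m n hn h h2 h1⟩
    obtain ⟨w, hw⟩ := hne
    have : GentleAux.S Q i i = {w} := by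
      ext u
      exact ⟨fun hu => GentleAux.closed_unique hQ hu hw, fun hu => by
        rw [Set.mem_singleton_iff.1 hu]; exact hw⟩
    rw [GentleAux.cartan_self hQ, this]
    simp
  · intro h
    have : GentleAux.S Q i i = ∅ := by
      rw [Set.eq_empty_iff_forall_notMem]
      exact fun w hw => h (GentleAux.cross_of_mem hw)
    rw [GentleAux.cartan_self hQ, this]
    simp
  · intro i j hii
    by_cases hij : i = j
    · subst hij; exact ⟨_, rfl⟩
    have hne : (GentleAux.S Q i i).Nonempty := by
      rw [Set.nonempty_iff_ne_empty]
      intro h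
      rw [GentleAux.cartan_self hQ, h] at hii
      simp at hii
    obtain ⟨w, hw⟩ := hne
    obtain ⟨c, hc⟩ := GentleAux.count_from hQ hij hw
    obtain ⟨d, hd⟩ := GentleAux.count_to hQ hij hw
    rw [GentleAux.cartan_ne Q hij, GentleAux.cartan_ne Q (Ne.symm hij), hc, hd]
    refine ⟨(c : ℤ) + d + (GentleAux.K Q j w).ncard, ?_⟩
    push_cast
    ring
end

section
/- Let (Q,I) be a gentle bound quiver containing no full cycle (equivalently, such that the gentle algebra kQ/I has finite global dimension), with Cartan matrix C and forbidden marked ribbon graph ▲(Q,I) = (Ḡ,≤̄,σ̄). Then C is invertible over ℤ (det C = ±1) and C^{-1} + C^{-tr} = Inc(Ḡ,σ̄)·Inc(Ḡ,σ̄)^tr. -/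
set_option autoImplicit false

attribute [local instance] Classical.propDecidable

namespace BQuiv

variable {V A : Type}

/-- A full cycle: a non-trivial closed forbidden path without repeated arrows whose
wrap-around length-two subpath is again a relation. -/
def IsFullCycle (Q : BQuiv V A) (p : Path Q) : Prop :=
  p.arrows ≠ [] ∧ p.Forbidden ∧ p.tgtV = p.base ∧ p.arrows.Nodup ∧
  ∀ a b, p.arrows.getLast? = some a → p.arrows.head? = some b → Q.rel a b

/-- The type of forbidden threads of `(Q, I)`: the vertices of the forbidden marked
ribbon graph `▲(Q, I)`. -/
def FThread (Q : BQuiv V A) : Type := {p : Path Q // IsForbThread Q p}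

/-- The type of split forbidden threads of `(Q, I)`: the half-edges of `▲(Q, I)`. -/
def FSplit (Q : BQuiv V A) : Type := {x : FThread Q × ℕ // x.2 ≤ x.1.1.arrows.length}

/-- The forbidden thread over which a split forbidden thread lies. -/
def FSplit.thread {Q : BQuiv V A} (x : FSplit Q) : FThread Q := x.1.1

/-- The center of a split forbidden thread, realizing the bijection between the edges
of `▲(Q, I)` and the vertices of `Q`. -/
def FSplit.center {Q : BQuiv V A} (x : FSplit Q) : V := x.1.1.1.vertexAt x.1.2

/-- The sign `σ̄` of a split forbidden thread `h̄^θ_t`, namely `(-1) ^ (ℓ^θ - t)`,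
is positive precisely when `ℓ^θ - t` is even. -/
def FSplit.posSign {Q : BQuiv V A} (x : FSplit Q) : Prop :=
  Even (x.1.1.1.arrows.length - x.1.2)

/-- The incidence matrix `Inc(Ḡ, σ̄)` of the bidirected forbidden marked ribbon graph
`▲(Q, I)`: edges are identified with `Q₀` via centers, vertices with the forbidden
threads (transported along a bijection `e` with a finite index type `W`), and each
half-edge (split forbidden thread) contributes its sign `σ̄`. -/
noncomputable def fInc (Q : BQuiv V A) {W : Type} (e : W ≃ FThread Q) : Matrix V W ℤ :=
  fun i w =>
    (Nat.card {x : FSplit Q // x.center = i ∧ x.thread = e w ∧ x.posSign} : ℤ) -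
    (Nat.card {x : FSplit Q // x.center = i ∧ x.thread = e w ∧ ¬ x.posSign} : ℤ)

end BQuiv

open BQuiv
open scoped Matrix



namespace BQuiv
variable {V A : Type}

theorem aux_nodup (Q : BQuiv V A) (hQ : Q.IsGentle)
    (hfc : ¬ ∃ p : BQuiv.Path Q, IsFullCycle Q p) (l : List A) (hl : l.IsChain Q.rel) :
    l.Nodup := by
  induction l with
  | nil => simp
  | cons a t ih =>
    have ht := ih hl.tail
    rw [List.nodup_cons]
    refine ⟨fun hat => hfc ?_, ht⟩
    obtain ⟨s, u, rfl⟩ := List.append_of_mem hat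
    have hch : ((a :: s) ++ (a :: u)).IsChain Q.rel := by simpa using hl
    rw [List.isChain_append] at hch
    obtain ⟨h1, -, h3⟩ := hch
    have h4 : ∀ x, (a :: s).getLast? = some x → Q.rel x a := by
      intro x hx
      exact h3 x (by simpa using hx) a (by simp)
    have has : a ∉ s := by
      intro h
      rw [List.nodup_append] at ht
      exact ht.2.2 a h a (by simp) rfl
    refine ⟨⟨Q.tgt a, a :: s, h1.imp (fun x y h => hQ.rel_comp x y h), ?_⟩, ?_, ?_, ?_, ?_, ?_⟩
    · intro x hx
      exact hQ.rel_comp _ _ (h4 x hx)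
    · simp
    · exact h1
    · simp [Path.tgtV]
    · rw [List.nodup_cons]
      rw [List.nodup_append] at ht
      exact ⟨has, ht.1⟩
    · intro x y hx hy
      simp at hy
      subst hy
      exact h4 x hx

theorem aux_unique_right (r : A → A → Prop) (hr : ∀ a b b', r a b → r a b' → b = b') :
    ∀ (l l' : List A) (a : A), (a :: l).IsChain r → (a :: l').IsChain r →
    (∀ x c, (a :: l).getLast? = some x → ¬ r x c) →
    (∀ x c, (a :: l').getLast? = some x → ¬ r x c) → l = l' := by
  intro l
  induction l with
  | nil =>
    intro l' a h1 h2 h3 h4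
    cases l' with
    | nil => rfl
    | cons b t => exact absurd (List.isChain_cons_cons.1 h2).1 (h3 a b (by simp))
  | cons b t ih =>
    intro l' a h1 h2 h3 h4
    cases l' with
    | nil => exact absurd (List.isChain_cons_cons.1 h1).1 (h4 a b (by simp))
    | cons b' t' =>
      rw [List.isChain_cons_cons] at h1 h2
      obtain rfl := hr a b b' h1.1 h2.1
      rw [ih t' b h1.2 h2.2 (by simpa [List.getLast?_cons_cons] using h3)
        (by simpa [List.getLast?_cons_cons] using h4)]

/-- maximal nonempty forbidden lists -/
def MaxF (Q : BQuiv V A) (l : List A) : Prop :=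
  l.IsChain Q.rel ∧ (∀ a b, l.head? = some b → ¬ Q.rel a b) ∧
    (∀ a c, l.getLast? = some a → ¬ Q.rel a c)

theorem aux_unique (Q : BQuiv V A) (hQ : Q.IsGentle) (l₁ r₁ l₂ r₂ : List A) (b : A)
    (h1 : MaxF Q (l₁ ++ b :: r₁)) (h2 : MaxF Q (l₂ ++ b :: r₂)) : l₁ = l₂ ∧ r₁ = r₂ := by
  obtain ⟨c1, a1, z1⟩ := h1
  obtain ⟨c2, a2, z2⟩ := h2
  constructor
  · have := aux_unique_right (fun x y => Q.rel y x) (fun a b b' => hQ.unique_rel_post a b b')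
      l₁.reverse l₂.reverse b
      (by
        have := List.isChain_reverse.2 (show (l₁ ++ [b]).IsChain Q.rel from by
          rw [← List.singleton_append, ← List.append_assoc] at c1
          exact c1.left_of_append)
        simpa [Function.flip_def] using this)
      (by
        have := List.isChain_reverse.2 (show (l₂ ++ [b]).IsChain Q.rel from by
          rw [← List.singleton_append, ← List.append_assoc] at c2
          exact c2.left_of_append)
        simpa [Function.flip_def] using this)
      (by
        intro x c hx
        apply a1 c x
        rw [← hx, ← List.head?_reverse]
        cases l₁ <;> simp)
      (by
        intro x c hx
        apply a2 c x
        rw [← hx, ← List.head?_reverse]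
        cases l₂ <;> simp)
    simpa using this
  · exact aux_unique_right Q.rel hQ.unique_rel_pre r₁ r₂ b c1.right_of_append c2.right_of_append
      (by intro x c hx; apply z1 x c; rw [List.getLast?_append, hx]; rfl)
      (by intro x c hx; apply z2 x c; rw [List.getLast?_append, hx]; rfl)

theorem aux_exists [Fintype A] (Q : BQuiv V A) (hQ : Q.IsGentle)
    (hfc : ¬ ∃ p : BQuiv.Path Q, IsFullCycle Q p) (b : A) :
    ∃ l : List A, b ∈ l ∧ MaxF Q l := by
  have hfin : {l : List A | b ∈ l ∧ l.IsChain Q.rel}.Finite :=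
    (List.finite_length_le A (Fintype.card A)).subset (fun l hl =>
      (aux_nodup Q hQ hfc l hl.2).length_le_card)
  obtain ⟨l, hl, hmax⟩ := Set.exists_max_image _ List.length hfin ⟨[b], by simp⟩
  refine ⟨l, hl.1, hl.2, ?_, ?_⟩
  · intro a c hc hr
    have := hmax (a :: l) ⟨by simp [hl.1], by
      rw [List.isChain_cons]
      exact ⟨by simpa [hc] using hr, hl.2⟩⟩
    simp at this
  · intro a c hc hr
    have := hmax (l ++ [c]) ⟨by simp [hl.1], by
      rw [List.isChain_append]
      refine ⟨hl.2, by simp, ?_⟩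
      intro x hx y hy
      simp at hy
      subst hy
      rw [hc] at hx
      simp at hx
      subst hx
      exact hr⟩
    simp at this

theorem Path.ext' {Q : BQuiv V A} (p q : Path Q) (h1 : p.arrows = q.arrows) (h2 : p.base = q.base) :
    p = q := by
  cases p; cases q; simp at h1 h2; subst h1 h2; rfl

theorem thread_max {Q : BQuiv V A} (hQ : Q.IsGentle) (p : FThread Q) (h : p.1.arrows ≠ []) :
    MaxF Q p.1.arrows := by
  rcases p.2 with ⟨-, h1, h2, h3⟩ | h'
  · exact ⟨h1, fun a b hb hr => h2 a b hb (hQ.rel_comp _ _ hr) hr,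
      fun a b hb hr => h3 a b hb (hQ.rel_comp _ _ hr) hr⟩
  · exact absurd h'.1 h

theorem thread_chain {Q : BQuiv V A} (p : FThread Q) : p.1.arrows.IsChain Q.rel := by
  rcases p.2 with ⟨-, h1, h2, h3⟩ | h'
  · exact h1
  · rw [h'.1]; simp

theorem thread_finite [Fintype V] [Fintype A] (Q : BQuiv V A) (hQ : Q.IsGentle)
    (hfc : ¬ ∃ p : BQuiv.Path Q, IsFullCycle Q p) : Finite (FThread Q) := by
  have : Finite {l : List A | l.length ≤ Fintype.card A} := List.finite_length_le A (Fintype.card A)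
  refine Finite.of_injective (β := V × {l : List A | l.length ≤ Fintype.card A})
    (fun p => (p.1.base, ⟨p.1.arrows,
      (aux_nodup Q hQ hfc _ (thread_chain p)).length_le_card⟩)) ?_
  intro p q h
  simp at h
  exact Subtype.ext (Path.ext' _ _ h.2 h.1)

/-- positions of arrows in threads -/
def pos {Q : BQuiv V A} {W : Type} (e : W ≃ FThread Q) (s : Σ w : W, Fin (e w).1.arrows.length) : A :=
  (e s.1).1.arrows[s.2]

theorem pos_bij [Fintype A] (Q : BQuiv V A) (hQ : Q.IsGentle)
    (hfc : ¬ ∃ p : BQuiv.Path Q, IsFullCycle Q p) {W : Type} (e : W ≃ FThread Q) :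
    Function.Bijective (pos e) := by
  constructor
  · rintro ⟨w, n, hn⟩ ⟨w', n', hn'⟩ h
    simp only [pos, Fin.getElem_fin] at h
    have hne : (e w).1.arrows ≠ [] := by intro h0; simp [h0] at hn
    have hne' : (e w').1.arrows ≠ [] := by intro h0; simp [h0] at hn'
    have m1 := thread_max hQ (e w) hne
    have m2 := thread_max hQ (e w') hne'
    have d1 : (e w).1.arrows = (e w).1.arrows.take n ++ (e w).1.arrows[n] :: (e w).1.arrows.drop (n+1) := by
      simp
    have d2 : (e w').1.arrows = (e w').1.arrows.take n' ++ (e w).1.arrows[n] :: (e w').1.arrows.drop (n'+1) := by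
      rw [h]; simp
    have := aux_unique Q hQ _ _ _ _ _ (d1 ▸ m1) (d2 ▸ m2)
    have ha : (e w).1.arrows = (e w').1.arrows := by
      rw [d1, d2, this.1, this.2]
    have hl : n = n' := by
      have := congrArg List.length this.1
      simp at this
      omega
    have hb : (e w).1.base = (e w').1.base := by
      have h1 := (e w).1.base_eq _ (List.getLast?_eq_some_getLast hne)
      have h2 := (e w').1.base_eq _ (List.getLast?_eq_some_getLast hne')
      rw [← h1, ← h2]
      simp [ha]
    have : w = w' := e.injective (Subtype.ext (Path.ext' _ _ ha hb))
    subst this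
    subst hl
    rfl
  · intro b
    obtain ⟨l, hb, hm⟩ := aux_exists Q hQ hfc b
    have hne : l ≠ [] := List.ne_nil_of_mem hb
    let p : Path Q := ⟨Q.src (l.getLast hne), l, hm.1.imp (fun x y h => hQ.rel_comp x y h), by
      intro a ha
      rw [List.getLast?_eq_some_getLast hne] at ha
      simp at ha
      rw [ha]⟩
    let t : FThread Q := ⟨p, Or.inl ⟨hne, hm.1, fun a b h _ => hm.2.1 a b h, fun a b h _ => hm.2.2 a b h⟩⟩
    obtain ⟨n, hn, h⟩ := List.getElem_of_mem hb
    have ht : (e (e.symm t)).1.arrows = l := by rw [e.apply_symm_apply]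
    refine ⟨⟨e.symm t, n, by rw [ht]; exact hn⟩, ?_⟩
    simp only [pos, Fin.getElem_fin]
    rw [← h]
    simp only [ht]

theorem rel_pos (Q : BQuiv V A) (hQ : Q.IsGentle) (t : FThread Q) (n : ℕ)
    (hn : n < t.1.arrows.length) (c : A) :
    Q.rel (t.1.arrows[n]) c ↔ ∃ h : n + 1 < t.1.arrows.length, c = t.1.arrows[n+1] := by
  have hc := thread_chain t
  constructor
  · intro hr
    by_cases h : n + 1 < t.1.arrows.length
    · exact ⟨h, hQ.unique_rel_pre _ _ _ hr (List.isChain_iff_getElem.1 hc n h)⟩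
    · exfalso
      have hne : t.1.arrows ≠ [] := by intro h0; simp [h0] at hn
      refine (thread_max hQ t hne).2.2 _ c ?_ hr
      rw [List.getLast?_eq_getElem?]
      have : t.1.arrows.length - 1 = n := by omega
      rw [this]; simp [hn]
  · rintro ⟨h, rfl⟩
    exact List.isChain_iff_getElem.1 hc n h

theorem vertexAt_lt {Q : BQuiv V A} (p : Path Q) (n : ℕ) (hn : n < p.arrows.length) :
    p.vertexAt n = Q.tgt p.arrows[n] := by
  simp [Path.vertexAt, List.head?_drop, hn]

theorem vertexAt_len {Q : BQuiv V A} (p : Path Q) :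
    p.vertexAt p.arrows.length = p.base := by
  simp [Path.vertexAt]

theorem vertexAt_succ {Q : BQuiv V A} (p : Path Q) (n : ℕ) (hn : n < p.arrows.length) :
    p.vertexAt (n+1) = Q.src p.arrows[n] := by
  by_cases h : n + 1 < p.arrows.length
  · rw [vertexAt_lt p _ h]
    exact (List.isChain_iff_getElem.1 p.chain n h).symm
  · have h' : n + 1 = p.arrows.length := by omega
    rw [h', vertexAt_len]
    symm
    apply p.base_eq
    rw [List.getLast?_eq_getElem?, ← h']
    simp [hn]

end BQuiv

namespace BQuiv
variable {V A : Type}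

/-- the arrows of a path, composable without relation -/
def pr (Q : BQuiv V A) (a b : A) : Prop := Q.src a = Q.tgt b ∧ ¬ Q.rel a b

theorem card_lists [Fintype A] (P : List A → Prop) (hfin : {l | P l}.Finite) :
    (Nat.card {l // P l} : ℤ) = (if P [] then 1 else 0) + ∑ a : A, (Nat.card {l // P (a :: l)} : ℤ) := by
  have hf : Finite {l // P l} := hfin
  have hf' : ∀ a, Finite {l // P (a :: l)} := fun a =>
    Finite.of_injective (β := {l // P l}) (fun l => ⟨a :: l.1, l.2⟩) (by
      intro x y h; simpa [Subtype.ext_iff] using h)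
  let F : {l // P l} ≃ PLift (P []) ⊕ (Σ a : A, {l // P (a :: l)}) :=
    { toFun := fun l => match l with
        | ⟨[], h⟩ => Sum.inl ⟨h⟩
        | ⟨a :: l, h⟩ => Sum.inr ⟨a, l, h⟩
      invFun := fun x => match x with
        | Sum.inl h => ⟨[], h.down⟩
        | Sum.inr ⟨a, l, h⟩ => ⟨a :: l, h⟩
      left_inv := by rintro ⟨_ | ⟨a, l⟩, h⟩ <;> rfl
      right_inv := by rintro (h | ⟨a, l, h⟩) <;> rfl }
  rw [Nat.card_congr F, Nat.card_sum, Nat.card_sigma]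
  push_cast
  congr 1
  by_cases h : P []
  · have : Unique (PLift (P [])) := ⟨⟨⟨h⟩⟩, fun _ => rfl⟩
    simp [h]
  · have : IsEmpty (PLift (P [])) := ⟨fun x => h x.down⟩
    simp [h]

theorem perm_bound (Q : BQuiv V A) (hQ : Q.IsGentle) :
    ∃ m, ∀ l : List A, l.IsChain Q.pr → l.length ≤ m := by
  obtain ⟨m, -, hm⟩ := hQ.admissible
  refine ⟨m, fun l hl => ?_⟩
  by_contra hlt
  push Not at hlt
  have h := hl.take m
  exact hm (l.take m) (by simp; omega) (h.imp fun _ _ h => h.1) (h.imp fun _ _ h => h.2)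

theorem perm_finite [Fintype A] (Q : BQuiv V A) (hQ : Q.IsGentle) (P : List A → Prop)
    (hP : ∀ l, P l → l.IsChain Q.pr) : {l | P l}.Finite := by
  obtain ⟨m, hm⟩ := perm_bound Q hQ
  exact (List.finite_length_le A m).subset fun l hl => hm l (hP l hl)

/-- number of permitted paths with leftmost arrow `a` and source `j` -/
noncomputable def cc (Q : BQuiv V A) : Matrix A V ℤ := fun a j =>
  (Nat.card {l : List A // (a :: l).IsChain Q.pr ∧
    ∀ x, (a :: l).getLast? = some x → Q.src x = j} : ℤ)

theorem cc_rec [Fintype A] (Q : BQuiv V A) (hQ : Q.IsGentle) (a : A) (j : V) :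
    cc Q a j = (if Q.src a = j then 1 else 0) + ∑ b, (if Q.pr a b then 1 else 0) * cc Q b j := by
  unfold cc
  rw [card_lists _ (perm_finite Q hQ _ (fun l hl => hl.1.tail))]
  congr 1
  · simp
  · refine Finset.sum_congr rfl fun b _ => ?_
    by_cases h : Q.pr a b
    · simp [h, List.isChain_cons_cons, List.getLast?_cons_cons]
    · simp [h, List.isChain_cons_cons]

theorem cartan_eq_s13 [Fintype A] (Q : BQuiv V A) (hQ : Q.IsGentle) (i j : V) :
    cartan Q i j = (if i = j then 1 else 0) + ∑ a, (if Q.tgt a = i then 1 else 0) * cc Q a j := by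
  unfold cartan
  let P : List A → Prop := fun l => l.IsChain Q.pr ∧ (∀ x, l.getLast? = some x → Q.src x = j) ∧
    l.head?.elim j Q.tgt = i
  have E : {p : Path Q // p.Permitted ∧ p.base = j ∧ p.tgtV = i} ≃ {l // P l} :=
    { toFun := fun p => ⟨p.1.arrows, by
        obtain ⟨p, h1, h2, h3⟩ := p
        refine ⟨?_, ?_, ?_⟩
        · have := p.chain
          unfold Path.Permitted at h1
          change List.IsChain _ _ at this
          change List.IsChain _ _ at h1
          rw [List.isChain_iff_getElem] at this h1 ⊢
          exact fun n hn => ⟨this n hn, h1 n hn⟩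
        · subst h2; exact p.base_eq
        · subst h2; exact h3⟩
      invFun := fun l => ⟨⟨j, l.1, l.2.1.imp fun _ _ h => h.1, l.2.2.1⟩,
        l.2.1.imp fun _ _ h => h.2, rfl, l.2.2.2⟩
      left_inv := by
        rintro ⟨p, h1, h2, h3⟩
        exact Subtype.ext (Path.ext' _ _ rfl h2.symm)
      right_inv := by
        rintro ⟨l, h⟩
        rfl }
  rw [Nat.card_congr E, card_lists _ (perm_finite Q hQ _ (fun l hl => hl.1))]
  congr 1
  · simp [P, eq_comm]
  · refine Finset.sum_congr rfl fun b _ => ?_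
    unfold cc
    by_cases h : Q.tgt b = i
    · simp [P, h]
    · simp [P, h]

/-- condition for the trivial path at `i` to be a forbidden thread -/
def triv (Q : BQuiv V A) (i : V) : Prop :=
  Q.deg i = 1 ∨ (Q.deg i = 2 ∧ ∃ α β, Q.src α = i ∧ Q.tgt β = i ∧ Q.rel α β)

theorem deg_pos [Fintype A] (Q : BQuiv V A) (hQ : Q.IsGentle) (i : V) :
    (∃ a, Q.src a = i) ∨ (∃ a, Q.tgt a = i) := by
  obtain ⟨b⟩ := hQ.has_arrow
  rcases (hQ.connected i (Q.src b)).cases_head with h | ⟨c, ⟨a, h | h⟩, -⟩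
  · exact Or.inl ⟨b, h.symm⟩
  · exact Or.inl ⟨a, h.1⟩
  · exact Or.inr ⟨a, h.2⟩

theorem local_count [Fintype A] (Q : BQuiv V A) (hQ : Q.IsGentle) (i : V) :
    (∑ a, (if Q.tgt a = i then 1 else 0 : ℤ)) +
    (∑ a, (if Q.src a = i ∧ ∀ c, ¬ Q.rel a c then 1 else 0 : ℤ)) +
    (if Q.triv i then 1 else 0) = 2 := by
  classical
  set I : Finset A := Finset.univ.filter (fun a => Q.tgt a = i) with hI
  set O : Finset A := Finset.univ.filter (fun a => Q.src a = i) with hO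
  have mI : ∀ a, a ∈ I ↔ Q.tgt a = i := by simp [hI]
  have mO : ∀ a, a ∈ O ↔ Q.src a = i := by simp [hO]
  have e1 : (∑ a, (if Q.tgt a = i then 1 else 0 : ℤ)) = I.card := by
    rw [Finset.sum_boole]
  have e2 : (∑ a, (if Q.src a = i ∧ ∀ c, ¬ Q.rel a c then 1 else 0 : ℤ)) =
      (O.filter (fun a => ∀ c ∈ I, ¬ Q.rel a c)).card := by
    rw [Finset.sum_boole, hO, Finset.filter_filter]
    congr 2
    ext a
    simp only [Finset.mem_filter, Finset.mem_univ, true_and, mI]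
    constructor
    · rintro ⟨h1, h2⟩; exact ⟨h1, fun c _ => h2 c⟩
    · rintro ⟨h1, h2⟩
      exact ⟨h1, fun c hc => h2 c ((hQ.rel_comp a c hc).symm.trans h1) hc⟩
  have hIc : Nat.card {a : A // Q.tgt a = i} = I.card := by
    rw [Nat.card_eq_fintype_card, Fintype.card_subtype]
  have hOc : Nat.card {a : A // Q.src a = i} = O.card := by
    rw [Nat.card_eq_fintype_card, Fintype.card_subtype]
  have hd : Q.deg i = O.card + I.card := by rw [deg, hIc, hOc]
  have i2 := hQ.in_le i
  have o2 := hQ.out_le i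
  rw [hIc] at i2
  rw [hOc] at o2
  have ht : Q.triv i ↔ (O.card + I.card = 1 ∨ (O.card + I.card = 2 ∧ ∃ α ∈ O, ∃ β ∈ I, Q.rel α β)) := by
    unfold triv
    rw [hd]
    simp only [mO, mI]
    constructor
    · rintro (h | ⟨h, a, b, h1, h2, h3⟩)
      · exact Or.inl h
      · exact Or.inr ⟨h, a, h1, b, h2, h3⟩
    · rintro (h | ⟨h, a, h1, b, h2, h3⟩)
      · exact Or.inl h
      · exact Or.inr ⟨h, a, b, h1, h2, h3⟩
  have hp : 0 < O.card + I.card := by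
    rcases deg_pos Q hQ i with ⟨a, h⟩ | ⟨a, h⟩
    · have := Finset.card_pos.2 ⟨a, (mO a).2 h⟩; omega
    · have := Finset.card_pos.2 ⟨a, (mI a).2 h⟩; omega
  have q1 : ∀ b ∈ I, ∀ a ∈ O, ∀ a' ∈ O, ¬ Q.rel a b → ¬ Q.rel a' b → a = a' := by
    intro b hb a ha a' ha'
    rw [mI] at hb; rw [mO] at ha ha'
    exact hQ.unique_nonrel_post b a a' (by rw [ha, hb]) (by rw [ha', hb])
  have q2 : ∀ b ∈ O, ∀ a ∈ I, ∀ a' ∈ I, ¬ Q.rel b a → ¬ Q.rel b a' → a = a' := by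
    intro b hb a ha a' ha'
    rw [mO] at hb; rw [mI] at ha ha'
    exact hQ.unique_nonrel_pre b a a' (by rw [ha, hb]) (by rw [ha', hb])
  have q3 := hQ.unique_rel_post
  rw [e1, e2, if_congr ht rfl rfl]
  clear_value I O
  clear e1 e2 ht hIc hOc hd mI mO
  have hi : I.card = 0 ∨ I.card = 1 ∨ I.card = 2 := by omega
  rcases hi with hi | hi | hi
  · rw [Finset.card_eq_zero] at hi
    subst hi
    have ho : O.card = 1 ∨ O.card = 2 := by rw [Finset.card_empty] at hp; omega
    rcases ho with ho | ho <;> simp [ho]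
  · obtain ⟨x, rfl⟩ := Finset.card_eq_one.1 hi
    have ho : O.card = 0 ∨ O.card = 1 ∨ O.card = 2 := by omega
    rcases ho with ho | ho | ho
    · rw [Finset.card_eq_zero] at ho
      subst ho
      simp
    · obtain ⟨a, rfl⟩ := Finset.card_eq_one.1 ho
      by_cases h : Q.rel a x <;> simp [h, Finset.filter_singleton]
    · obtain ⟨a, b, hab, rfl⟩ := Finset.card_eq_two.1 ho
      by_cases h : Q.rel a x
      · have h' : ¬ Q.rel b x := fun h' => hab (q3 x a b h h')
        simp [h, h', Finset.filter_insert, Finset.filter_singleton, ho]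
      · have h' : Q.rel b x := by
          by_contra h'
          exact hab (q1 x (by simp) a (by simp) b (by simp) h h')
        simp [h, h', Finset.filter_insert, Finset.filter_singleton, ho]
  · obtain ⟨x, y, hxy, rfl⟩ := Finset.card_eq_two.1 hi
    have he : O.filter (fun a => ∀ c ∈ ({x, y} : Finset A), ¬ Q.rel a c) = ∅ := by
      rw [Finset.filter_eq_empty_iff]
      intro a ha h
      exact hxy (q2 a ha x (by simp) y (by simp) (h x (by simp)) (h y (by simp)))
    rw [he, hi]
    have : ¬ (O.card + 2 = 1 ∨ (O.card + 2 = 2 ∧ ∃ α ∈ O, ∃ β ∈ ({x, y} : Finset A), Q.rel α β)) := by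
      rintro (h | ⟨h, a, ha, -⟩)
      · omega
      · have := Finset.card_pos.2 ⟨a, ha⟩; omega
    rw [if_neg this]
    simp

end BQuiv

namespace BQuiv
variable {V A : Type}

theorem fInc_eq (Q : BQuiv V A) {W : Type} (e : W ≃ FThread Q) (i : V) (w : W) :
    fInc Q e i w = ∑ n ∈ Finset.range ((e w).1.arrows.length + 1),
      if (e w).1.vertexAt n = i then (-1 : ℤ) ^ ((e w).1.arrows.length - n) else 0 := by
  have key : ∀ (S : ℕ → Prop), (Nat.card {x : FSplit Q // x.center = i ∧ x.thread = e w ∧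
      S (x.1.1.1.arrows.length - x.1.2)} : ℤ) =
      ∑ n ∈ Finset.range ((e w).1.arrows.length + 1),
        if (e w).1.vertexAt n = i ∧ S ((e w).1.arrows.length - n) then 1 else 0 := by
    intro S
    let E : {x : FSplit Q // x.center = i ∧ x.thread = e w ∧
      S (x.1.1.1.arrows.length - x.1.2)} ≃
      {n : ℕ // n ∈ (Finset.range ((e w).1.arrows.length + 1)).filter
        (fun n => (e w).1.vertexAt n = i ∧ S ((e w).1.arrows.length - n))} :=
      { toFun := fun x => ⟨x.1.1.2, by
          obtain ⟨⟨⟨t, n⟩, hn⟩, h1, h2, h3⟩ := x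
          simp only [FSplit.center, FSplit.thread] at h1 h2 h3
          subst h2
          simp only [Finset.mem_filter, Finset.mem_range]
          exact ⟨Nat.lt_succ_of_le hn, h1, h3⟩⟩
        invFun := fun n => ⟨⟨(e w, n.1), by
          have := n.2
          simp only [Finset.mem_filter, Finset.mem_range] at this
          exact Nat.le_of_lt_succ this.1⟩, by
          have := n.2
          simp only [Finset.mem_filter, Finset.mem_range] at this
          exact ⟨this.2.1, rfl, this.2.2⟩⟩
        left_inv := by
          rintro ⟨⟨⟨t, n⟩, hn⟩, h1, h2, h3⟩
          simp only [FSplit.thread] at h2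
          subst h2
          rfl
        right_inv := by
          rintro ⟨n, hn⟩
          rfl }
    rw [Nat.card_congr E, Finset.sum_boole, Nat.card_eq_fintype_card, Fintype.card_coe]
  unfold fInc
  have k1 := key (fun n => Even n)
  have k2 := key (fun n => ¬ Even n)
  simp only [FSplit.posSign]
  rw [k1, k2, ← Finset.sum_sub_distrib]
  refine Finset.sum_congr rfl fun n _ => ?_
  by_cases h : (e w).1.vertexAt n = i
  · by_cases h' : Even ((e w).1.arrows.length - n)
    · simp [h, h', h'.neg_one_pow]
    · simp [h, h', (Nat.not_even_iff_odd.1 h').neg_one_pow]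
  · simp [h]

theorem sum_square (h : ℕ → ℕ → ℤ) (N : ℕ) :
    ∑ n ∈ Finset.range N, ∑ m ∈ Finset.range N, h n m =
    ∑ n ∈ Finset.range N, h n n + ∑ n ∈ Finset.range N, ∑ m ∈ Finset.Ico (n+1) N, h n m +
    ∑ n ∈ Finset.range N, ∑ m ∈ Finset.Ico (n+1) N, h m n := by
  induction N with
  | zero => simp
  | succ N ih =>
    have a : ∀ k : ℕ → ℕ → ℤ, ∑ n ∈ Finset.range (N+1), ∑ m ∈ Finset.Ico (n+1) (N+1), k n m =
        ∑ n ∈ Finset.range N, ∑ m ∈ Finset.Ico (n+1) N, k n m + ∑ n ∈ Finset.range N, k n N := by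
      intro k
      rw [Finset.sum_range_succ, ← Finset.sum_add_distrib]
      simp only [Finset.Ico_self, Finset.sum_empty, add_zero]
      refine Finset.sum_congr rfl fun n hn => ?_
      rw [Finset.sum_Ico_succ_top (by simp at hn; omega)]
    rw [a h, a (fun n m => h m n)]
    simp only [Finset.sum_range_succ, Finset.sum_add_distrib]
    rw [ih]
    ring

/-- signed sum over the half-edges of the thread `w` strictly to the right of position `n` -/
noncomputable def gg (Q : BQuiv V A) (t : FThread Q) (n : ℕ) (j : V) : ℤ :=
  ∑ m ∈ Finset.Ico (n+1) (t.1.arrows.length + 1),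
    (if t.1.vertexAt m = j then (-1 : ℤ) ^ (n + m) else 0)

theorem gg_len (Q : BQuiv V A) (t : FThread Q) (n : ℕ) (hn : t.1.arrows.length ≤ n) (j : V) :
    gg Q t n j = 0 := by
  unfold gg
  rw [Finset.Ico_eq_empty (by omega)]
  simp

theorem gg_rec (Q : BQuiv V A) (t : FThread Q) (n : ℕ) (hn : n < t.1.arrows.length) (j : V) :
    gg Q t n j = - (if Q.src (t.1.arrows[n]) = j then 1 else 0) - gg Q t (n+1) j := by
  unfold gg
  rw [Finset.sum_eq_sum_Ico_succ_bot (by omega), vertexAt_succ _ _ hn, sub_eq_add_neg,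
    ← Finset.sum_neg_distrib]
  congr 1
  · have : Odd (n + (n+1)) := ⟨n, by omega⟩
    rw [this.neg_one_pow]
    split_ifs <;> simp
  · refine Finset.sum_congr rfl fun m _ => ?_
    split_ifs
    · rw [show n + 1 + m = (n + m) + 1 by ring, pow_succ]; ring
    · simp

section
variable [Fintype A] (Q : BQuiv V A) {W : Type} [Fintype W] (e : W ≃ FThread Q)

/-- the signed count of forbidden paths with leftmost arrow `a` and source `j` -/
noncomputable def ff (hb : Function.Bijective (pos e)) : Matrix A V ℤ := fun a j =>
  gg Q (e ((Equiv.ofBijective _ hb).symm a).1) ((Equiv.ofBijective _ hb).symm a).2 j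

theorem ff_pos (hb : Function.Bijective (pos e)) (s) (j : V) :
    ff Q e hb (pos e s) j = gg Q (e s.1) s.2 j := by
  unfold ff
  have : (Equiv.ofBijective _ hb).symm (pos e s) = s := (Equiv.ofBijective _ hb).symm_apply_apply s
  rw [this]

theorem rel_sum (hQ : Q.IsGentle) (w : W) (n : ℕ) (hn : n < (e w).1.arrows.length)
    (v : A → ℤ) : ∑ c, (if Q.rel ((e w).1.arrows[n]) c then 1 else 0) * v c =
    if h : n + 1 < (e w).1.arrows.length then v ((e w).1.arrows[n+1]) else 0 := by
  simp only [rel_pos Q hQ (e w) n hn]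
  split_ifs with h
  · simp [h]
  · simp [h]

theorem ff_rec (hQ : Q.IsGentle) (hb : Function.Bijective (pos e)) (a : A) (j : V) :
    ff Q e hb a j = - (if Q.src a = j then 1 else 0) -
      ∑ c, (if Q.rel a c then 1 else 0) * ff Q e hb c j := by
  obtain ⟨⟨w, n, hn⟩, rfl⟩ := hb.2 a
  rw [ff_pos]
  simp only [pos, Fin.getElem_fin]
  refine (gg_rec Q _ _ hn j).trans ?_
  congr 1
  refine Eq.trans ?_ (rel_sum Q e hQ w n hn (fun c => ff Q e hb c j)).symm
  split_ifs with h
  · have := ff_pos Q e hb ⟨w, n+1, h⟩ j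
    simp only [pos, Fin.getElem_fin] at this
    rw [this]
  · exact gg_len Q _ _ (by omega) j

theorem rel_inj (hQ : Q.IsGentle) (hb : Function.Bijective (pos e)) (v : A → ℤ)
    (hv : ∀ a, v a + ∑ c, (if Q.rel a c then 1 else 0) * v c = 0) (a : A) : v a = 0 := by
  obtain ⟨⟨w, n, hn⟩, rfl⟩ := hb.2 a
  simp only [pos, Fin.getElem_fin]
  obtain ⟨k, hk⟩ : ∃ k, k = (e w).1.arrows.length - n := ⟨_, rfl⟩
  induction k generalizing n with
  | zero => omega
  | succ k ih =>
    have := hv ((e w).1.arrows[n])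
    rw [rel_sum Q e hQ w n hn v] at this
    split_ifs at this with h
    · rw [ih (n+1) h (by omega)] at this
      simpa using this
    · simpa using this

theorem sum_pos (hb : Function.Bijective (pos e)) (v : A → ℤ) :
    ∑ w, ∑ n : Fin (e w).1.arrows.length, v ((e w).1.arrows[n]) = ∑ a, v a := by
  rw [← (Equiv.ofBijective _ hb).sum_comp, Fintype.sum_sigma]
  rfl

theorem diag_sum (hQ : Q.IsGentle) (hb : Function.Bijective (pos e)) (i : V) :
    ∑ w, ∑ n ∈ Finset.range ((e w).1.arrows.length + 1),
      (if (e w).1.vertexAt n = i then 1 else 0 : ℤ) = 2 := by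
  rw [← local_count Q hQ i]
  simp only [Finset.sum_range_succ, Finset.sum_add_distrib, vertexAt_len]
  rw [add_assoc]
  congr 1
  · rw [← sum_pos Q e hb (fun a => if Q.tgt a = i then 1 else 0)]
    refine Finset.sum_congr rfl fun w _ => ?_
    rw [Finset.sum_range]
    refine Finset.sum_congr rfl fun n _ => ?_
    rw [vertexAt_lt _ _ n.2]
    rfl
  · rw [← sum_pos Q e hb (fun a => if Q.src a = i ∧ ∀ c, ¬ Q.rel a c then 1 else 0)]
    have ht : (if Q.triv i then 1 else 0 : ℤ) =
        ∑ w, if (e w).1.arrows = [] ∧ (e w).1.base = i then 1 else 0 := by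
      by_cases h : Q.triv i
      · let t : FThread Q := ⟨⟨i, [], by exact List.IsChain.nil, by simp⟩, Or.inr ⟨rfl, h⟩⟩
        rw [if_pos h, Finset.sum_eq_single (e.symm t)]
        · rw [e.apply_symm_apply]
          simp [t]
        · intro w _ hw
          rw [if_neg]
          rintro ⟨h1, h2⟩
          apply hw
          rw [Equiv.eq_symm_apply]
          exact Subtype.ext (Path.ext' _ _ h1 h2)
        · simp
      · rw [if_neg h]
        symm
        apply Finset.sum_eq_zero
        intro w _
        rw [if_neg]
        rintro ⟨h1, h2⟩
        apply h
        rcases (e w).2 with h' | h'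
        · exact absurd h1 h'.1
        · rw [h2] at h'; exact h'.2
    rw [ht, ← Finset.sum_add_distrib]
    refine Finset.sum_congr rfl fun w _ => ?_
    by_cases hne : (e w).1.arrows = []
    · have : IsEmpty (Fin (e w).1.arrows.length) := by rw [hne]; exact Fin.isEmpty
      rw [Finset.univ_eq_empty]
      simp [hne]
    · have hl : 0 < (e w).1.arrows.length := List.length_pos_iff.2 hne
      have hlast : Q.src ((e w).1.arrows[(e w).1.arrows.length - 1]) = (e w).1.base := by
        rw [← vertexAt_succ _ _ (by omega), Nat.sub_add_cancel hl, vertexAt_len]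
      rw [Finset.sum_eq_single ⟨(e w).1.arrows.length - 1, by omega⟩]
      · simp only [Fin.getElem_fin, hlast, hne, false_and, if_false, add_zero]
        refine if_congr ?_ rfl rfl
        simp only [rel_pos Q hQ (e w) _ (show (e w).1.arrows.length - 1 < _ by omega)]
        constructor
        · intro h
          exact ⟨h, fun c ⟨hc, _⟩ => by omega⟩
        · exact fun h => h.1
      · rintro ⟨n, hn⟩ _ hne'
        rw [if_neg]
        rintro ⟨-, h⟩
        have : n ≠ (e w).1.arrows.length - 1 := fun h => hne' (Fin.ext h)
        have h1 : n + 1 < (e w).1.arrows.length := by omega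
        exact h _ ((rel_pos Q hQ (e w) n hn _).2 ⟨h1, rfl⟩)
      · simp

theorem fInc_mul [Fintype V] (hQ : Q.IsGentle) (hb : Function.Bijective (pos e)) (i j : V) :
    (fInc Q e * (fInc Q e)ᵀ) i j = 2 * (if i = j then 1 else 0) +
      ∑ a, (if Q.tgt a = i then 1 else 0) * ff Q e hb a j +
      ∑ a, (if Q.tgt a = j then 1 else 0) * ff Q e hb a i := by
  have off : ∀ i j : V, ∑ a, (if Q.tgt a = i then 1 else 0) * ff Q e hb a j =
      ∑ w, ∑ n ∈ Finset.range ((e w).1.arrows.length + 1),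
        ∑ m ∈ Finset.Ico (n+1) ((e w).1.arrows.length + 1),
        (if (e w).1.vertexAt n = i then 1 else 0) *
          (if (e w).1.vertexAt m = j then (-1 : ℤ) ^ (n + m) else 0) := by
    intro i j
    rw [← sum_pos Q e hb (fun a => (if Q.tgt a = i then 1 else 0) * ff Q e hb a j)]
    refine Finset.sum_congr rfl fun w _ => ?_
    rw [Finset.sum_range_succ, Finset.Ico_self, Finset.sum_empty, add_zero, Finset.sum_range]
    refine Finset.sum_congr rfl fun n _ => ?_
    rw [← Finset.mul_sum, vertexAt_lt _ _ n.2]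
    congr 1
    exact ff_pos Q e hb ⟨w, n⟩ j
  rw [off i j, off j i, ← diag_sum Q e hQ hb i, Finset.sum_mul, ← Finset.sum_add_distrib,
    ← Finset.sum_add_distrib, Matrix.mul_apply]
  refine Finset.sum_congr rfl fun w _ => ?_
  rw [Matrix.transpose_apply, fInc_eq, fInc_eq, Finset.sum_mul_sum]
  have hs : ∀ n ∈ Finset.range ((e w).1.arrows.length + 1),
      ∀ m ∈ Finset.range ((e w).1.arrows.length + 1),
      (if (e w).1.vertexAt n = i then (-1 : ℤ) ^ ((e w).1.arrows.length - n) else 0) *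
      (if (e w).1.vertexAt m = j then (-1 : ℤ) ^ ((e w).1.arrows.length - m) else 0) =
      (if (e w).1.vertexAt n = i then 1 else 0) *
          (if (e w).1.vertexAt m = j then (-1 : ℤ) ^ (n + m) else 0) := by
    intro n hn m hm
    rw [Finset.mem_range] at hn hm
    split_ifs <;> simp
    rw [← pow_add]
    rcases Nat.even_or_odd (n + m) with h | h
    · rw [h.neg_one_pow, Even.neg_one_pow]
      obtain ⟨k, hk⟩ := h
      exact ⟨(e w).1.arrows.length - k, by omega⟩
    · rw [h.neg_one_pow, Odd.neg_one_pow]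
      obtain ⟨k, hk⟩ := h
      exact ⟨(e w).1.arrows.length - k - 1, by omega⟩
  rw [Finset.sum_congr rfl fun n hn => Finset.sum_congr rfl fun m hm => hs n hn m hm, sum_square]
  congr 1
  · congr 1
    rw [Finset.sum_mul]
    refine Finset.sum_congr rfl fun n _ => ?_
    have : Even (n + n) := ⟨n, rfl⟩
    rw [this.neg_one_pow]
    by_cases h : (e w).1.vertexAt n = i
    · simp [h]
    · simp [h]
  · refine Finset.sum_congr rfl fun n _ => Finset.sum_congr rfl fun m _ => ?_
    rw [add_comm m n]
    split_ifs <;> simp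

end

end BQuiv

namespace BQuiv
variable {V A : Type}

theorem left_inv_cartan [Fintype V] [Fintype A] (Q : BQuiv V A) (hQ : Q.IsGentle)
    {W : Type} [Fintype W] (e : W ≃ FThread Q) (hb : Function.Bijective (pos e)) :
    (1 + (Matrix.of fun (i : V) (a : A) => if Q.tgt a = i then (1 : ℤ) else 0) * ff Q e hb) *
      cartan Q = 1 := by
  set T : Matrix V A ℤ := Matrix.of fun (i : V) (a : A) => if Q.tgt a = i then (1 : ℤ) else 0 with hT
  let S : Matrix A V ℤ := Matrix.of fun (a : A) (i : V) => if Q.src a = i then (1 : ℤ) else 0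
  let N : Matrix A A ℤ := Matrix.of fun (a b : A) => if Q.pr a b then (1 : ℤ) else 0
  let R : Matrix A A ℤ := Matrix.of fun (a b : A) => if Q.rel a b then (1 : ℤ) else 0
  have hC : cartan Q = 1 + T * cc Q := by
    ext i j
    rw [cartan_eq_s13 Q hQ, Matrix.add_apply, Matrix.mul_apply, Matrix.one_apply]
    simp only [hT, Matrix.of_apply]
  have hc : cc Q = S + N * cc Q := by
    ext a j
    rw [Matrix.add_apply, Matrix.mul_apply]
    exact cc_rec Q hQ a j
  have hf : ff Q e hb + R * ff Q e hb = - S := by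
    ext a j
    rw [Matrix.add_apply, Matrix.mul_apply]
    have := ff_rec Q e hQ hb a j
    simp only [S, R, Matrix.of_apply, Matrix.neg_apply]
    linarith
  have hST : S * T = N + R := by
    ext a b
    rw [Matrix.add_apply, Matrix.mul_apply]
    simp only [S, T, N, R, Matrix.of_apply, pr]
    have := hQ.rel_comp a b
    by_cases h : Q.src a = Q.tgt b
    · by_cases h' : Q.rel a b <;> simp [h, h']
    · have h' : ¬ Q.rel a b := fun h' => h (this h')
      simp [h, h', eq_comm]
  set c := cc Q
  set f := ff Q e hb
  have hz : f * T * c + c + f = 0 := by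
    have h0 : (f * T * c + c + f) + R * (f * T * c + c + f) = 0 := by
      have : (f * T * c + c + f) + R * (f * T * c + c + f) =
          (f + R * f) * T * c + c + R * c + (f + R * f) := by
        simp only [Matrix.mul_add, Matrix.add_mul, Matrix.mul_assoc]
        abel
      rw [this, hf]
      have h2 : -S * T * c = - (N * c) - R * c := by
        rw [Matrix.neg_mul, hST, Matrix.neg_mul, Matrix.add_mul]; abel
      rw [h2]
      nth_rewrite 3 [hc]
      abel
    ext a j
    refine rel_inj Q e hQ hb (fun a => (f * T * c + c + f) a j) ?_ a
    intro a
    have := congrFun (congrFun h0 a) j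
    rw [Matrix.add_apply, Matrix.mul_apply] at this
    exact this
  rw [hC]
  have : (1 + T * f) * (1 + T * c) = 1 + T * (f * T * c + c + f) := by
    simp only [Matrix.mul_add, Matrix.add_mul, Matrix.mul_assoc, Matrix.one_mul, Matrix.mul_one]
    abel
  rw [this, hz]
  simp

end BQuiv

theorem stmt_core {V A : Type} [Fintype V] [Fintype A]
    (Q : BQuiv V A) (hQ : Q.IsGentle)
    (hfc : ¬ ∃ p : BQuiv.Path Q, IsFullCycle Q p) :
    ((cartan Q).det = 1 ∨ (cartan Q).det = -1) ∧
    Finite (FThread Q) ∧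
    (∀ (W : Type) [Fintype W] (e : W ≃ FThread Q),
      (cartan Q)⁻¹ + ((cartan Q)⁻¹)ᵀ = fInc Q e * (fInc Q e)ᵀ) := by
  have hfin : Finite (FThread Q) := thread_finite Q hQ hfc
  refine ⟨?_, hfin, ?_⟩
  · obtain ⟨n, ⟨e⟩⟩ := Finite.exists_equiv_fin (FThread Q)
    have h := left_inv_cartan Q hQ e.symm (pos_bij Q hQ hfc e.symm)
    have h' := congrArg Matrix.det h
    rw [Matrix.det_mul, Matrix.det_one] at h'
    exact Int.isUnit_iff.1 (IsUnit.of_mul_eq_one_right _ h')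
  · intro W _ e
    have hb := pos_bij Q hQ hfc e
    rw [Matrix.inv_eq_left_inv (left_inv_cartan Q hQ e hb)]
    ext i j
    rw [fInc_mul Q e hQ hb]
    simp only [Matrix.add_apply, Matrix.transpose_apply, Matrix.mul_apply, Matrix.one_apply,
      Matrix.of_apply]
    by_cases h : i = j
    · subst h
      simp only [if_true]
      ring
    · have h' : ¬ j = i := fun h' => h h'.symm
      simp only [h, h', if_false]
      ring

/-- Let `(Q, I)` be a gentle bound quiver containing no full cycle
(equivalently, such that `kQ/I` has finite global dimension), with Cartan matrix `C`
and forbidden marked ribbon graph `▲(Q, I) = (Ḡ, ≤̄, σ̄)`.  Then `C` is invertible over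
`ℤ` (`det C = ±1`) and `C⁻¹ + C⁻ᵀ = Inc(Ḡ, σ̄) ⬝ Inc(Ḡ, σ̄)ᵀ`. -/
theorem stmt13 {V A : Type} [Fintype V] [Fintype A] [DecidableEq V]
    (Q : BQuiv V A) (hQ : Q.IsGentle)
    (hfc : ¬ ∃ p : BQuiv.Path Q, IsFullCycle Q p) :
    ((cartan Q).det = 1 ∨ (cartan Q).det = -1) ∧
    Finite (FThread Q) ∧
    (∀ (W : Type) [Fintype W] (e : W ≃ FThread Q),
      (cartan Q)⁻¹ + ((cartan Q)⁻¹)ᵀ = fInc Q e * (fInc Q e)ᵀ) := by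
  convert stmt_core Q hQ hfc
end

section
/- Let (Q,I) be a gentle bound quiver with marked ribbon graph (G,≤) = △(Q,I) and Cartan matrix C, identify E(G) with Q0, and let Ĵ be the E(G) × V(G) integer matrix whose column at a vertex α of G is the incidence vector inc(Ǒ_α) of the unique anti-walk Ǒ_α of (G,≤) with target vertex α. Then C^tr · Ĵ = Inc(G). -/
set_option autoImplicit false

attribute [local instance] Classical.propDecidable

namespace BQuiv

variable {V A : Type}

/-- An ordered edge of the marked ribbon graph `△(Q, I)`: a pair `(h′, h″)` of
half-edges with `h″ = ι h′`, i.e. a pair of distinct split permitted threads with the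
same center.  The first component is the target half-edge, the second the source
half-edge. -/
def DOE (Q : BQuiv V A) : Type :=
  {p : PSplit Q × PSplit Q // p.1 ≠ p.2 ∧ p.1.center = p.2.center}

/-- The target half-edge of an ordered edge of `△(Q, I)`. -/
def DOE.tS {Q : BQuiv V A} (i : DOE Q) : PSplit Q := i.1.1

/-- The source half-edge of an ordered edge of `△(Q, I)`. -/
def DOE.sS {Q : BQuiv V A} (i : DOE Q) : PSplit Q := i.1.2

/-- The target vertex (a permitted thread) of an ordered edge of `△(Q, I)`. -/
def DOE.tvx {Q : BQuiv V A} (i : DOE Q) : PThread Q := i.1.1.thread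

/-- The source vertex (a permitted thread) of an ordered edge of `△(Q, I)`. -/
def DOE.svx {Q : BQuiv V A} (i : DOE Q) : PThread Q := i.1.2.thread

/-- The underlying (unordered) edge of an ordered edge of `△(Q, I)`, identified with a
vertex of `Q` via centers. -/
def DOE.ctr {Q : BQuiv V A} (i : DOE Q) : V := i.1.1.center

/-- The inverse of an ordered edge of `△(Q, I)`. -/
def DOE.inv {Q : BQuiv V A} (i : DOE Q) : DOE Q :=
  ⟨(i.1.2, i.1.1), ⟨Ne.symm i.2.1, i.2.2.symm⟩⟩

/-- `l` is (the list of ordered edges of) a walk of `△(Q, I)`, written from right to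
left. -/
def IsDWalk (Q : BQuiv V A) (l : List (DOE Q)) : Prop :=
  l.Chain' (fun i j => DOE.svx i = DOE.tvx j)

/-- The walk `l` of `△(Q, I)` is reduced. -/
def IsDRed (Q : BQuiv V A) (l : List (DOE Q)) : Prop :=
  l.Chain' (fun i j => j ≠ DOE.inv i)

/-- `y` is the direct successor of `x` in the half-edge order of `△(Q, I)`: `x` and `y`
lie over the same thread and `y` covers `x` (the half-edge `h^α_t` corresponds to the
split `(α, t)` and `h^α_t < h^α_{t-1}` is a covering). -/
def DSucc {Q : BQuiv V A} (x y : PSplit Q) : Prop :=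
  x.thread = y.thread ∧ x.idx = y.idx + 1

/-- Anti-walks of `△(Q, I)`: non-trivial walks `i₁⋯i_{L+1}` in which the source
half-edge of `iₜ` is the direct successor of the target half-edge of `iₜ₊₁` with
respect to `≤`, maximal with this property. -/
def IsAntiDW (Q : BQuiv V A) (l : List (DOE Q)) : Prop :=
  l ≠ [] ∧ IsDWalk Q l ∧
  l.Chain' (fun i j => DSucc (DOE.tS j) (DOE.sS i)) ∧
  (∀ i, l.head? = some i → ∀ i0 : DOE Q, ¬ DSucc (DOE.tS i) (DOE.sS i0)) ∧
  (∀ i, l.getLast? = some i → ∀ i2 : DOE Q, ¬ DSucc (DOE.tS i2) (DOE.sS i)) 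

/-- The incidence vector of a walk `w = i₁⋯i_{L+1}` of `△(Q, I)`:
`inc(w) = Σₜ (-1)ᵗ e_{ē(i_{t+1})} ∈ ℤ^{Q₀}`. -/
noncomputable def incVec {Q : BQuiv V A} : List (DOE Q) → V → ℤ
  | [] => fun _ => 0
  | i :: l => fun v => (if DOE.ctr i = v then 1 else 0) - incVec l v

end BQuiv

open BQuiv
open scoped Matrix

namespace GentleAux

section Lists
variable {A : Type} (R : A → A → Prop)

/-- A chain starting at `b` that can be compared with a maximal one is an initial segment of it. -/
theorem ray_initial (hR : ∀ a c c', R a c → R a c' → c = c') :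
    ∀ (r r' : List A) (b : A), (b :: r).IsChain R → (b :: r').IsChain R →
      (∀ a, (b :: r).getLast? = some a → ∀ c, ¬ R a c) → r' <+: r := by
  intro r
  induction r with
  | nil =>
    intro r' b _ h' hm
    cases r' with
    | nil => simp
    | cons c t =>
      rw [List.isChain_cons_cons] at h'
      exact absurd h'.1 (hm b (by simp) c)
  | cons d s ih =>
    intro r' b h h' hm
    cases r' with
    | nil => simp
    | cons c t =>
      rw [List.isChain_cons_cons] at h h'
      obtain rfl := hR b d c h.1 h'.1
      rw [List.prefix_cons_inj]
      exact ih t d h.2 h'.2 (fun a ha => hm a (by simpa [List.getLast?_cons_cons] using ha))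

theorem ray_unique (hR : ∀ a c c', R a c → R a c' → c = c')
    (r r' : List A) (b : A) (h : (b :: r).IsChain R) (h' : (b :: r').IsChain R)
    (hm : ∀ a, (b :: r).getLast? = some a → ∀ c, ¬ R a c)
    (hm' : ∀ a, (b :: r').getLast? = some a → ∀ c, ¬ R a c) : r = r' :=
  (ray_initial R hR r' r b h' h hm').eq_of_length_le
    (ray_initial R hR r r' b h h' hm).length_le

theorem ray_exists (m : ℕ) (hm : ∀ l : List A, l.IsChain R → l.length ≠ m) (b : A) :
    ∃ r, (b :: r).IsChain R ∧ ∀ a, (b :: r).getLast? = some a → ∀ c, ¬ R a c := by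
  have key : ∀ k : ℕ, ∀ b : A, ∃ r, (b :: r).IsChain R ∧
      ((∀ a, (b :: r).getLast? = some a → ∀ c, ¬ R a c) ∨ k ≤ r.length) := by
    intro k
    induction k with
    | zero => exact fun b => ⟨[], by simp, Or.inr (Nat.zero_le _)⟩
    | succ k ih =>
      intro b
      by_cases hb : ∃ c, R b c
      · obtain ⟨c, hc⟩ := hb
        obtain ⟨r, h1, h2⟩ := ih c
        refine ⟨c :: r, List.isChain_cons_cons.2 ⟨hc, h1⟩, ?_⟩
        rcases h2 with h2 | h2
        · left
          intro a ha
          exact h2 a (by simpa [List.getLast?_cons_cons] using ha)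
        · right
          simpa using h2
      · push Not at hb
        refine ⟨[], by simp, Or.inl ?_⟩
        intro a ha c
        simp at ha
        exact ha ▸ hb c
  obtain ⟨r, h1, h2⟩ := key m b
  rcases h2 with h2 | h2
  · exact ⟨r, h1, h2⟩
  · exact absurd (by simp; omega) (hm ((b :: r).take m) (h1.take m))

theorem split_unique (hR : ∀ a c c', R a c → R a c' → c = c')
    (hL : ∀ a c c', R c a → R c' a → c = c') (u u' r r' : List A) (b : A)
    (h : (u ++ b :: r).IsChain R) (h' : (u' ++ b :: r').IsChain R)
    (hl : ∀ a, (u ++ b :: r).getLast? = some a → ∀ c, ¬ R a c)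
    (hl' : ∀ a, (u' ++ b :: r').getLast? = some a → ∀ c, ¬ R a c)
    (hh : ∀ a, (u ++ b :: r).head? = some a → ∀ c, ¬ R c a)
    (hh' : ∀ a, (u' ++ b :: r').head? = some a → ∀ c, ¬ R c a) : u = u' ∧ r = r' := by
  have rev : ∀ (u r : List A), (u ++ b :: r).IsChain R →
      (b :: u.reverse).IsChain (fun x y => R y x) := by
    intro u r h
    have : (u ++ [b]).IsChain R := by
      have e : u ++ b :: r = (u ++ [b]) ++ r := by simp
      rw [e] at h
      exact h.left_of_append
    have := List.isChain_reverse.2 this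
    simpa [Function.flip_def, flip] using this
  have last : ∀ (u r : List A) (a : A), (b :: u.reverse).getLast? = some a →
      (u ++ b :: r).head? = some a := by
    intro u r a
    cases u <;> simp [List.getLast?_cons]
  constructor
  · have := ray_unique (fun x y => R y x) hL u.reverse u'.reverse b (rev u r h) (rev u' r' h')
      (fun a ha c => hh a (last _ _ _ ha) c) (fun a ha c => hh' a (last _ _ _ ha) c)
    simpa using this
  · refine ray_unique R hR r r' b h.right_of_append h'.right_of_append ?_ ?_
    · intro a ha; exact hl a (by simpa [List.getLast?_append] using ha)
    · intro a ha; exact hl' a (by simpa [List.getLast?_append] using ha)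

theorem split_exists (m : ℕ) (hm : ∀ l : List A, l.IsChain R → l.length ≠ m) (b : A) :
    ∃ u r, (u ++ b :: r).IsChain R ∧
    (∀ a, (u ++ b :: r).getLast? = some a → ∀ c, ¬ R a c) ∧
    (∀ a, (u ++ b :: r).head? = some a → ∀ c, ¬ R c a) := by
  obtain ⟨r, hr, hr'⟩ := ray_exists R m hm b
  obtain ⟨u, hu, hu'⟩ := ray_exists (fun x y => R y x) m (by
    intro l hl
    have := List.isChain_reverse.2 hl
    simpa using hm l.reverse this) b
  refine ⟨u.reverse, r, ?_, ?_, ?_⟩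
  · have h2 := List.isChain_reverse.2 hu
    have h3 : (u.reverse ++ [b]).IsChain R := by simpa [flip] using h2
    rw [List.isChain_append] at h3 ⊢
    refine ⟨h3.1, hr, ?_⟩
    simpa using h3.2.2
  · intro a ha; exact hr' a (by simpa [List.getLast?_append] using ha)
  · intro a ha
    apply hu' a
    cases u with
    | nil => simpa using ha
    | cons c t => simpa [List.getLast?_cons] using ha

end Lists

section Threads
variable {V A : Type} {Q : BQuiv V A}

/-- Nonzero composition of two arrows. -/
def NR (Q : BQuiv V A) (a b : A) : Prop := Q.src a = Q.tgt b ∧ ¬ Q.rel a b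

theorem path_ext {p q : Path Q} (h1 : p.base = q.base) (h2 : p.arrows = q.arrows) : p = q := by
  cases p; cases q; cases h1; cases h2; rfl

theorem path_ext' {p q : Path Q} (h0 : p.arrows ≠ []) (h2 : p.arrows = q.arrows) : p = q := by
  refine path_ext ?_ h2
  obtain ⟨a, ha⟩ : ∃ a, p.arrows.getLast? = some a :=
    ⟨_, List.getLast?_eq_some_getLast h0⟩
  rw [← p.base_eq a ha, ← q.base_eq a (h2 ▸ ha)]

theorem chainNR (l : List A) : l.IsChain (NR Q) ↔
    l.IsChain (fun a b => Q.src a = Q.tgt b) ∧ l.IsChain (fun a b => ¬ Q.rel a b) := by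
  simp only [List.isChain_iff_getElem, NR]
  exact ⟨fun h => ⟨fun i hi => (h i hi).1, fun i hi => (h i hi).2⟩,
    fun h i hi => ⟨h.1 i hi, h.2 i hi⟩⟩

theorem thread_facts {p : Path Q} (hp : IsPermThread Q p) :
    p.arrows.IsChain (NR Q) ∧ (∀ a, p.arrows.getLast? = some a → ∀ c, ¬ NR Q a c) ∧
    (∀ a, p.arrows.head? = some a → ∀ c, ¬ NR Q c a) := by
  rcases hp with ⟨_, h1, h2, h3⟩ | ⟨h, _⟩
  · exact ⟨(chainNR _).2 ⟨p.chain, h1⟩, fun a ha c hc => hc.2 (h3 a c ha hc.1),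
      fun a ha c hc => hc.2 (h2 c a ha hc.1)⟩
  · simp [h]

theorem NR_right (hQ : Q.IsGentle) : ∀ a c c', NR Q a c → NR Q a c' → c = c' :=
  fun a c c' h h' => hQ.unique_nonrel_pre a c c' h.1 h'.1 h.2 h'.2

theorem NR_left (hQ : Q.IsGentle) : ∀ a c c', NR Q c a → NR Q c' a → c = c' :=
  fun a c c' h h' => hQ.unique_nonrel_post a c c' h.1 h'.1 h.2 h'.2

theorem list_split {l : List A} {n : ℕ} {b : A} (h : l[n]? = some b) :
    l = l.take n ++ b :: l.drop (n + 1) ∧ (l.take n).length = n := by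
  obtain ⟨hn, rfl⟩ := List.getElem?_eq_some_iff.1 h
  constructor
  · rw [List.cons_getElem_drop_succ, List.take_append_drop]
  · simp; omega

/-- An arrow lies in a unique thread, at a unique position. -/
theorem thread_unique (hQ : Q.IsGentle) {p q : Path Q} (hp : IsPermThread Q p)
    (hq : IsPermThread Q q) {m n : ℕ} {b : A} (h1 : p.arrows[m]? = some b)
    (h2 : q.arrows[n]? = some b) : p = q ∧ m = n := by
  obtain ⟨e1, l1⟩ := list_split h1
  obtain ⟨e2, l2⟩ := list_split h2
  obtain ⟨a1, b1, c1⟩ := thread_facts hp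
  obtain ⟨a2, b2, c2⟩ := thread_facts hq
  rw [e1] at a1 b1 c1
  rw [e2] at a2 b2 c2
  obtain ⟨hu, hr⟩ := split_unique (NR Q) (NR_right hQ) (NR_left hQ) _ _ _ _ b a1 a2 b1 b2 c1 c2
  constructor
  · refine path_ext' (fun h => ?_) ?_
    · simp [h] at h1
    · rw [e1, e2, hu, hr]
  · rw [← l1, ← l2, hu]

theorem thread_exists (hQ : Q.IsGentle) (b : A) :
    ∃ p : Path Q, IsPermThread Q p ∧ ∃ n : ℕ, p.arrows[n]? = some b := by
  obtain ⟨m, _, hm⟩ := hQ.admissible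
  obtain ⟨u, r, h1, h2, h3⟩ := split_exists (NR Q) m (fun l hl hlm =>
    hm l hlm ((chainNR l).1 hl).1 ((chainNR l).1 hl).2) b
  have hne : u ++ b :: r ≠ [] := by simp
  refine ⟨⟨Q.src ((u ++ b :: r).getLast hne), u ++ b :: r, ((chainNR _).1 h1).1, ?_⟩, ?_,
    u.length, by simp⟩
  · intro a ha
    rw [List.getLast?_eq_some_getLast hne] at ha
    rw [Option.some.inj ha]
  · left
    refine ⟨hne, ((chainNR _).1 h1).2, ?_, ?_⟩
    · intro a c hc hs
      by_contra hr
      exact h3 c hc a ⟨hs, hr⟩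
    · intro a c hc hs
      by_contra hr
      exact h2 a hc c ⟨hs, hr⟩

theorem vertexAt_of_in {p : Path Q} {n : ℕ} {b : A} (h : p.arrows[n]? = some b) :
    p.vertexAt n = Q.tgt b := by
  simp [Path.vertexAt, List.head?_drop, h]

theorem vertexAt_of_out {p : Path Q} {n : ℕ} {a : A} (h : p.arrows[n]? = some a) :
    p.vertexAt (n + 1) = Q.src a := by
  obtain ⟨hn, rfl⟩ := List.getElem?_eq_some_iff.1 h
  by_cases hn' : n + 1 < p.arrows.length
  · rw [vertexAt_of_in (List.getElem?_eq_getElem hn')]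
    exact ((List.isChain_iff_getElem.1 p.chain) n hn').symm
  · have hl : p.arrows.getLast? = some p.arrows[n] := by
      rw [List.getLast?_eq_getElem?, ← h]
      congr 1; omega
    rw [p.base_eq _ hl]
    simp [Path.vertexAt, List.head?_drop, List.getElem?_eq_none (not_lt.1 hn')]

/-- `b` is the arrow entering the center of `x`. -/
def InA (x : PSplit Q) (b : A) : Prop := x.1.1.1.arrows[x.1.2]? = some b

/-- `a` is the arrow leaving the center of `x`. -/
def OutA (x : PSplit Q) (a : A) : Prop := ∃ k, x.1.2 = k + 1 ∧ x.1.1.1.arrows[k]? = some a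

theorem split_ext {x y : PSplit Q} (h1 : x.1.1.1 = y.1.1.1) (h2 : x.1.2 = y.1.2) : x = y :=
  Subtype.ext (Prod.ext (Subtype.ext h1) h2)

theorem in_unique (hQ : Q.IsGentle) {x y : PSplit Q} {b : A} (hx : InA x b) (hy : InA y b) :
    x = y := by
  obtain ⟨h1, h2⟩ := thread_unique hQ x.1.1.2 y.1.1.2 hx hy
  exact split_ext h1 h2

theorem out_unique (hQ : Q.IsGentle) {x y : PSplit Q} {b : A} (hx : OutA x b) (hy : OutA y b) :
    x = y := by
  obtain ⟨k, hk, hx⟩ := hx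
  obtain ⟨k', hk', hy⟩ := hy
  obtain ⟨h1, h2⟩ := thread_unique hQ x.1.1.2 y.1.1.2 hx hy
  exact split_ext h1 (by omega)

theorem in_center {x : PSplit Q} {b : A} (hx : InA x b) : x.center = Q.tgt b :=
  vertexAt_of_in hx

theorem out_center {x : PSplit Q} {a : A} (hx : OutA x a) : x.center = Q.src a := by
  obtain ⟨k, hk, hx⟩ := hx
  rw [← vertexAt_of_out hx, ← hk]; rfl

theorem in_exists (hQ : Q.IsGentle) (b : A) : ∃ x : PSplit Q, InA x b := by
  obtain ⟨p, hp, n, hn⟩ := thread_exists hQ b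
  obtain ⟨hn', _⟩ := List.getElem?_eq_some_iff.1 hn
  exact ⟨⟨(⟨p, hp⟩, n), hn'.le⟩, hn⟩

theorem out_exists (hQ : Q.IsGentle) (b : A) : ∃ x : PSplit Q, OutA x b := by
  obtain ⟨p, hp, n, hn⟩ := thread_exists hQ b
  obtain ⟨hn', _⟩ := List.getElem?_eq_some_iff.1 hn
  exact ⟨⟨(⟨p, hp⟩, n + 1), hn'⟩, n, rfl, hn⟩

theorem in_out {x : PSplit Q} {a b : A} (hb : InA x b) (ha : OutA x a) : NR Q a b := by
  obtain ⟨k, hk, ha⟩ := ha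
  unfold InA at hb
  rw [hk] at hb
  obtain ⟨h1, rfl⟩ := List.getElem?_eq_some_iff.1 ha
  obtain ⟨h2, rfl⟩ := List.getElem?_eq_some_iff.1 hb
  exact (List.isChain_iff_getElem.1 (thread_facts x.1.1.2).1) k h2

theorem in_no_out {x : PSplit Q} {b : A} (hb : InA x b) (ha : ∀ a, ¬ OutA x a) (a : A) :
    ¬ NR Q a b := by
  have h0 : x.1.2 = 0 := by
    by_contra h
    obtain ⟨k, hk⟩ := Nat.exists_eq_succ_of_ne_zero h
    have := x.2
    exact ha _ ⟨k, hk, List.getElem?_eq_getElem (by omega)⟩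
  refine (thread_facts x.1.1.2).2.2 b ?_ a
  rw [List.head?_eq_getElem?]
  rw [← h0]; exact hb

theorem out_no_in {x : PSplit Q} {a : A} (ha : OutA x a) (hb : ∀ b, ¬ InA x b) (b : A) :
    ¬ NR Q a b := by
  obtain ⟨k, hk, ha⟩ := ha
  refine (thread_facts x.1.1.2).2.1 a ?_ b
  rw [List.getLast?_eq_getElem?, ← ha]
  have : ¬ x.1.2 < x.1.1.1.arrows.length := fun h => hb _ (List.getElem?_eq_getElem h)
  have := x.2
  congr 1; omega

theorem triv_arrows {x : PSplit Q} (ha : ∀ a, ¬ OutA x a) (hb : ∀ b, ¬ InA x b) :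
    x.1.1.1.arrows = [] ∧ x.1.2 = 0 := by
  have h1 : ¬ x.1.2 < x.1.1.1.arrows.length := fun h => hb _ (List.getElem?_eq_getElem h)
  have h0 : x.1.2 = 0 := by
    by_contra h
    obtain ⟨k, hk⟩ := Nat.exists_eq_succ_of_ne_zero h
    have := x.2
    exact ha _ ⟨k, hk, List.getElem?_eq_getElem (by omega)⟩
  refine ⟨?_, h0⟩
  rw [← List.length_eq_zero_iff]; omega

theorem triv_center {x : PSplit Q} (h : x.1.1.1.arrows = []) : x.center = x.1.1.1.base := by
  simp [PSplit.center, Path.vertexAt, h]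

theorem triv_deg {x : PSplit Q} (h : x.1.1.1.arrows = []) :
    Q.deg x.center = 1 ∨ (Q.deg x.center = 2 ∧
    ∃ α β, Q.src α = x.center ∧ Q.tgt β = x.center ∧ ¬ Q.rel α β) := by
  rw [triv_center h]
  rcases x.1.1.2 with h' | h'
  · exact absurd h h'.1
  · exact h'.2

theorem triv_unique {x y : PSplit Q} (hx : x.1.1.1.arrows = []) (hy : y.1.1.1.arrows = [])
    (h : x.center = y.center) : x = y := by
  have h1 := x.2
  have h2 := y.2
  have e1 : x.1.1.1.arrows.length = 0 := by rw [hx]; rfl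
  have e2 : y.1.1.1.arrows.length = 0 := by rw [hy]; rfl
  refine split_ext (path_ext ?_ (hx.trans hy.symm)) (by omega)
  rw [← triv_center hx, ← triv_center hy, h]

theorem triv_exists (v : V) (h : Q.deg v = 1 ∨ (Q.deg v = 2 ∧
    ∃ α β, Q.src α = v ∧ Q.tgt β = v ∧ ¬ Q.rel α β)) :
    ∃ x : PSplit Q, x.1.1.1.arrows = [] ∧ x.center = v :=
  ⟨⟨(⟨⟨v, [], List.IsChain.nil, by simp⟩, Or.inr ⟨rfl, h⟩⟩, 0), Nat.zero_le _⟩, rfl, rfl⟩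


theorem card_three [Finite A] {P : A → Prop} (h : Nat.card {a // P a} ≤ 2) {a b c : A}
    (ha : P a) (hb : P b) (hc : P c) : a = b ∨ a = c ∨ b = c := by
  by_contra hne
  push Not at hne
  have h3 : ({a, b, c} : Set A).ncard = 3 :=
    Set.ncard_eq_three.2 ⟨a, b, c, hne.1, hne.2.1, hne.2.2, rfl⟩
  have hs : ({a, b, c} : Set A) ⊆ {a | P a} := by
    rintro y (rfl | rfl | rfl) <;> assumption
  have := Set.ncard_le_ncard hs (Set.toFinite _)
  have e : ({a | P a} : Set A).ncard = Nat.card {a // P a} := rfl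
  omega

theorem card_one_of {P : A → Prop} {a : A} (ha : P a) (h : ∀ b, P b → b = a) :
    Nat.card {a // P a} = 1 := by
  rw [Nat.card_eq_one_iff_unique]
  exact ⟨⟨fun x y => Subtype.ext ((h _ x.2).trans (h _ y.2).symm)⟩, ⟨⟨a, ha⟩⟩⟩

theorem card_zero_of {P : A → Prop} (h : ∀ b, ¬ P b) : Nat.card {a // P a} = 0 := by
  have : IsEmpty {a // P a} := ⟨fun x => h _ x.2⟩
  exact Nat.card_of_isEmpty

theorem card_pos_of [Finite A] {P : A → Prop} {a : A} (ha : P a) : 1 ≤ Nat.card {a // P a} := by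
  have : Nonempty {a // P a} := ⟨⟨a, ha⟩⟩
  exact Nat.card_pos

theorem card_le_one [Finite A] {P : A → Prop} (h : Nat.card {a // P a} ≤ 1) {a b : A}
    (ha : P a) (hb : P b) : a = b := by
  have := Finite.card_le_one_iff_subsingleton.1 h
  exact congrArg Subtype.val (Subsingleton.elim (⟨a, ha⟩ : {a // P a}) ⟨b, hb⟩)

theorem InA.inj {x : PSplit Q} {b c : A} (h : InA x b) (h' : InA x c) : b = c :=
  Option.some.inj (h.symm.trans h')

theorem OutA.inj {x : PSplit Q} {b c : A} (h : OutA x b) (h' : OutA x c) : b = c := by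
  obtain ⟨k, hk, h⟩ := h
  obtain ⟨k', hk', h'⟩ := h'
  obtain rfl : k = k' := by omega
  exact Option.some.inj (h.symm.trans h')

/-- Every half-edge has a partner. -/
theorem partner_exists [Finite A] (hQ : Q.IsGentle) (x : PSplit Q) :
    ∃ y : PSplit Q, x ≠ y ∧ x.center = y.center := by
  by_contra hcon
  push Not at hcon
  have hall : ∀ y : PSplit Q, y.center = x.center → y = x := by
    intro y hy
    by_contra hne
    exact hcon y (Ne.symm hne) hy.symm
  have hin : ∀ b, Q.tgt b = x.center → InA x b := by
    intro b hb
    obtain ⟨y, hy⟩ := in_exists hQ b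
    exact hall y ((in_center hy).trans hb) ▸ hy
  have hout : ∀ b, Q.src b = x.center → OutA x b := by
    intro b hb
    obtain ⟨y, hy⟩ := out_exists hQ b
    exact hall y ((out_center hy).trans hb) ▸ hy
  have hntriv : ∀ h : Q.deg x.center = 1 ∨ (Q.deg x.center = 2 ∧
      ∃ α β, Q.src α = x.center ∧ Q.tgt β = x.center ∧ ¬ Q.rel α β), x.1.1.1.arrows = [] := by
    intro h
    obtain ⟨y, hy, hyc⟩ := triv_exists _ h
    exact hall y hyc ▸ hy
  by_cases hb : ∃ b, InA x b
  · obtain ⟨b, hb⟩ := hb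
    have hne : x.1.1.1.arrows ≠ [] := by
      intro h
      simp [InA, h] at hb
    have c1 : Nat.card {a // Q.tgt a = x.center} = 1 :=
      card_one_of (in_center hb).symm (fun c hc => (hin c hc).inj hb)
    by_cases ha : ∃ a, OutA x a
    · obtain ⟨a, ha⟩ := ha
      have c2 : Nat.card {a // Q.src a = x.center} = 1 :=
        card_one_of (out_center ha).symm (fun c hc => (hout c hc).inj ha)
      exact hne (hntriv (Or.inr ⟨by unfold deg; omega, a, b, (out_center ha).symm,
        (in_center hb).symm, (in_out hb ha).2⟩))
    · have c2 : Nat.card {a // Q.src a = x.center} = 0 :=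
        card_zero_of (fun a h => ha ⟨a, hout a h⟩)
      exact hne (hntriv (Or.inl (by unfold deg; omega)))
  · have c1 : Nat.card {a // Q.tgt a = x.center} = 0 :=
      card_zero_of (fun b h => hb ⟨b, hin b h⟩)
    by_cases ha : ∃ a, OutA x a
    · obtain ⟨a, ha⟩ := ha
      have hne : x.1.1.1.arrows ≠ [] := by
        intro h
        obtain ⟨k, _, ha⟩ := ha
        simp [h] at ha
      have c2 : Nat.card {a // Q.src a = x.center} = 1 :=
        card_one_of (out_center ha).symm (fun c hc => (hout c hc).inj ha)
      exact hne (hntriv (Or.inl (by unfold deg; omega)))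
    · have c2 : Nat.card {a // Q.src a = x.center} = 0 :=
        card_zero_of (fun a h => ha ⟨a, hout a h⟩)
      push Not at ha hb
      have := triv_deg (triv_arrows ha hb).1
      unfold deg at this
      omega

/-- A trivial half-edge has at most one partner with an incoming arrow. -/
theorem third_triv [Finite A] (hQ : Q.IsGentle) {x y z : PSplit Q} {b : A} (hz : InA z b)
    (hxz : x.center = z.center) (hyz : y.center = z.center) (hxy : x ≠ y)
    (nyz : y ≠ z) (hx : x.1.1.1.arrows = []) : False := by
  have hzb := in_center hz
  have p1 : 1 ≤ Nat.card {a // Q.tgt a = z.center} := card_pos_of hzb.symm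
  have key : (∀ c, Q.tgt c = z.center → c = b) ∧ (∀ a, Q.src a = z.center → OutA z a) := by
    have hd := triv_deg hx
    rw [hxz] at hd
    unfold deg at hd
    rcases hd with hd | ⟨hd, α, β, hα, hβ, hr⟩
    · refine ⟨fun c hc => card_le_one (P := fun a => Q.tgt a = z.center) (by omega) hc hzb.symm,
        fun a ha => ?_⟩
      have : 1 ≤ Nat.card {a // Q.src a = z.center} := card_pos_of ha
      omega
    · have p2 : 1 ≤ Nat.card {a // Q.src a = z.center} := card_pos_of hα
      have u1 : ∀ c, Q.tgt c = z.center → c = b := fun c hc =>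
        card_le_one (P := fun a => Q.tgt a = z.center) (by omega) hc hzb.symm
      refine ⟨u1, fun a ha => ?_⟩
      obtain rfl : a = α :=
        card_le_one (P := fun a => Q.src a = z.center) (by omega) ha hα
      obtain rfl := u1 β hβ
      by_cases ho : ∃ c, OutA z c
      · obtain ⟨c, hc⟩ := ho
        obtain rfl : c = a := NR_left hQ β c a (in_out hz hc) ⟨ha.trans hβ.symm, hr⟩
        exact hc
      · push Not at ho
        exact absurd ⟨ha.trans hβ.symm, hr⟩ (in_no_out hz ho a)
  have hyin : ∀ c, ¬ InA y c := by
    intro c hc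
    obtain rfl := key.1 c ((in_center hc).symm.trans hyz)
    exact nyz (in_unique hQ hc hz)
  have hyout : ∀ c, ¬ OutA y c := by
    intro c hc
    exact nyz (out_unique hQ hc (key.2 c ((out_center hc).symm.trans hyz)))
  exact hxy (triv_unique hx (triv_arrows hyout hyin).1 (hxz.trans hyz.symm))

theorem third_noin (hQ : Q.IsGentle) {x y z : PSplit Q} {b : A} (hz : InA z b)
    (hxz : x.center = z.center) (hyz : y.center = z.center) (hxy : x ≠ y)
    (nyz : y ≠ z) (hx : ∀ c, ¬ InA x c) {a : A} (ha : OutA x a)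
    (hy : (∃ c, InA y c) ∨ ∃ c, OutA y c) : False := by
  have rel_of : ∀ (w : PSplit Q) (d c : A), OutA w d → (∀ c, ¬ InA w c) → w.center = z.center →
      Q.tgt c = z.center → Q.rel d c := by
    intro w d c hd hn hw hc
    by_contra hr
    exact out_no_in hd hn c ⟨(out_center hd).symm.trans (hw.trans hc.symm), hr⟩
  have h1 : Q.rel a b := rel_of x a b ha hx hxz (in_center hz).symm
  by_cases hyi : ∃ c, InA y c
  · obtain ⟨c, hc⟩ := hyi
    have h2 : Q.rel a c := rel_of x a c ha hx hxz ((in_center hc).symm.trans hyz)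
    obtain rfl := hQ.unique_rel_pre a b c h1 h2
    exact nyz (in_unique hQ hc hz)
  · obtain ⟨d, hd⟩ := hy.resolve_left hyi
    push Not at hyi
    have h2 : Q.rel d b := rel_of y d b hd hyi hyz (in_center hz).symm
    obtain rfl := hQ.unique_rel_post b a d h1 h2
    exact hxy (out_unique hQ ha hd)

/-- There is no third half-edge with the same center. -/
theorem no_third [Finite A] (hQ : Q.IsGentle) {x y z : PSplit Q} {b : A} (hz : InA z b)
    (hxz : x.center = z.center) (hyz : y.center = z.center) (hxy : x ≠ y) :
    z = x ∨ z = y := by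
  by_contra hne
  push Not at hne
  obtain ⟨nxz, nyz⟩ := hne
  have triv : ∀ w : PSplit Q, w.1.1.1.arrows ≠ [] → (∃ c, InA w c) ∨ ∃ c, OutA w c := by
    intro w hw
    by_contra h
    push Not at h
    exact hw (triv_arrows h.2 h.1).1
  by_cases hx : x.1.1.1.arrows = []
  · exact third_triv hQ hz hxz hyz hxy nyz.symm hx
  by_cases hy : y.1.1.1.arrows = []
  · exact third_triv hQ hz hyz hxz hxy.symm nxz.symm hy
  have tx := triv x hx
  have ty := triv y hy
  by_cases ix : ∃ c, InA x c
  · by_cases iy : ∃ c, InA y c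
    · obtain ⟨c, hc⟩ := ix
      obtain ⟨d, hd⟩ := iy
      rcases card_three (P := fun a => Q.tgt a = z.center) (hQ.in_le _) (in_center hz).symm
        ((in_center hc).symm.trans hxz) ((in_center hd).symm.trans hyz) with h | h | h
      · subst h; exact nxz (in_unique hQ hz hc)
      · subst h; exact nyz (in_unique hQ hz hd)
      · subst h; exact hxy (in_unique hQ hc hd)
    · obtain ⟨d, hd⟩ := ty.resolve_left iy
      push Not at iy
      exact third_noin hQ hz hyz hxz hxy.symm nxz.symm iy hd tx
  · obtain ⟨d, hd⟩ := tx.resolve_left ix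
    push Not at ix
    exact third_noin hQ hz hxz hyz hxy nyz.symm ix hd ty

/-- Number of positions `≥ k` on the path `p` at which `p` visits `j`. -/
noncomputable def cnt (p : Path Q) (k : ℕ) (j : V) : ℕ :=
  Nat.card {n : ℕ // k ≤ n ∧ n ≤ p.arrows.length ∧ p.vertexAt n = j}

/-- The subpath of `p` between positions `k ≤ n`. -/
def sub (p : Path Q) (k n : ℕ) (hkn : k ≤ n) (hn : n ≤ p.arrows.length) : Path Q where
  base := p.vertexAt n
  arrows := (p.arrows.take n).drop k
  chain := (List.IsChain.take p.chain n).drop k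
  base_eq := by
    intro a ha
    have hlen : k < n := by
      by_contra h
      have : (p.arrows.take n).drop k = [] := by
        apply List.drop_eq_nil_of_le
        simp; omega
      simp [this] at ha
    obtain ⟨m, rfl⟩ : ∃ m, n = m + 1 := ⟨n - 1, by omega⟩
    rw [List.getLast?_eq_getElem?] at ha
    rw [← vertexAt_of_out (n := m) (a := a)]
    rw [← ha]
    simp
    rw [List.getElem?_take]
    have e : k + (min (m + 1) p.arrows.length - k - 1) = m := by omega
    rw [e]; simp

theorem sub_length (p : Path Q) (k n : ℕ) (hkn : k ≤ n) (hn : n ≤ p.arrows.length) :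
    (sub p k n hkn hn).arrows.length = n - k := by
  simp [sub]; omega

theorem sub_head (p : Path Q) (k n : ℕ) (hkn : k < n) (hn : n ≤ p.arrows.length) :
    (sub p k n hkn.le hn).arrows.head? = p.arrows[k]? := by
  simp [sub, List.head?_drop, hkn]

theorem sub_tgt (p : Path Q) (k n : ℕ) (hkn : k ≤ n) (hn : n ≤ p.arrows.length) :
    (sub p k n hkn hn).tgtV = p.vertexAt k := by
  rcases hkn.eq_or_lt with rfl | h
  · have : (sub p k k hkn hn).arrows = [] := by
      rw [← List.length_eq_zero_iff, sub_length]; omega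
    simp [Path.tgtV, this]
    rfl
  · unfold Path.tgtV
    rw [sub_head p k n h hn]
    have hk : k < p.arrows.length := by omega
    rw [vertexAt_of_in (List.getElem?_eq_getElem hk), List.getElem?_eq_getElem hk]
    rfl

theorem sub_perm {p : Path Q} (hp : IsPermThread Q p) (k n : ℕ) (hkn : k ≤ n)
    (hn : n ≤ p.arrows.length) : (sub p k n hkn hn).Permitted :=
  (List.IsChain.take ((chainNR _).1 (thread_facts hp).1).2 n).drop k

/-- Every nontrivial permitted path starting with the arrow at position `k` of a thread is a
subpath of the thread. -/
theorem perm_sub (hQ : Q.IsGentle) {p q : Path Q} (hp : IsPermThread Q p) (hq : q.Permitted)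
    {k : ℕ} {b : A} (hk : p.arrows[k]? = some b) (hb : q.arrows.head? = some b) :
    ∃ (n : ℕ) (hkn : k < n) (hn : n ≤ p.arrows.length), sub p k n hkn.le hn = q := by
  obtain ⟨e1, l1⟩ := list_split hk
  obtain ⟨r', hr'⟩ : ∃ r', q.arrows = b :: r' := by
    cases h : q.arrows with
    | nil => simp [h] at hb
    | cons c t => simp [h] at hb; exact ⟨t, by rw [hb]⟩
  obtain ⟨a1, b1, -⟩ := thread_facts hp
  rw [e1] at a1 b1
  have hpre := ray_initial (NR Q) (NR_right hQ) (p.arrows.drop (k + 1)) r' b a1.right_of_append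
    (by rw [← hr']; exact (chainNR _).2 ⟨q.chain, hq⟩)
    (fun a ha => b1 a (by simpa [List.getLast?_append] using ha))
  have hkl : k < p.arrows.length := (List.getElem?_eq_some_iff.1 hk).1
  have hlen := hpre.length_le
  rw [List.length_drop] at hlen
  have hn : k + 1 + r'.length ≤ p.arrows.length := by omega
  refine ⟨k + 1 + r'.length, by omega, hn, ?_⟩
  have earr : (sub p k (k + 1 + r'.length) (by omega) hn).arrows = q.arrows := by
    have h1 : p.arrows.drop k = b :: p.arrows.drop (k + 1) := by
      have := congrArg (List.drop k) e1
      rw [List.drop_append_of_le_length (by omega)] at this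
      simpa using this
    have h2 : (sub p k (k + 1 + r'.length) (by omega) hn).arrows =
        (p.arrows.drop k).take (r'.length + 1) := by
      simp only [sub]
      rw [List.drop_take]
      congr 1; omega
    rw [h2, h1, hr', List.take_succ_cons]
    rw [← List.prefix_iff_eq_take.1 hpre]
  refine path_ext' ?_ earr
  rw [earr, hr']; simp

theorem cartan_eq_s14 [Finite A] (hQ : Q.IsGentle) {x y : PSplit Q} (hxy : x ≠ y)
    (hc : x.center = y.center) (j : V) :
    cartan Q x.center j = (cnt x.1.1.1 x.1.2 j : ℤ) + (cnt y.1.1.1 (y.1.2 + 1) j : ℤ) := by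
  have fin : ∀ (p : Path Q) (k : ℕ),
      Finite {n : ℕ // k ≤ n ∧ n ≤ p.arrows.length ∧ p.vertexAt n = j} := fun p k =>
    Set.Finite.to_subtype ((Set.finite_Iic p.arrows.length).subset (fun n hn => hn.2.1))
  have := fin x.1.1.1 x.1.2
  have := fin y.1.1.1 (y.1.2 + 1)
  unfold cartan cnt
  rw [← Nat.cast_add, ← Nat.card_sum]
  congr 1
  symm
  let f : {n : ℕ // x.1.2 ≤ n ∧ n ≤ x.1.1.1.arrows.length ∧ x.1.1.1.vertexAt n = j} ⊕
      {n : ℕ // y.1.2 + 1 ≤ n ∧ n ≤ y.1.1.1.arrows.length ∧ y.1.1.1.vertexAt n = j} →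
      {p : Path Q // p.Permitted ∧ p.base = j ∧ p.tgtV = x.center} := fun s =>
    match s with
    | Sum.inl n => ⟨sub x.1.1.1 x.1.2 n.1 n.2.1 n.2.2.1, sub_perm x.1.1.2 _ _ _ _, n.2.2.2,
        sub_tgt _ _ _ _ _⟩
    | Sum.inr n => ⟨sub y.1.1.1 y.1.2 n.1 (by have := n.2.1; omega) n.2.2.1,
        sub_perm y.1.1.2 _ _ _ _, n.2.2.2, (sub_tgt _ _ _ _ _).trans hc.symm⟩
  have cross : ∀ n m, f (Sum.inl n) ≠ f (Sum.inr m) := by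
    intro n m h
    have h := congrArg Subtype.val h
    simp only [f] at h
    have hl := congrArg (fun p => p.arrows.length) h
    simp only [sub_length] at hl
    have hn := n.2
    have hm := m.2
    have hh := congrArg (fun p => p.arrows.head?) h
    change List.head? _ = List.head? _ at hh
    rw [sub_head _ _ _ (by omega), sub_head _ _ _ (by omega)] at hh
    have hk : x.1.2 < x.1.1.1.arrows.length := by omega
    have hix : InA x _ := List.getElem?_eq_getElem hk
    exact hxy (in_unique hQ hix (hh.symm.trans hix))
  refine Nat.card_eq_of_bijective f ⟨?_, ?_⟩
  · rintro (n | n) (m | m) h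
    · have hl := congrArg (fun p => p.1.arrows.length) h
      simp only [f, sub_length] at hl
      have hn := n.2
      have hm := m.2
      congr 1
      apply Subtype.ext
      omega
    · exact absurd h (cross n m)
    · exact absurd h.symm (cross m n)
    · have hl := congrArg (fun p => p.1.arrows.length) h
      simp only [f, sub_length] at hl
      have hn := n.2
      have hm := m.2
      congr 1
      apply Subtype.ext
      omega
  · rintro ⟨q, hq, hqb, hqt⟩
    cases hh : q.arrows.head? with
    | none =>
      have hnil : q.arrows = [] := by simpa using hh
      have hv : x.1.1.1.vertexAt x.1.2 = j := by
        have : q.tgtV = q.base := by simp [Path.tgtV, hnil]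
        rw [← hqb, ← this, hqt]; rfl
      refine ⟨Sum.inl ⟨x.1.2, le_rfl, x.2, hv⟩, Subtype.ext ?_⟩
      refine path_ext (hv.trans hqb.symm) ?_
      rw [hnil, ← List.length_eq_zero_iff]
      simp [f, sub_length]
    | some b =>
      have htb : q.tgtV = Q.tgt b := by simp [Path.tgtV, hh]
      obtain ⟨z, hz⟩ := in_exists hQ b
      have hzx : x.center = z.center := by rw [in_center hz, ← htb, hqt]
      rcases no_third hQ hz hzx (hc.symm.trans hzx) hxy with rfl | rfl
      · obtain ⟨n, h1, h2, h3⟩ := perm_sub hQ z.1.1.2 hq hz hh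
        refine ⟨Sum.inl ⟨n, h1.le, h2, ?_⟩, Subtype.ext h3⟩
        rw [← hqb, ← h3]; rfl
      · obtain ⟨n, h1, h2, h3⟩ := perm_sub hQ z.1.1.2 hq hz hh
        refine ⟨Sum.inr ⟨n, h1, h2, ?_⟩, Subtype.ext h3⟩
        rw [← hqb, ← h3]; rfl

theorem cnt_zero {p : Path Q} {k : ℕ} (hk : p.arrows.length < k) (j : V) : cnt p k j = 0 :=
  card_zero_of (fun n hn => by omega)

theorem first_idx [Finite A] (hQ : Q.IsGentle) (x : PSplit Q)
    (h : ∀ i0 : DOE Q, ¬ DSucc x (DOE.sS i0)) : x.1.2 = 0 := by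
  by_contra h0
  obtain ⟨k, hk⟩ := Nat.exists_eq_succ_of_ne_zero h0
  have hx := x.2
  let z : PSplit Q := ⟨(x.1.1, k), by simp only; omega⟩
  obtain ⟨y, hy, hyc⟩ := partner_exists hQ z
  exact h ⟨(y, z), hy.symm, hyc.symm⟩ ⟨rfl, hk⟩

theorem last_idx [Finite A] (hQ : Q.IsGentle) (x : PSplit Q)
    (h : ∀ i2 : DOE Q, ¬ DSucc (DOE.tS i2) x) : x.1.1.1.arrows.length < x.1.2 + 1 := by
  by_contra h0
  let z : PSplit Q := ⟨(x.1.1, x.1.2 + 1), by simp only; omega⟩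
  obtain ⟨y, hy, hyc⟩ := partner_exists hQ z
  exact h ⟨(z, y), hy, hyc⟩ ⟨rfl, rfl⟩

theorem sum_single [Fintype V] (f : V → ℤ) (c : V) :
    ∑ v, f v * (if c = v then 1 else 0) = f c := by
  rw [Finset.sum_eq_single c]
  · simp
  · intro b _ hb
    rw [if_neg (Ne.symm hb), mul_zero]
  · simp

theorem telescope [Fintype V] [Finite A] (hQ : Q.IsGentle) (j : V) :
    ∀ (l : List (DOE Q)) (i : DOE Q),
      (i :: l).IsChain (fun i j => DSucc (DOE.tS j) (DOE.sS i)) →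
      (∀ i', (i :: l).getLast? = some i' → ∀ i2 : DOE Q, ¬ DSucc (DOE.tS i2) (DOE.sS i')) →
      ∑ v, cartan Q v j * incVec (i :: l) v = (cnt i.1.1.1.1.1 i.1.1.1.2 j : ℤ) := by
  intro l
  induction l with
  | nil =>
    intro i _ hl
    have h0 := last_idx hQ (DOE.sS i) (hl i (by simp))
    have h1 := cartan_eq_s14 hQ i.2.1 i.2.2 j
    have h2 := cnt_zero h0 j
    have h3 : (cnt i.1.2.1.1.1 (i.1.2.1.2 + 1) j) = 0 := h2
    rw [h3] at h1
    have e : ∀ v, incVec [i] v = (if DOE.ctr i = v then 1 else 0) - 0 := fun v => rfl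
    simp only [e, sub_zero, sum_single]
    simpa [DOE.ctr] using h1
  | cons i' l ih =>
    intro i hch hl
    rw [List.isChain_cons_cons] at hch
    have hi := ih i' hch.2 (fun a ha => hl a (by simpa [List.getLast?_cons_cons] using ha))
    have h1 := cartan_eq_s14 hQ i.2.1 i.2.2 j
    have e : ∀ v, incVec (i :: i' :: l) v =
      (if DOE.ctr i = v then 1 else 0) - incVec (i' :: l) v := fun v => rfl
    simp only [e, mul_sub, Finset.sum_sub_distrib, hi]
    obtain ⟨ht, hidx⟩ := hch.1
    have ht' : i'.1.1.1.1 = i.1.2.1.1 := ht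
    have hidx' : i'.1.1.1.2 = i.1.2.1.2 + 1 := hidx
    rw [ht', hidx']
    rw [sum_single, DOE.ctr, h1]
    ring

theorem dInc_eq {W : Type} (e : W ≃ PThread Q) (j : V) (w : W) :
    dInc Q e j w = (cnt (e w).1 0 j : ℤ) := by
  unfold dInc cnt
  congr 1
  refine Nat.card_congr ⟨fun x => ⟨x.1.1.2, Nat.zero_le _, ?_, ?_⟩,
    fun n => ⟨⟨(e w, n.1), n.2.2.1⟩, n.2.2.2, rfl⟩, ?_, ?_⟩
  · have h : x.1.1.1 = e w := x.2.2
    exact x.1.2.trans (congrArg (fun t : PThread Q => t.1.arrows.length) h).le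
  · have h : x.1.1.1 = e w := x.2.2
    exact (congrArg (fun t : PThread Q => t.1.vertexAt x.1.1.2) h.symm).trans x.2.1
  · intro x
    have h : x.1.1.1 = e w := x.2.2
    exact Subtype.ext (Subtype.ext (Prod.ext h.symm rfl))
  · intro n
    rfl

end Threads
end GentleAux

/-- Let `(Q, I)` be a gentle bound quiver with marked ribbon graph
`(G, ≤) = △(Q, I)` and Cartan matrix `C`, identify `E(G)` with `Q₀`, and let `Ĵ` be the
`E(G) × V(G)` integer matrix whose column at a vertex `α` of `G` is the incidence
vector of the unique anti-walk of `(G, ≤)` with target vertex `α`.  Then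
`Cᵀ ⬝ Ĵ = Inc(G)`. -/
theorem stmt14 {V A : Type} [Fintype V] [Fintype A] (Q : BQuiv V A) (hQ : Q.IsGentle)
    (W : Type) [Fintype W] (e : W ≃ PThread Q) (J : Matrix V W ℤ)
    (hJ : ∀ w : W, ∃ l : List (DOE Q), IsAntiDW Q l ∧
      (∀ i, l.head? = some i → DOE.tvx i = e w) ∧
      (∀ v : V, J v w = incVec l v)) :
    (cartan Q)ᵀ * J = dInc Q e := by
  ext j w
  rw [GentleAux.dInc_eq, Matrix.mul_apply]
  obtain ⟨l, ⟨hne, _, hch, hfirst, hlast⟩, htgt, hinc⟩ := hJ w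
  cases l with
  | nil => exact absurd rfl hne
  | cons i l =>
    have h := GentleAux.telescope hQ j l i hch hlast
    have h0 := GentleAux.first_idx hQ (DOE.tS i) (hfirst i (by simp))
    have h0' : i.1.1.1.2 = 0 := h0
    have ht : i.1.1.1.1 = e w := htgt i (by simp)
    rw [h0', ht] at h
    rw [← h]
    exact Finset.sum_congr rfl (fun v _ => by rw [hinc v]; rfl)
end

section
/- Let (G,≤) be a marked ribbon graph. For a vertex α let Ǒ_α denote the unique anti-walk with target vertex α, and set ᵗǑ_α := (Ǒ_α)^{-1}. For a non-trivial reduced walk w of G with source vertex α and target vertex β, define ₊w := ᵗǑ_β · w, w₊ := w · Ǒ_α, and ₊w₊ := ᵗǑ_β · w · Ǒ_α, where · denotes reduced concatenation. Then ₊w₊ is a non-trivial reduced walk, and at most one of the walks ₊w and w₊ is trivial. -/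
set_option autoImplicit false

attribute [local instance] Classical.propDecidable

/-- A marked ribbon graph `(G, ≤)`: a finite graph given by half-edges (a set `H` of
half-edges with an incidence map `z : H → V` and a fixed-point-free involution `ι`
whose orbits are the edges), together with a partial order `≤` on `H` in which two
half-edges are comparable exactly when they are incident to the same vertex; the graph
is required to be connected, without isolated vertices (`z` surjective) and with a
vertex of degree at least two. -/
structure MRG (V H : Type) where
  z : H → V
  invh : H → H
  inv_inv : ∀ h, invh (invh h) = h
  inv_ne : ∀ h, invh h ≠ h
  z_surj : Function.Surjective z
  le : H → H → Prop
  le_refl : ∀ h, le h h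
  le_trans : ∀ {a b c}, le a b → le b c → le a c
  le_antisymm : ∀ {a b}, le a b → le b a → a = b
  comp_iff : ∀ a b, (le a b ∨ le b a) ↔ z a = z b
  connected : ∀ u v : V,
    Relation.ReflTransGen (fun x y => ∃ h, z h = x ∧ z (invh h) = y) u v
  thick : ∃ h h' : H, h ≠ h' ∧ z h = z h'

namespace MRG

variable {V H : Type}

/-- The type of edges of the graph: orbits of the involution. -/
def E (G : MRG V H) : Type := Quot (fun a b : H => b = G.invh a)

/-- The edge containing a given half-edge. -/
def edge (G : MRG V H) (h : H) : G.E := Quot.mk _ h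

/-- The strict order on half-edges. -/
def lt (G : MRG V H) (a b : H) : Prop := G.le a b ∧ a ≠ b

/-- `b` covers `a`: `a` is a direct predecessor of `b` (equivalently `b` is the direct
successor of `a`) with respect to `≤`. -/
def Cov (G : MRG V H) (a b : H) : Prop :=
  G.lt a b ∧ ∀ c, G.lt a c → G.lt c b → False

end MRG

namespace MRG

variable {V H : Type}

/-- An ordered edge of the graph: a pair `(h′, h″)` of half-edges with `h″ = ι h′`;
the first component is the target half-edge, the second the source half-edge. -/
def OE (G : MRG V H) : Type := {p : H × H // p.2 = G.invh p.1}

/-- The target half-edge of an ordered edge. -/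
def OE.tH {G : MRG V H} (i : OE G) : H := i.1.1

/-- The source half-edge of an ordered edge. -/
def OE.sH {G : MRG V H} (i : OE G) : H := i.1.2

/-- The target vertex of an ordered edge. -/
def OE.tvx {G : MRG V H} (i : OE G) : V := G.z i.1.1

/-- The source vertex of an ordered edge. -/
def OE.svx {G : MRG V H} (i : OE G) : V := G.z i.1.2

/-- The inverse of an ordered edge. -/
def OE.inv {G : MRG V H} (i : OE G) : OE G :=
  ⟨(i.1.2, i.1.1), by rw [i.2, G.inv_inv]⟩

/-- `l` is (the list of ordered edges of) a walk of `G`, written from right to left. -/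
def IsWalkL (G : MRG V H) (l : List (OE G)) : Prop :=
  l.Chain' (fun i j => OE.svx i = OE.tvx j)

/-- The walk `l` is reduced: no ordered edge is immediately followed by its inverse. -/
def IsRedL (G : MRG V H) (l : List (OE G)) : Prop :=
  l.Chain' (fun i j => j ≠ OE.inv i)

/-- `b` is the direct successor of `a` with respect to `≤`. -/
def DSucc (G : MRG V H) (a b : H) : Prop := G.Cov a b

/-- Anti-walks of `(G, ≤)`: non-trivial walks `i₁⋯i_L i_{L+1}` in which, for
consecutive ordered edges, the source half-edge of `iₜ` is the direct successor of the
target half-edge of `iₜ₊₁` with respect to `≤`, maximal with this property. -/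
def IsAntiWalkL (G : MRG V H) (l : List (OE G)) : Prop :=
  l ≠ [] ∧ G.IsWalkL l ∧
  l.Chain' (fun i j => G.DSucc (OE.tH j) (OE.sH i)) ∧
  (∀ i, l.head? = some i → ∀ i0 : OE G, ¬ G.DSucc (OE.tH i) (OE.sH i0)) ∧
  (∀ i, l.getLast? = some i → ∀ i2 : OE G, ¬ G.DSucc (OE.tH i2) (OE.sH i))

end MRG

namespace MRG

variable {V H : Type}

/-- Auxiliary greedy cancellation: the first argument is the first walk reversed. -/
noncomputable def rcatAux {G : MRG V H} : List (OE G) → List (OE G) → List (OE G)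
  | [], l2 => l2
  | a :: r1, [] => (a :: r1).reverse
  | a :: r1, b :: r2 =>
      if b = OE.inv a then rcatAux r1 r2 else (a :: r1).reverse ++ b :: r2

/-- The reduced concatenation `l₁ · l₂` of two (reduced) walks: write `l₁ = l₁′ u` and
`l₂ = u⁻¹ l₂″` with the common walk `u` of maximal length and set
`l₁ · l₂ = l₁′ l₂″`. -/
noncomputable def rcat {G : MRG V H} (l1 l2 : List (OE G)) : List (OE G) :=
  rcatAux l1.reverse l2

/-- The inverse of a walk. -/
def invL {G : MRG V H} (l : List (OE G)) : List (OE G) := (l.map OE.inv).reverse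

end MRG

open MRG

namespace MRG

variable {V H : Type}

def toPO (G : MRG V H) : PartialOrder H where
  le := G.le
  le_refl := G.le_refl
  le_trans := fun _ _ _ => G.le_trans
  le_antisymm := fun _ _ => G.le_antisymm

theorem exists_cov [Fintype H] (G : MRG V H) {a b : H} (h : G.lt a b) :
    (∃ c, G.Cov c b) ∧ ∃ c, G.Cov a c := by
  letI := G.toPO
  have key : ∀ x y : H, G.lt x y ↔ x < y := fun x y => by
    rw [lt_iff_le_and_ne]; exact Iff.rfl
  have key2 : ∀ x y : H, x ⋖ y → G.Cov x y := fun x y hxy =>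
    ⟨(key x y).2 hxy.1, fun c h1 h2 => hxy.2 ((key _ _).1 h1) ((key _ _).1 h2)⟩
  have h' := (key a b).1 h
  obtain ⟨c, hc, -⟩ := exists_covBy_le_of_lt h'
  obtain ⟨d, -, hd⟩ := exists_le_covBy_of_lt h'
  exact ⟨⟨d, key2 _ _ hd⟩, ⟨c, key2 _ _ hc⟩⟩

theorem cov_ne (G : MRG V H) {a b : H} (h : G.Cov a b) : a ≠ b := h.1.2

theorem cov_z (G : MRG V H) {a b : H} (h : G.Cov a b) : G.z a = G.z b :=
  (G.comp_iff a b).1 (Or.inl h.1.1)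

theorem lt_tri (G : MRG V H) {a b : H} (h : G.z a = G.z b) : G.lt a b ∨ a = b ∨ G.lt b a := by
  by_cases hab : a = b
  · exact Or.inr (Or.inl hab)
  · rcases (G.comp_iff a b).2 h with h | h
    · exact Or.inl ⟨h, hab⟩
    · exact Or.inr (Or.inr ⟨h, fun e => hab e.symm⟩)

theorem cov_unique (G : MRG V H) {a b c : H} (h : G.Cov a b) (h' : G.Cov a c) : b = c := by
  rcases G.lt_tri ((G.cov_z h).symm.trans (G.cov_z h')) with h1 | h1 | h1
  · exact (h'.2 _ h.1 h1).elim
  · exact h1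
  · exact (h.2 _ h'.1 h1).elim

theorem min_unique [Fintype H] (G : MRG V H) {a b : H} (h : G.z a = G.z b)
    (ha : ∀ c, ¬ G.Cov c a) (hb : ∀ c, ¬ G.Cov c b) : a = b := by
  rcases G.lt_tri h with h1 | h1 | h1
  · obtain ⟨⟨c, hc⟩, -⟩ := G.exists_cov h1; exact (hb c hc).elim
  · exact h1
  · obtain ⟨⟨c, hc⟩, -⟩ := G.exists_cov h1; exact (ha c hc).elim

theorem min_max_unique [Fintype H] (G : MRG V H) {a b : H} (h : G.z a = G.z b)
    (ha : ∀ c, ¬ G.Cov c a) (ha' : ∀ c, ¬ G.Cov a c) : a = b := by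
  rcases G.lt_tri h with h1 | h1 | h1
  · obtain ⟨-, ⟨c, hc⟩⟩ := G.exists_cov h1; exact (ha' c hc).elim
  · exact h1
  · obtain ⟨⟨c, hc⟩, -⟩ := G.exists_cov h1; exact (ha c hc).elim

variable {G : MRG V H}

theorem OE.ext_s {x y : OE G} (h : OE.sH x = OE.sH y) : x = y := by
  obtain ⟨⟨a, b⟩, hx⟩ := x
  obtain ⟨⟨c, d⟩, hy⟩ := y
  simp only [OE.sH] at h hx hy
  subst h
  have : a = c := by rw [← G.inv_inv a, ← hx, hy, G.inv_inv]
  subst this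
  rfl

theorem OE.inv_inv' (x : OE G) : x.inv.inv = x := rfl
theorem OE.ex_t (h : H) : ∃ x : OE G, x.tH = h := ⟨⟨(h, G.invh h), rfl⟩, rfl⟩
theorem OE.ex_s (h : H) : ∃ x : OE G, x.sH = h := ⟨⟨(G.invh h, h), (G.inv_inv h).symm⟩, rfl⟩

theorem invL_append (a b : List (OE G)) : invL (a ++ b) = invL b ++ invL a := by
  simp [invL]

theorem invL_invL (a : List (OE G)) : invL (invL a) = a := by
  simp only [invL, List.map_reverse, List.reverse_reverse, List.map_map]
  conv_rhs => rw [← List.map_id a]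
  rfl

theorem invL_nil : invL ([] : List (OE G)) = [] := rfl
theorem invL_single (x : OE G) : invL [x] = [x.inv] := rfl

theorem rcatAux_spec (r l2 : List (OE G)) : ∃ p u q, r.reverse = p ++ u ∧ l2 = invL u ++ q ∧
    rcatAux r l2 = p ++ q ∧ ∀ x ∈ p.getLast?, ∀ y ∈ q.head?, y ≠ OE.inv x := by
  induction r generalizing l2 with
  | nil => exact ⟨[], [], l2, rfl, rfl, rfl, by simp⟩
  | cons a r ih =>
    cases l2 with
    | nil => exact ⟨(a :: r).reverse, [], [], by simp, rfl, by simp [rcatAux], by simp⟩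
    | cons b l2 =>
      by_cases hb : b = OE.inv a
      · obtain ⟨p, u, q, h1, h2, h3, h4⟩ := ih l2
        refine ⟨p, u ++ [a], q, ?_, ?_, ?_, h4⟩
        · simp [h1]
        · rw [invL_append, invL_single, hb, h2]; rfl
        · simp only [rcatAux, if_pos hb, h3]
      · refine ⟨(a :: r).reverse, [], b :: l2, by simp, rfl, by simp only [rcatAux, if_neg hb], ?_⟩
        simpa using hb

theorem rcat_spec (l1 l2 : List (OE G)) : ∃ p u q, l1 = p ++ u ∧ l2 = invL u ++ q ∧
    rcat l1 l2 = p ++ q ∧ ∀ x ∈ p.getLast?, ∀ y ∈ q.head?, y ≠ OE.inv x := by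
  simpa [rcat] using rcatAux_spec l1.reverse l2

theorem walk_append {a b : List (OE G)} : G.IsWalkL (a ++ b) ↔ G.IsWalkL a ∧ G.IsWalkL b ∧
    ∀ x ∈ a.getLast?, ∀ y ∈ b.head?, OE.svx x = OE.tvx y := List.isChain_append
theorem red_append {a b : List (OE G)} : G.IsRedL (a ++ b) ↔ G.IsRedL a ∧ G.IsRedL b ∧
    ∀ x ∈ a.getLast?, ∀ y ∈ b.head?, y ≠ OE.inv x := List.isChain_append

theorem walk_cancel (u p q : List (OE G)) (h : G.IsWalkL ((p ++ u) ++ (invL u ++ q))) :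
    G.IsWalkL (p ++ q) := by
  induction u generalizing p q with
  | nil => simpa [invL_nil] using h
  | cons x u ih =>
    have h1 : G.IsWalkL ((p ++ [x]) ++ ([x.inv] ++ q)) := by
      apply ih
      have : invL (x :: u) = invL u ++ [x.inv] := invL_append [x] u
      rw [this] at h
      simpa using h
    rw [walk_append, walk_append, walk_append] at h1
    obtain ⟨⟨hp, -, h2⟩, ⟨-, hq, h3⟩, -⟩ := h1
    rw [walk_append]
    refine ⟨hp, hq, fun a ha b hb => ?_⟩
    have e1 := h2 a ha x (by simp)
    have e2 := h3 x.inv (by simp) b hb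
    exact e1.trans e2

theorem walk_inv {a : List (OE G)} (h : G.IsWalkL a) : G.IsWalkL (invL a) := by
  induction a with
  | nil => exact h
  | cons x a ih =>
    have h' : G.IsWalkL ([x] ++ a) := h
    rw [walk_append] at h'
    have : invL (x :: a) = invL a ++ [x.inv] := invL_append [x] a
    rw [this, walk_append]
    refine ⟨ih h'.2.1, List.isChain_singleton _, ?_⟩
    intro y hy z hz
    have hy' : y.inv ∈ a.head? := by
      cases a with
      | nil => simp [invL] at hy
      | cons c a =>
        simp [invL] at hy; subst hy; simp [OE.inv_inv']
    simp at hz; subst hz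
    exact (h'.2.2 x (by simp) _ hy').symm

theorem red_inv {a : List (OE G)} (h : G.IsRedL a) : G.IsRedL (invL a) := by
  induction a with
  | nil => exact h
  | cons x a ih =>
    have h' : G.IsRedL ([x] ++ a) := h
    rw [red_append] at h'
    have : invL (x :: a) = invL a ++ [x.inv] := invL_append [x] a
    rw [this, red_append]
    refine ⟨ih h'.2.1, List.isChain_singleton _, ?_⟩
    intro y hy z hz
    have hy' : y.inv ∈ a.head? := by
      cases a with
      | nil => simp [invL] at hy
      | cons c a =>
        simp [invL] at hy; subst hy; simp [OE.inv_inv']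
    simp at hz; subst hz
    intro e
    exact h'.2.2 x (by simp) _ hy' e.symm

theorem anti_red {a : List (OE G)} (h : G.IsAntiWalkL a) : G.IsRedL a := by
  refine List.IsChain.imp ?_ h.2.2.1
  intro i j hij e
  subst e
  exact G.cov_ne hij rfl

theorem head_invL (a : List (OE G)) : (invL a).head? = a.getLast?.map OE.inv := by
  simp [invL]
theorem last_invL (a : List (OE G)) : (invL a).getLast? = a.head?.map OE.inv := by
  simp [invL]

theorem rcat_nil {a b : List (OE G)} (h : rcat a b = []) : b = invL a := by
  obtain ⟨p, u, q, h1, h2, h3, -⟩ := rcat_spec a b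
  rw [h] at h3
  obtain ⟨rfl, rfl⟩ := List.append_eq_nil_iff.1 h3.symm
  simp at h1 h2
  rw [h2, h1]

theorem rcat_red {a b : List (OE G)} (ha : G.IsRedL a) (hb : G.IsRedL b) :
    G.IsRedL (rcat a b) := by
  obtain ⟨p, u, q, h1, h2, h3, h4⟩ := rcat_spec a b
  rw [h3, red_append]
  rw [h1, red_append] at ha
  rw [h2, red_append] at hb
  exact ⟨ha.1, hb.2.1, h4⟩

theorem common_suffix [Fintype H] {c P Q : List (OE G)} (hb : G.IsAntiWalkL (P ++ c))
    (ha : G.IsAntiWalkL (Q ++ c)) (hW : G.IsWalkL (P ++ invL Q)) (hR : G.IsRedL (P ++ invL Q)) :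
    P = [] ∧ Q = [] := by
  have lastne : ∀ P' x Q' y, P = P' ++ [x] → Q = Q' ++ [y] → x ≠ y := by
    rintro P' x Q' y rfl rfl rfl
    rw [red_append] at hR
    exact hR.2.2 x (by simp) x.inv (by simp [head_invL]) rfl
  cases c with
  | nil =>
    exfalso
    rw [List.append_nil] at ha hb
    obtain ⟨P', x, rfl⟩ := (List.eq_nil_or_concat' P).resolve_left hb.1
    obtain ⟨Q', y, rfl⟩ := (List.eq_nil_or_concat' Q).resolve_left ha.1
    refine lastne _ _ _ _ rfl rfl (OE.ext_s (G.min_unique ?_ ?_ ?_))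
    · rw [walk_append] at hW
      exact hW.2.2 x (by simp) y.inv (by simp [head_invL])
    · intro c hc
      obtain ⟨i, rfl⟩ := OE.ex_t (G := G) c
      exact hb.2.2.2.2 x (by simp) i hc
    · intro c hc
      obtain ⟨i, rfl⟩ := OE.ex_t (G := G) c
      exact ha.2.2.2.2 y (by simp) i hc
  | cons d c =>
    have junction : ∀ R R' x, R = R' ++ [x] → G.IsAntiWalkL (R ++ d :: c) →
        G.Cov d.tH x.sH := by
      rintro R R' x rfl h
      exact (List.isChain_append.1 h.2.2.1).2.2 x (by simp) d (by simp)
    rcases List.eq_nil_or_concat' P with hP | ⟨P', x, hP⟩ <;>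
    rcases List.eq_nil_or_concat' Q with hQ | ⟨Q', y, hQ⟩
    · exact ⟨hP, hQ⟩
    · subst hP
      exact (hb.2.2.2.1 d (by simp) y (junction _ _ _ hQ ha)).elim
    · subst hQ
      exact (ha.2.2.2.1 d (by simp) x (junction _ _ _ hP hb)).elim
    · exact (lastne _ _ _ _ hP hQ
        (OE.ext_s (G.cov_unique (junction _ _ _ hP hb) (junction _ _ _ hQ ha)))).elim

theorem anti_inv_false [Fintype H] {a : List (OE G)} (h : G.IsAntiWalkL a)
    (h' : G.IsAntiWalkL (invL a)) : False := by
  match a with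
  | [] => exact h.1 rfl
  | x :: y :: l =>
    have h1 : G.Cov y.tH x.sH := (List.isChain_cons_cons.1 h.2.2.1).1
    have e : invL (x :: y :: l) = invL l ++ [y.inv, x.inv] := invL_append [x, y] l
    have h2 := h'.2.2.1
    rw [e] at h2
    have h3 : G.Cov x.sH y.tH := (List.isChain_cons_cons.1 (List.isChain_append.1 h2).2.1).1
    exact h1.1.2 (G.le_antisymm h1.1.1 h3.1.1)
  | [x] =>
    rw [invL_single] at h'
    have t1 : ∀ c, ¬ G.Cov x.tH c := fun c hc => by
      obtain ⟨i, rfl⟩ := OE.ex_s (G := G) c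
      exact h.2.2.2.1 x rfl i hc
    have s1 : ∀ c, ¬ G.Cov c x.sH := fun c hc => by
      obtain ⟨i, rfl⟩ := OE.ex_t (G := G) c
      exact h.2.2.2.2 x rfl i hc
    have s2 : ∀ c, ¬ G.Cov x.sH c := fun c hc => by
      obtain ⟨i, rfl⟩ := OE.ex_s (G := G) c
      exact h'.2.2.2.1 x.inv rfl i hc
    have t2 : ∀ c, ¬ G.Cov c x.tH := fun c hc => by
      obtain ⟨i, rfl⟩ := OE.ex_t (G := G) c
      exact h'.2.2.2.2 x.inv rfl i hc
    have ut : ∀ k, G.z k = G.z x.tH → x.tH = k := fun k hk => G.min_max_unique hk.symm t2 t1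
    have us : ∀ k, G.z k = G.z x.sH → x.sH = k := fun k hk => G.min_max_unique hk.symm s1 s2
    have hst : x.sH = G.invh x.tH := x.2
    have hts : x.tH = G.invh x.sH := by rw [hst, G.inv_inv]
    have all : ∀ v, v = G.z x.tH ∨ v = G.z x.sH := by
      intro v
      have hc := G.connected (G.z x.tH) v
      induction hc with
      | refl => exact Or.inl rfl
      | tail _ hh ih =>
        obtain ⟨k, hk1, hk2⟩ := hh
        rcases ih with ih | ih
        · right
          rw [← hk2, ← ut k (hk1.trans ih), ← hst]
        · left
          rw [← hk2, ← us k (hk1.trans ih), ← hts]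
    obtain ⟨k, k', hne, hz⟩ := G.thick
    rcases all (G.z k) with hv | hv
    · exact hne ((ut k hv).symm.trans (ut k' (hz.symm.trans hv)))
    · exact hne ((us k hv).symm.trans (us k' (hz.symm.trans hv)))

end MRG

theorem stmt17 {V H : Type} [Fintype V] [Fintype H] (G : MRG V H)
    (w wa wb : List (OE G)) (hw : w ≠ []) (hwW : G.IsWalkL w) (hwR : G.IsRedL w)
    (hwa : G.IsAntiWalkL wa) (hwb : G.IsAntiWalkL wb)
    (ha : ∀ i, wa.head? = some i → OE.tvx i = OE.svx (w.getLast hw))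
    (hb : ∀ i, wb.head? = some i → OE.tvx i = OE.tvx (w.head hw)) :
    rcat (rcat (invL wb) w) wa ≠ [] ∧
    G.IsWalkL (rcat (rcat (invL wb) w) wa) ∧
    G.IsRedL (rcat (rcat (invL wb) w) wa) ∧
    ¬ (rcat (invL wb) w = [] ∧ rcat w wa = []) := by
  refine ⟨?_, ?_, rcat_red (rcat_red (red_inv (anti_red hwb)) hwR) (anti_red hwa), ?_⟩
  · intro h
    have h1 := rcat_nil h
    obtain ⟨p, u, q, e1, e2, e3, -⟩ := rcat_spec (invL wb) w
    rw [e3, invL_append] at h1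
    have h2 : wb = invL u ++ invL p := by rw [← invL_append, ← e1, invL_invL]
    rw [h1] at hwa
    rw [h2] at hwb
    have h3 := common_suffix hwb hwa (by rwa [invL_invL, ← e2]) (by rwa [invL_invL, ← e2])
    apply hw
    rw [e2, h3.1, ← invL_invL q, h3.2]
    rfl
  · have hall : G.IsWalkL (invL wb ++ (w ++ wa)) := by
      rw [walk_append, walk_append]
      refine ⟨walk_inv hwb.2.1, ⟨hwW, hwa.2.1, ?_⟩, ?_⟩
      · intro x hx y hy
        rw [List.getLast?_eq_some_getLast hw] at hx
        cases hx
        exact (ha y hy).symm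
      · intro x hx y hy
        rw [List.head?_append_of_ne_nil _ hw, List.head?_eq_some_head hw] at hy
        cases hy
        rw [last_invL] at hx
        obtain ⟨i, hi, rfl⟩ := Option.map_eq_some_iff.1 hx
        exact hb i hi
    obtain ⟨p, u, q, e1, e2, e3, -⟩ := rcat_spec (invL wb) w
    have h2 : G.IsWalkL (rcat (invL wb) w ++ wa) := by
      rw [e3, List.append_assoc]
      apply walk_cancel u
      rwa [e1, e2, List.append_assoc (invL u)] at hall
    obtain ⟨p, u, q, e1, e2, e3, -⟩ := rcat_spec (rcat (invL wb) w) wa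
    rw [e3]
    apply walk_cancel u
    rwa [← e1, ← e2]
  · rintro ⟨h1, h2⟩
    have e1 := rcat_nil h1
    rw [invL_invL] at e1
    have e2 := rcat_nil h2
    subst e1
    rw [e2] at hwa
    exact anti_inv_false hwb hwa
end
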